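/- arXiv:2405.09917 — 4 statements merged into one kernel-verified Lean document; each statement's English description precedes it below -/
import Mathlib

section
/- The set {f ∈ C_λ : h_λ(f) = 0} of continuous Lebesgue measure-preserving interval maps whose measure-theoretic entropy with respect to Lebesgue measure is zero is a dense G_δ subset of C_λ in the uniform topology. -/
open MeasureTheory Set
open scoped ENNReal

noncomputable section

/-- `C_λ`: continuous maps of `[0,1]` preserving Lebesgue measure, with the uniform metric. -/
abbrev CLam : Type := {f : C(unitInterval, unitInterval) // MeasurePreserving f volume volume}

/-- The atom `P_{s 0} ∩ f⁻¹(P_{s 1}) ∩ ⋯ ∩ f^{-(n-1)}(P_{s (n-1)})`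
of the join `⋁_{i=0}^{n-1} f^{-i} P`. -/
def joinAtom (f : unitInterval → unitInterval) {k : ℕ} (P : Fin k → Set unitInterval)
    (n : ℕ) (s : Fin n → Fin k) : Set unitInterval :=
  ⋂ i : Fin n, f^[(i : ℕ)] ⁻¹' P (s i)

/-- `h_n(f, P) = (1/n) H(⋁_{i=0}^{n-1} f^{-i} P)`. -/
def hnEnt (f : unitInterval → unitInterval) {k : ℕ} (P : Fin k → Set unitInterval)
    (n : ℕ) : ℝ :=
  (1 / (n : ℝ)) * ∑ s : Fin n → Fin k,
    -((volume (joinAtom f P n s)).toReal * Real.log (volume (joinAtom f P n s)).toReal)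

/-- `h(f, P) = lim_n h_n(f, P)`; since `n ↦ h_n(f,P)` is non-increasing and nonnegative,
the limit equals the infimum. -/
def hEnt (f : unitInterval → unitInterval) {k : ℕ} (P : Fin k → Set unitInterval) : ℝ :=
  ⨅ n : ℕ, hnEnt f P (n + 1)

/-- A finite (mod measure zero) partition of `[0,1]` into measurable sets. -/
structure IsAEPartition {k : ℕ} (P : Fin k → Set unitInterval) : Prop where
  meas : ∀ i, MeasurableSet (P i)
  cover : (⋃ i, P i) = Set.univ
  aedisj : ∀ i j, i ≠ j → volume (P i ∩ P j) = 0

/-- The measure-theoretic entropy of `f` with respect to Lebesgue measure: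
`h_λ(f) = sup {h(f,P) : P a finite partition of I}`. -/
def hLam (f : unitInterval → unitInterval) : ℝ≥0∞ :=
  ⨆ (k : ℕ) (P : Fin k → Set unitInterval) (_ : IsAEPartition P), ENNReal.ofReal (hEnt f P)

/-- Shannon entropy of a finite-valued function. -/
def HH {A : Type*} [Fintype A] (Z : unitInterval → A) : ℝ :=
  ∑ a, Real.negMulLog (volume.real (Z ⁻¹' {a}))

/-- The `n`-name of a point. -/
def nameOf (f : unitInterval → unitInterval) {A : Type*} (X : unitInterval → A) (n : ℕ)
    (x : unitInterval) : Fin n → A := fun i => X (f^[(i : ℕ)] x)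

lemma integral_comp_fin {A : Type*} [Fintype A] [MeasurableSpace A] [MeasurableSingletonClass A]
    {Z : unitInterval → A} (hZ : Measurable Z) (F : A → ℝ) :
    ∫ x, F (Z x) = ∑ a, volume.real (Z ⁻¹' {a}) * F a := by
  have hp : IsProbabilityMeasure (Measure.map Z (volume : Measure unitInterval)) :=
    Measure.isProbabilityMeasure_map hZ.aemeasurable
  rw [← integral_map (φ := Z) (f := F) hZ.aemeasurable (by
    exact (Measurable.of_discrete).aestronglyMeasurable)]
  rw [integral_fintype (Integrable.of_finite)]
  refine Finset.sum_congr rfl fun a _ => ?_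
  rw [map_measureReal_apply hZ (measurableSet_singleton a)]
  rfl

lemma integrable_comp_fin {A : Type*} [Fintype A] [MeasurableSpace A] [MeasurableSingletonClass A]
    {Z : unitInterval → A} (hZ : Measurable Z) (F : A → ℝ) :
    Integrable (fun x => F (Z x)) (volume : Measure unitInterval) := by
  have hp : IsProbabilityMeasure (Measure.map Z (volume : Measure unitInterval)) :=
    Measure.isProbabilityMeasure_map hZ.aemeasurable
  exact (Integrable.of_finite (f := F) (μ := Measure.map Z volume)).comp_measurable hZ

lemma gibbs {A : Type*} [Fintype A] [MeasurableSpace A] [MeasurableSingletonClass A]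
    {Z : unitInterval → A} (hZ : Measurable Z) (q : A → ℝ) (hq0 : ∀ a, 0 ≤ q a)
    (hq : ∀ a, volume.real (Z ⁻¹' {a}) ≠ 0 → 0 < q a) (hs : ∑ a, q a ≤ 1) :
    HH Z ≤ ∫ x, - Real.log (q (Z x)) := by
  rw [integral_comp_fin hZ (fun a => - Real.log (q a))]
  have h1 : ∑ a, volume.real (Z ⁻¹' {a}) = 1 := by
    have := integral_comp_fin hZ (fun _ => 1)
    simpa using this.symm
  have key : ∀ a, Real.negMulLog (volume.real (Z ⁻¹' {a})) ≤
      volume.real (Z ⁻¹' {a}) * - Real.log (q a) + (q a - volume.real (Z ⁻¹' {a})) := by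
    intro a
    have hp0 : 0 ≤ volume.real (Z ⁻¹' {a}) := measureReal_nonneg
    have hqa := hq a
    generalize volume.real (Z ⁻¹' {a}) = p at *
    by_cases h : p = 0
    · subst h; simp [hq0 a]
    · have hp : 0 < p := lt_of_le_of_ne hp0 (Ne.symm h)
      have hqp := hqa h
      have := Real.log_le_sub_one_of_pos (div_pos hqp hp)
      rw [Real.log_div hqp.ne' hp.ne'] at this
      have h2 := mul_le_mul_of_nonneg_left this hp0
      rw [mul_sub p (q a / p) 1, mul_div_cancel₀ _ hp.ne'] at h2
      unfold Real.negMulLog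
      nlinarith
  calc HH Z ≤ ∑ a, (volume.real (Z ⁻¹' {a}) * - Real.log (q a) + (q a - volume.real (Z ⁻¹' {a}))) :=
        Finset.sum_le_sum fun a _ => key a
    _ = ∑ a, volume.real (Z ⁻¹' {a}) * - Real.log (q a) + (∑ a, q a - 1) := by
        rw [Finset.sum_add_distrib, Finset.sum_sub_distrib, h1]
    _ ≤ _ := by linarith

lemma HH_eq_integral {A : Type*} [Fintype A] [MeasurableSpace A] [MeasurableSingletonClass A]
    {Z : unitInterval → A} (hZ : Measurable Z) :
    HH Z = ∫ x, - Real.log (volume.real (Z ⁻¹' {Z x})) := by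
  rw [integral_comp_fin hZ (fun a => - Real.log (volume.real (Z ⁻¹' {a})))]
  refine Finset.sum_congr rfl fun a _ => ?_
  unfold Real.negMulLog; ring

lemma HH_nonneg {A : Type*} [Fintype A] (Z : unitInterval → A) : 0 ≤ HH Z :=
  Finset.sum_nonneg fun _ _ => Real.negMulLog_nonneg measureReal_nonneg measureReal_le_one

lemma HH_fst_le {A B : Type*} [Fintype A] [MeasurableSpace A] [MeasurableSingletonClass A]
    [Fintype B] [MeasurableSpace B] [MeasurableSingletonClass B]
    {Z : unitInterval → A} {W : unitInterval → B} (hZ : Measurable Z) (hW : Measurable W) :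
    HH Z ≤ HH (fun x => (Z x, W x)) := by
  have hZW : Measurable (fun x => (Z x, W x)) := hZ.prodMk hW
  rw [HH_eq_integral hZ, integral_comp_fin hZ (fun a => - Real.log (volume.real (Z ⁻¹' {a})))]
  have h0 := integral_comp_fin hZ (fun a => - Real.log (volume.real (Z ⁻¹' {a})))
  have h1 := integral_comp_fin hZW (fun a => - Real.log (volume.real (Z ⁻¹' {a.1})))
  rw [← h0]
  simp only at h1
  rw [h1]
  refine Finset.sum_le_sum fun a _ => ?_
  rw [Real.negMulLog, neg_mul, ← mul_neg]
  by_cases h : volume.real ((fun x => (Z x, W x)) ⁻¹' {a}) = 0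
  · rw [h]; simp
  · have hp : 0 < volume.real ((fun x => (Z x, W x)) ⁻¹' {a}) :=
      lt_of_le_of_ne measureReal_nonneg (Ne.symm h)
    refine mul_le_mul_of_nonneg_left ?_ hp.le
    refine neg_le_neg (Real.log_le_log hp ?_)
    refine measureReal_mono ?_
    rintro x hx
    simp only [mem_preimage, mem_singleton_iff] at hx ⊢
    rw [← hx]

lemma measurable_nameOf {f : unitInterval → unitInterval} (hf : Measurable f) {A : Type*}
    [MeasurableSpace A] {X : unitInterval → A} (hX : Measurable X) (n : ℕ) :
    Measurable (nameOf f X n) :=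
  measurable_pi_lambda _ fun i => hX.comp (hf.iterate i)

/-- Comparison of the entropies of two nearby finite-valued functions. -/
lemma HH_name_le {f : unitInterval → unitInterval} (hf : MeasurePreserving f volume volume)
    {k : ℕ} {X Y : unitInterval → Fin k} (hX : Measurable X) (hY : Measurable Y) (n : ℕ)
    {d : ℝ} (hd0 : 0 < d) (hd1 : d < 1) :
    HH (nameOf f X n) ≤ HH (nameOf f Y n) +
      n * (- Real.log (1 - d) + volume.real {x | X x ≠ Y x} * Real.log (k / d)) := by
  classical
  have hV := measurable_nameOf hf.measurable hX n
  have hW := measurable_nameOf hf.measurable hY n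
  refine (HH_fst_le hV hW).trans ?_
  set r : Fin k → Fin k → ℝ := fun a b => if a = b then 1 - d else d / k with hr
  have hrpos : ∀ a b, 0 < r a b := by
    intro a b
    have : 0 < (k : ℝ) := by exact_mod_cast a.pos
    simp only [hr]; split_ifs
    · linarith
    · positivity
  have hrsum : ∀ b, ∑ a, r a b ≤ 1 := by
    intro b
    have hk : 0 < (k : ℝ) := by exact_mod_cast b.pos
    calc ∑ a, r a b ≤ ∑ a : Fin k, ((if a = b then 1 - d else 0) + d / k) := by
          refine Finset.sum_le_sum fun a _ => ?_
          simp only [hr]; split_ifs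
          · have : 0 ≤ d / k := by positivity
            linarith
          · linarith
      _ = 1 := by
          rw [Finset.sum_add_distrib]; simp; field_simp; ring
  set q : (Fin n → Fin k) × (Fin n → Fin k) → ℝ :=
    fun a => volume.real (nameOf f Y n ⁻¹' {a.2}) * ∏ i, r (a.1 i) (a.2 i) with hq
  have hprod : ∀ a b : Fin n → Fin k, 0 < ∏ i, r (a i) (b i) := fun a b =>
    Finset.prod_pos fun i _ => hrpos _ _
  have hpw : ∀ a, (volume.real ((fun x => (nameOf f X n x, nameOf f Y n x)) ⁻¹' {a}) ≠ 0) →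
      volume.real (nameOf f Y n ⁻¹' {a.2}) ≠ 0 := by
    intro a h h0
    apply h
    refine le_antisymm ?_ measureReal_nonneg
    rw [← h0]
    refine measureReal_mono ?_
    intro x hx
    simp only [mem_preimage, mem_singleton_iff] at hx ⊢
    rw [← hx]
  have hsum : ∑ a, q a ≤ 1 := by
    rw [Fintype.sum_prod_type_right]
    have h1 : ∑ b, volume.real (nameOf f Y n ⁻¹' {b}) = 1 := by
      have := integral_comp_fin hW (fun _ => 1)
      simpa using this.symm
    rw [← h1]
    refine Finset.sum_le_sum fun b _ => ?_
    simp only [hq]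
    rw [← Finset.mul_sum]
    refine mul_le_of_le_one_right measureReal_nonneg ?_
    have : ∑ a : Fin n → Fin k, ∏ i, r (a i) (b i) = ∏ i, ∑ a, r a (b i) := by
      rw [Finset.prod_univ_sum]; simp
    rw [this]
    exact Finset.prod_le_one (fun i _ => Finset.sum_nonneg fun a _ => (hrpos _ _).le)
      fun i _ => hrsum _
  have hg := gibbs (hV.prodMk hW) q
    (fun a => mul_nonneg measureReal_nonneg (hprod _ _).le)
    (fun a ha => mul_pos (lt_of_le_of_ne measureReal_nonneg (Ne.symm (hpw a ha))) (hprod _ _)) hsum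
  refine hg.trans ?_
  -- the integrand
  have hae : (fun x => - Real.log (q (nameOf f X n x, nameOf f Y n x))) =ᵐ[volume]
      fun x => - Real.log (volume.real (nameOf f Y n ⁻¹' {nameOf f Y n x})) +
        ∑ i : Fin n, - Real.log (r (X (f^[(i : ℕ)] x)) (Y (f^[(i : ℕ)] x))) := by
    have hnull : volume {x | volume.real (nameOf f Y n ⁻¹' {nameOf f Y n x}) = 0} = 0 := by
      have : {x | volume.real (nameOf f Y n ⁻¹' {nameOf f Y n x}) = 0} ⊆
          ⋃ b ∈ {b | volume (nameOf f Y n ⁻¹' {b}) = 0}, nameOf f Y n ⁻¹' {b} := by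
        intro x hx
        simp only [mem_ofPred_eq, measureReal_eq_zero_iff (measure_ne_top _ _)] at hx
        simp only [mem_iUnion]
        exact ⟨_, hx, rfl⟩
      refine measure_mono_null this ?_
      rw [measure_biUnion_null_iff (Set.to_countable _)]
      exact fun b hb => hb
    have : ∀ᵐ x, volume.real (nameOf f Y n ⁻¹' {nameOf f Y n x}) ≠ 0 := by
      rw [ae_iff]; simpa using hnull
    filter_upwards [this] with x hx
    simp only [hq]
    rw [Real.log_mul hx (hprod _ _).ne', Real.log_prod (fun i _ => (hrpos _ _).ne')]
    rw [neg_add, Finset.sum_neg_distrib]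
    rfl
  rw [integral_congr_ae hae]
  have hXY : Measurable (fun x => (X x, Y x)) := hX.prodMk hY
  have hi : ∀ i : Fin n, Integrable
      (fun x => - Real.log (r (X (f^[(i : ℕ)] x)) (Y (f^[(i : ℕ)] x)))) volume := fun i =>
    integrable_comp_fin (hXY.comp (hf.measurable.iterate i)) (fun a => - Real.log (r a.1 a.2))
  rw [integral_add (integrable_comp_fin hW
    (fun b => - Real.log (volume.real (nameOf f Y n ⁻¹' {b})))) (integrable_finsetSum _ fun i _ => hi i),
    ← HH_eq_integral hW, integral_finsetSum _ fun i _ => hi i]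
  have hstep : ∀ i : Fin n, ∫ x, - Real.log (r (X (f^[(i : ℕ)] x)) (Y (f^[(i : ℕ)] x))) =
      ∫ x, - Real.log (r (X x) (Y x)) := by
    intro i
    have hm : MeasurePreserving (f^[(i : ℕ)]) volume volume := hf.iterate i
    have h1 : AEStronglyMeasurable (fun x => - Real.log (r (X x) (Y x)))
        (Measure.map (f^[(i : ℕ)]) volume) := by
      rw [hm.map_eq]
      exact (integrable_comp_fin hXY (fun a => - Real.log (r a.1 a.2))).aestronglyMeasurable
    have := integral_map hm.measurable.aemeasurable h1
    rw [hm.map_eq] at this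
    exact this.symm
  simp only [hstep]
  simp only [Finset.sum_const, Finset.card_univ, Fintype.card_fin, nsmul_eq_mul]
  gcongr
  have hms : MeasurableSet {x | X x ≠ Y x} := (measurableSet_eq_fun hX hY).compl
  calc ∫ x, - Real.log (r (X x) (Y x))
      ≤ ∫ x, (- Real.log (1 - d) + ({x | X x ≠ Y x}.indicator (fun _ => Real.log (k / d))) x) := by
        refine integral_mono (integrable_comp_fin hXY (fun a => - Real.log (r a.1 a.2)))
          ((integrable_const _).add ((integrable_const _).indicator hms)) ?_
        intro x
        have hneg : 0 ≤ - Real.log (1 - d) := by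
          have := Real.log_nonpos (x := 1 - d) (by linarith) (by linarith)
          linarith
        by_cases h : X x = Y x
        · simp [hr, h]
        · have : - Real.log (d / k) = Real.log (k / d) := by
            rw [← Real.log_inv, inv_div]
          simp [hr, h]
          linarith
    _ = _ := by
        rw [integral_add (integrable_const _) ((integrable_const _).indicator hms)]
        rw [integral_indicator_const _ hms]
        simp

/-- Entropy bound for a function which is concentrated on few values. -/
lemma HH_le_of_concentrated {A : Type*} [Fintype A] [Nonempty A] [MeasurableSpace A]
    [MeasurableSingletonClass A] {Z : unitInterval → A} (hZ : Measurable Z) (S : Finset A)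
    {N : ℕ} (hN : 0 < N) (hS : S.card ≤ N) {η : ℝ} (hη : volume.real {x | Z x ∉ S} ≤ η) :
    HH Z ≤ Real.log (2 * N) + η * Real.log (2 * Fintype.card A) := by
  classical
  have hA : 0 < Fintype.card A := Fintype.card_pos
  have hA' : (1 : ℝ) ≤ Fintype.card A := by exact_mod_cast hA
  have hN' : (1 : ℝ) ≤ N := by exact_mod_cast hN
  set q : A → ℝ := fun a => if a ∈ S then 1 / (2 * (N : ℝ)) else 1 / (2 * (Fintype.card A : ℝ)) with hq
  have hqpos : ∀ a, 0 < q a := by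
    intro a; simp only [hq]; split_ifs <;> positivity
  have hsum : ∑ a, q a ≤ 1 := by
    calc ∑ a, q a ≤ ∑ a, ((if a ∈ S then 1 / (2 * (N : ℝ)) else 0) + 1 / (2 * (Fintype.card A : ℝ))) := by
          refine Finset.sum_le_sum fun a _ => ?_
          simp only [hq]; split_ifs
          · have : 0 ≤ 1 / (2 * (Fintype.card A : ℝ)) := by positivity
            linarith
          · linarith
      _ = S.card * (1 / (2 * (N : ℝ))) + 1 / 2 := by
          rw [Finset.sum_add_distrib, ← Finset.sum_filter]
          simp only [Finset.filter_univ_mem, Finset.sum_const, nsmul_eq_mul, Finset.card_univ]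
          congr 1
          field_simp
      _ ≤ N * (1 / (2 * (N : ℝ))) + 1 / 2 := by gcongr
      _ = 1 := by field_simp; norm_num
  refine (gibbs hZ q (fun a => (hqpos a).le) (fun a _ => hqpos a) hsum).trans ?_
  have hms : MeasurableSet {x | Z x ∉ S} := hZ (MeasurableSet.of_discrete (s := {a | a ∉ S}))
  have hlA : 0 ≤ Real.log (2 * Fintype.card A) := Real.log_nonneg (by linarith)
  have hlN : 0 ≤ Real.log (2 * N) := Real.log_nonneg (by linarith)
  calc ∫ x, - Real.log (q (Z x))
      ≤ ∫ x, (Real.log (2 * N) +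
          ({x | Z x ∉ S}.indicator (fun _ => Real.log (2 * Fintype.card A))) x) := by
        refine integral_mono (integrable_comp_fin hZ (fun a => - Real.log (q a)))
          ((integrable_const _).add ((integrable_const _).indicator hms)) ?_
        intro x
        by_cases h : Z x ∈ S
        · simp only [hq, h, if_true, one_div, Real.log_inv, neg_neg]
          simp [h]
        · simp only [hq, h, if_false, one_div, Real.log_inv, neg_neg]
          simp only [indicator, mem_ofPred_eq, h, not_false_eq_true, if_true]
          linarith
    _ = Real.log (2 * N) + volume.real {x | Z x ∉ S} * Real.log (2 * Fintype.card A) := by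
        rw [integral_add (integrable_const _) ((integrable_const _).indicator hms)]
        rw [integral_indicator_const _ hms]
        simp
    _ ≤ _ := by gcongr

lemma hnEnt_eq_HH {k : ℕ} {P : Fin k → Set unitInterval} {X : unitInterval → Fin k}
    {f : unitInterval → unitInterval} (hf : MeasurePreserving f volume volume)
    (hPX : ∀ i, P i =ᵐ[volume] X ⁻¹' {i}) (n : ℕ) :
    hnEnt f P n = (1 / (n : ℝ)) * HH (nameOf f X n) := by
  unfold hnEnt HH
  congr 1
  refine Finset.sum_congr rfl fun s _ => ?_
  have : volume (joinAtom f P n s) = volume (nameOf f X n ⁻¹' {s}) := by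
    have e : nameOf f X n ⁻¹' {s} = ⋂ i : Fin n, f^[(i : ℕ)] ⁻¹' (X ⁻¹' {s i}) := by
      ext x
      simp [nameOf, funext_iff]
    rw [e]
    refine measure_congr ?_
    refine Filter.EventuallyEq.countable_iInter fun i => ?_
    exact (hf.iterate i).quasiMeasurePreserving.preimage_ae_eq (hPX (s i))
  rw [this, Real.negMulLog, neg_mul]
  rfl

lemma exists_fun_of_partition {k : ℕ} {P : Fin k → Set unitInterval} (hP : IsAEPartition P) :
    ∃ X : unitInterval → Fin k, Measurable X ∧ ∀ i, P i =ᵐ[volume] X ⁻¹' {i} := by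
  classical
  have hex : ∀ x, ∃ i, x ∈ P i := fun x => by
    have : x ∈ ⋃ i, P i := by rw [hP.cover]; trivial
    simpa using this
  have hex' : ∀ x, (Finset.univ.filter fun i => x ∈ P i).Nonempty := fun x => by
    obtain ⟨i, hi⟩ := hex x
    exact ⟨i, by simp [hi]⟩
  set X : unitInterval → Fin k := fun x => (Finset.univ.filter fun i => x ∈ P i).min' (hex' x) with hXdef
  have hXmem : ∀ x, x ∈ P (X x) := fun x => by
    have := Finset.min'_mem _ (hex' x)
    simpa using this
  have hXle : ∀ x i, x ∈ P i → X x ≤ i := fun x i hi => Finset.min'_le _ _ (by simp [hi])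
  refine ⟨X, ?_, ?_⟩
  · refine measurable_to_countable' fun i => ?_
    have : X ⁻¹' {i} = P i ∩ ⋂ j ∈ {j | j < i}, (P j)ᶜ := by
      ext x
      simp only [mem_preimage, mem_singleton_iff, mem_inter_iff, mem_iInter, mem_compl_iff,
        mem_ofPred_eq]
      constructor
      · rintro rfl
        exact ⟨hXmem x, fun j hj hx => absurd (hXle x j hx) (not_le.2 hj)⟩
      · rintro ⟨h1, h2⟩
        refine le_antisymm (hXle x i h1) ?_
        by_contra hlt
        exact h2 _ (not_le.1 hlt) (hXmem x)
    rw [this]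
    exact (hP.meas i).inter (MeasurableSet.biInter (Set.to_countable _) fun j _ => (hP.meas j).compl)
  · intro i
    have hnull : volume (⋃ j ∈ {j | j ≠ i}, P i ∩ P j) = 0 := by
      rw [measure_biUnion_null_iff (Set.to_countable _)]
      exact fun j hj => hP.aedisj i j (Ne.symm hj)
    have : ∀ᵐ x, x ∉ ⋃ j ∈ {j | j ≠ i}, P i ∩ P j := measure_eq_zero_iff_ae_notMem.1 hnull
    filter_upwards [this] with x hx
    apply propext
    change x ∈ P i ↔ X x = i
    constructor
    · intro h
      by_contra hne
      apply hx
      simp only [mem_iUnion]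
      exact ⟨X x, hne, h, hXmem x⟩
    · rintro rfl
      exact hXmem x

lemma isAEPartition_of_fun {k : ℕ} {X : unitInterval → Fin k} (hX : Measurable X) :
    IsAEPartition (fun i => X ⁻¹' {i}) where
  meas i := hX (measurableSet_singleton i)
  cover := by ext x; simp
  aedisj i j hij := by
    have : X ⁻¹' {i} ∩ X ⁻¹' {j} = ∅ := by
      ext x
      simp only [mem_inter_iff, mem_preimage, mem_singleton_iff, mem_empty_iff_false, iff_false]
      rintro ⟨rfl, h⟩
      exact hij h
    simp [this]

/-- `X` has zero entropy with respect to `f`. -/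
def ZeroEnt (f : unitInterval → unitInterval) {k : ℕ} (X : unitInterval → Fin k) : Prop :=
  ∀ ε : ℝ, 0 < ε → ∃ n : ℕ, HH (nameOf f X (n + 1)) < ((n + 1 : ℕ) : ℝ) * ε

lemma hEnt_le_zero_iff {k : ℕ} {P : Fin k → Set unitInterval} {X : unitInterval → Fin k}
    {f : unitInterval → unitInterval} (hf : MeasurePreserving f volume volume)
    (hX : Measurable X) (hPX : ∀ i, P i =ᵐ[volume] X ⁻¹' {i}) :
    hEnt f P ≤ 0 ↔ ZeroEnt f X := by
  unfold hEnt ZeroEnt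
  simp only [hnEnt_eq_HH hf hPX]
  constructor
  · intro h ε hε
    obtain ⟨n, hn⟩ := exists_lt_of_ciInf_lt (lt_of_le_of_lt h hε)
    refine ⟨n, ?_⟩
    have hpos : (0 : ℝ) < ((n + 1 : ℕ) : ℝ) := by positivity
    rw [one_div, inv_mul_lt_iff₀ hpos] at hn
    exact hn
  · intro h
    refine le_of_forall_pos_lt_add fun ε hε => ?_
    obtain ⟨n, hn⟩ := h ε hε
    have hpos : (0 : ℝ) < ((n + 1 : ℕ) : ℝ) := by positivity
    refine lt_of_le_of_lt (ciInf_le ?_ n) ?_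
    · refine ⟨0, ?_⟩
      rintro _ ⟨m, rfl⟩
      have := HH_nonneg (nameOf f X (m + 1))
      positivity
    · rw [one_div, inv_mul_lt_iff₀ hpos, zero_add]
      exact hn

lemma hLam_eq_zero_iff {f : unitInterval → unitInterval} (hf : MeasurePreserving f volume volume) :
    hLam f = 0 ↔ ∀ (k : ℕ) (X : unitInterval → Fin k), Measurable X → ZeroEnt f X := by
  unfold hLam
  simp only [ENNReal.iSup_eq_zero, ENNReal.ofReal_eq_zero]
  constructor
  · intro h k X hX
    exact (hEnt_le_zero_iff hf hX (fun i => Filter.EventuallyEq.rfl)).1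
      (h k _ (isAEPartition_of_fun hX))
  · intro h k P hP
    obtain ⟨X, hX, hPX⟩ := exists_fun_of_partition hP
    exact (hEnt_le_zero_iff hf hX hPX).2 (h k X hX)

/-- The index of the interval of length `1/(M+1)` containing `x`. -/
def cl (M : ℕ) (x : unitInterval) : Fin (M + 1) :=
  ⟨min ⌊((M : ℝ) + 1) * (x : ℝ)⌋₊ M, by omega⟩

lemma cl_le (M : ℕ) (x : unitInterval) : ((cl M x : ℕ) : ℝ) ≤ ((M : ℝ) + 1) * x := by
  have h0 : (0 : ℝ) ≤ x := x.2.1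
  have h1 : ((cl M x : ℕ) : ℝ) ≤ (⌊((M : ℝ) + 1) * (x : ℝ)⌋₊ : ℝ) := by
    exact Nat.cast_le.2 (min_le_left _ _)
  exact h1.trans (Nat.floor_le (by positivity))

lemma le_cl (M : ℕ) (x : unitInterval) : ((M : ℝ) + 1) * x ≤ ((cl M x : ℕ) : ℝ) + 1 := by
  have h1 : (x : ℝ) ≤ 1 := x.2.2
  unfold cl
  simp only
  rcases le_total ⌊((M : ℝ) + 1) * (x : ℝ)⌋₊ M with h | h
  · rw [min_eq_left h]
    exact (Nat.lt_floor_add_one _).le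
  · rw [min_eq_right h]
    have : (0 : ℝ) ≤ M := by positivity
    nlinarith

lemma cl_eq_of {M : ℕ} {x : unitInterval} {i : Fin (M + 1)} (h1 : (i : ℝ) < ((M : ℝ) + 1) * x)
    (h2 : ((M : ℝ) + 1) * x < (i : ℝ) + 1) : cl M x = i := by
  have a := cl_le M x
  have b := le_cl M x
  have h3 : ((cl M x : ℕ) : ℝ) < ((i + 1 : ℕ) : ℝ) := by push_cast; linarith
  have h4 : (((i : ℕ)) : ℝ) < ((cl M x + 1 : ℕ) : ℝ) := by push_cast; linarith
  have h5 : (cl M x : ℕ) < i + 1 := by exact_mod_cast h3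
  have h6 : (i : ℕ) < cl M x + 1 := by exact_mod_cast h4
  ext
  omega

lemma measurable_cl (M : ℕ) : Measurable (cl M) := by
  have h : Measurable fun x : unitInterval => min ⌊((M : ℝ) + 1) * (x : ℝ)⌋₊ M := by
    have : Measurable fun x : unitInterval => ⌊((M : ℝ) + 1) * (x : ℝ)⌋₊ :=
      Nat.measurable_floor.comp (measurable_subtype_coe.const_mul _)
    exact this.min measurable_const
  refine measurable_to_countable' fun i => ?_
  have : cl M ⁻¹' {i} = (fun x : unitInterval => min ⌊((M : ℝ) + 1) * (x : ℝ)⌋₊ M) ⁻¹' {(i : ℕ)} := by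
    ext x
    simp [cl, Fin.ext_iff]
  rw [this]
  exact h (measurableSet_singleton _)

lemma cl_dist {M : ℕ} {x y : unitInterval} (h : cl M x = cl M y) :
    dist x y ≤ 1 / ((M : ℝ) + 1) := by
  have a := cl_le M x
  have b := le_cl M x
  have c := cl_le M y
  have d := le_cl M y
  rw [h] at a b
  have hM : (0 : ℝ) < (M : ℝ) + 1 := by positivity
  rw [Subtype.dist_eq, Real.dist_eq, le_div_iff₀ hM, ← abs_of_pos hM, ← abs_mul, abs_le]
  constructor <;> nlinarith

/-- endpoints -/
def endp (M : ℕ) : Set unitInterval :=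
  ⋃ j : Fin (M + 2), {x : unitInterval | ((M : ℝ) + 1) * x = j}

lemma endp_null (M : ℕ) : volume (endp M) = 0 := by
  refine measure_iUnion_null fun j => ?_
  refine Set.Subsingleton.measure_zero ?_ _
  intro x hx y hy
  simp only [mem_ofPred_eq] at hx hy
  have hM : ((M : ℝ) + 1) ≠ 0 := by positivity
  exact Subtype.ext (mul_left_cancel₀ hM (hx.trans hy.symm))

lemma cl_strict {M : ℕ} {x : unitInterval} (hx : x ∉ endp M) :
    ((cl M x : ℕ) : ℝ) < ((M : ℝ) + 1) * x ∧ ((M : ℝ) + 1) * x < ((cl M x : ℕ) : ℝ) + 1 := by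
  simp only [endp, mem_iUnion, mem_ofPred_eq, not_exists] at hx
  constructor
  · refine lt_of_le_of_ne (cl_le M x) fun h => ?_
    exact hx ⟨cl M x, by omega⟩ h.symm
  · refine lt_of_le_of_ne (le_cl M x) fun h => ?_
    exact hx ⟨cl M x + 1, by omega⟩ (by push_cast; exact h)

lemma cl_eventually {M : ℕ} {x : unitInterval} (hx : x ∉ endp M) :
    ∀ᶠ y in nhds x, cl M y = cl M x := by
  obtain ⟨h1, h2⟩ := cl_strict hx
  have hc : Continuous fun y : unitInterval => ((M : ℝ) + 1) * (y : ℝ) := by fun_prop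
  have e1 := hc.continuousAt.eventually (lt_mem_nhds h1)
  have e2 := hc.continuousAt.eventually (gt_mem_nhds h2)
  filter_upwards [e1, e2] with y a b
  exact cl_eq_of a b

lemma volume_cl (M : ℕ) (i : Fin (M + 1)) :
    volume.real (cl M ⁻¹' {i}) = 1 / ((M : ℝ) + 1) := by
  have hM : (0 : ℝ) < (M : ℝ) + 1 := by positivity
  have hi : ((i : ℕ) : ℝ) + 1 ≤ (M : ℝ) + 1 := by
    have : (i : ℕ) + 1 ≤ M + 1 := i.2
    exact_mod_cast this
  have hi0 : (0 : ℝ) ≤ ((i : ℕ) : ℝ) := by positivity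
  set a : unitInterval := ⟨(i : ℕ) / ((M : ℝ) + 1), by positivity, by
    rw [div_le_one hM]; linarith⟩ with ha
  set b : unitInterval := ⟨((i : ℕ) + 1) / ((M : ℝ) + 1), by positivity, by
    rw [div_le_one hM]; linarith⟩ with hb
  have hab : (b : ℝ) - a = 1 / ((M : ℝ) + 1) := by
    simp only [ha, hb]; ring
  have h1 : Ioo a b ⊆ cl M ⁻¹' {i} := by
    rintro x ⟨hx1, hx2⟩
    have hx1' : (a : ℝ) < x := hx1
    have hx2' : (x : ℝ) < b := hx2
    simp only [ha, hb] at hx1' hx2'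
    rw [div_lt_iff₀' hM] at hx1'
    rw [lt_div_iff₀' hM] at hx2'
    exact cl_eq_of hx1' hx2'
  have h2 : cl M ⁻¹' {i} ⊆ Icc a b := by
    rintro x hx
    have hx' : cl M x = i := hx
    have c := cl_le M x
    have d := le_cl M x
    rw [hx'] at c d
    refine ⟨?_, ?_⟩
    · change (i : ℕ) / ((M : ℝ) + 1) ≤ (x : ℝ)
      rwa [div_le_iff₀' hM]
    · change (x : ℝ) ≤ ((i : ℕ) + 1) / ((M : ℝ) + 1)
      rwa [le_div_iff₀' hM]
  have h0 : 0 ≤ (b : ℝ) - a := by rw [hab]; positivity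
  have m1 := measureReal_mono (μ := volume) h1
  have m2 := measureReal_mono (μ := volume) h2
  simp only [Measure.real, unitInterval.volume_Ioo, unitInterval.volume_Icc,
    ENNReal.toReal_ofReal h0] at m1 m2
  rw [← hab]
  exact le_antisymm m2 m1

lemma volume_cl_mem (M : ℕ) (S : Finset (Fin (M + 1))) :
    volume.real {x | cl M x ∈ S} = S.card / ((M : ℝ) + 1) := by
  have : {x | cl M x ∈ S} = ⋃ i ∈ S, cl M ⁻¹' {i} := by
    ext x; simp
  rw [this, measureReal_biUnion_finset]
  · simp [volume_cl, div_eq_mul_inv]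
  · intro i _ j _ hij
    refine Set.disjoint_left.2 fun x hx hy => hij ?_
    exact hx.symm.trans hy
  · exact fun i _ => measurable_cl M (measurableSet_singleton i)

lemma cl_refine (M L : ℕ) (x : unitInterval) :
    (cl M x : ℕ) = (cl ((M + 1) * (L + 1) - 1) x : ℕ) / (L + 1) := by
  have hpos : 0 < (M + 1) * (L + 1) := by positivity
  have hc : (((M + 1) * (L + 1) - 1 : ℕ) : ℝ) + 1 = ((M : ℝ) + 1) * ((L : ℝ) + 1) := by
    have : (M + 1) * (L + 1) - 1 + 1 = (M + 1) * (L + 1) := by omega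
    exact_mod_cast this
  have hfl : ⌊((M : ℝ) + 1) * (x : ℝ)⌋₊ = ⌊(((M + 1) * (L + 1) - 1 : ℕ) + (1 : ℝ)) * (x : ℝ)⌋₊ / (L + 1) := by
    rw [← Nat.floor_div_natCast, hc]
    congr 1
    push_cast
    field_simp
  have hM : M = ((M + 1) * (L + 1) - 1) / (L + 1) := by
    have : (M + 1) * (L + 1) - 1 = L + (L + 1) * M := by
      have : (M + 1) * (L + 1) = L + (L + 1) * M + 1 := by ring
      omega
    rw [this, Nat.add_mul_div_left _ _ (by omega), Nat.div_eq_of_lt (by omega), zero_add]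
  unfold cl
  simp only
  have hmono : Monotone fun m : ℕ => m / (L + 1) := fun a b h => Nat.div_le_div_right h
  have := hmono.map_min (a := ⌊(((M + 1) * (L + 1) - 1 : ℕ) + (1 : ℝ)) * (x : ℝ)⌋₊)
    (b := (M + 1) * (L + 1) - 1)
  rw [this, ← hfl, ← hM]

/-- Approximation in measure by continuous functions. -/
lemma exists_cont_approx {p : unitInterval → ℝ} (hp : Integrable p volume) {r η : ℝ}
    (hr : 0 < r) (hη : 0 < η) :
    ∃ g : unitInterval → ℝ, Continuous g ∧ volume.real {x | r ≤ |p x - g x|} ≤ η := by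
  obtain ⟨g, hg, hgi⟩ := hp.exists_boundedContinuous_integral_sub_le (ε := r * η) (by positivity)
  refine ⟨g, g.continuous, ?_⟩
  have := mul_meas_ge_le_integral_of_nonneg (μ := volume) (f := fun x => ‖p x - g x‖)
    (Filter.Eventually.of_forall fun x => norm_nonneg _) (hp.sub hgi).norm r
  have h2 := this.trans hg
  exact le_of_mul_le_mul_left h2 hr

lemma exists_unif {g : unitInterval → ℝ} (hg : Continuous g) {r : ℝ} (hr : 0 < r) :
    ∃ M0 : ℕ, ∀ M ≥ M0, ∀ x y, cl M x = cl M y → |g x - g y| < r := by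
  have hu := CompactSpace.uniformContinuous_of_continuous hg
  obtain ⟨d, hd, h⟩ := Metric.uniformContinuous_iff.1 hu r hr
  obtain ⟨M0, hM0⟩ := exists_nat_one_div_lt hd
  refine ⟨M0, fun M hM x y hxy => ?_⟩
  have := h (a := x) (b := y) ?_
  · rwa [Real.dist_eq] at this
  · refine (cl_dist hxy).trans_lt (lt_of_le_of_lt ?_ hM0)
    gcongr

lemma exists_step_approx {k : ℕ} {X : unitInterval → Fin k} (hX : Measurable X) {η : ℝ}
    (hη : 0 < η) : ∃ (M : ℕ) (φ : Fin (M + 1) → Fin k),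
      volume.real {x | X x ≠ φ (cl M x)} ≤ η := by
  classical
  have hp : Integrable (fun x => ((X x : ℕ) : ℝ)) volume :=
    integrable_comp_fin hX (fun a => ((a : ℕ) : ℝ))
  obtain ⟨g, hg, hgm⟩ := exists_cont_approx hp (r := 1 / 4) (by norm_num) hη
  obtain ⟨M, hM⟩ := exists_unif hg (r := 1 / 4) (by norm_num)
  set φ : Fin (M + 1) → Fin k := fun j =>
    if h : ∃ x, cl M x = j ∧ |((X x : ℕ) : ℝ) - g x| < 1 / 4 then X h.choose else X 0 with hφ
  refine ⟨M, φ, le_trans (measureReal_mono ?_) hgm⟩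
  intro x hx
  simp only [mem_ofPred_eq] at hx ⊢
  by_contra hlt
  rw [not_le] at hlt
  apply hx
  have hex : ∃ y, cl M y = cl M x ∧ |((X y : ℕ) : ℝ) - g y| < 1 / 4 := ⟨x, rfl, hlt⟩
  have h1 : φ (cl M x) = X hex.choose := by
    simp only [hφ]; rw [dif_pos hex]
  obtain ⟨h2, h3⟩ := hex.choose_spec
  rw [h1]
  generalize hex.choose = y at h2 h3
  have h4 := hM M le_rfl y x h2
  rw [abs_lt] at hlt h3 h4
  have h5 : ((X x : ℕ) : ℝ) < ((X y + 1 : ℕ) : ℝ) := by push_cast; linarith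
  have h6 : ((X y : ℕ) : ℝ) < ((X x + 1 : ℕ) : ℝ) := by push_cast; linarith
  have h7 : (X x : ℕ) < X y + 1 := by exact_mod_cast h5
  have h8 : (X y : ℕ) < X x + 1 := by exact_mod_cast h6
  ext
  omega

lemma zeroEnt_of_steps {f : unitInterval → unitInterval} (hf : MeasurePreserving f volume volume)
    {k : ℕ} (h : ∀ (M : ℕ) (φ : Fin (M + 1) → Fin k), ZeroEnt f (fun x => φ (cl M x)))
    {X : unitInterval → Fin k} (hX : Measurable X) : ZeroEnt f X := by
  intro ε hε
  have hk : (1 : ℝ) ≤ k := by exact_mod_cast (X 0).pos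
  -- choice of d
  obtain ⟨d, hd0, hd1, hd⟩ : ∃ d : ℝ, 0 < d ∧ d < 1 ∧ - Real.log (1 - d) = min (ε / 3) 1 := by
    have hm : 0 < min (ε / 3) 1 := by positivity
    refine ⟨1 - Real.exp (- min (ε / 3) 1), ?_, ?_, ?_⟩
    · have : Real.exp (- min (ε / 3) 1) < Real.exp 0 := Real.exp_lt_exp.2 (by linarith)
      rw [Real.exp_zero] at this
      linarith
    · have := Real.exp_pos (- min (ε / 3) 1)
      linarith
    · rw [sub_sub_cancel, Real.log_exp, neg_neg]
  have hlog : 0 < Real.log (k / d) := Real.log_pos (by rw [lt_div_iff₀ hd0]; linarith)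
  obtain ⟨M, φ, hφ⟩ := exists_step_approx hX (η := ε / 3 / Real.log (k / d)) (by positivity)
  have hY : Measurable (fun x => φ (cl M x)) := Measurable.of_discrete.comp (measurable_cl M)
  obtain ⟨n, hn⟩ := h M φ (ε / 3) (by positivity)
  refine ⟨n, ?_⟩
  have := HH_name_le hf hX hY (n + 1) hd0 hd1
  have h2 : volume.real {x | X x ≠ φ (cl M x)} * Real.log (k / d) ≤ ε / 3 := by
    rwa [← le_div_iff₀ hlog]
  have h3 : - Real.log (1 - d) ≤ ε / 3 := by rw [hd]; exact min_le_left _ _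
  have hpos : (0 : ℝ) < ((n + 1 : ℕ) : ℝ) := by positivity
  nlinarith

lemma continuous_iter_eval (i : ℕ) (x : unitInterval) :
    Continuous fun g : CLam => (g.1 : unitInterval → unitInterval)^[i] x := by
  induction i with
  | zero => simpa using continuous_const
  | succ i ih =>
    simp only [Function.iterate_succ_apply']
    have h1 : Continuous fun g : CLam => g.1 := continuous_subtype_val
    fun_prop

lemma continuous_HH_name {k : ℕ} (M : ℕ) (φ : Fin (M + 1) → Fin k) (n : ℕ) :
    Continuous fun g : CLam => HH (nameOf g.1 (fun x => φ (cl M x)) n) := by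
  have hY : Measurable (fun x => φ (cl M x)) := Measurable.of_discrete.comp (measurable_cl M)
  unfold HH
  refine continuous_finsetSum _ fun s _ => ?_
  refine Real.continuous_negMulLog.comp ?_
  rw [continuous_iff_continuousAt]
  intro f
  have hm : ∀ g : CLam, MeasurableSet (nameOf g.1 (fun x => φ (cl M x)) n ⁻¹' {s}) := fun g =>
    measurable_nameOf g.2.measurable hY n (measurableSet_singleton s)
  refine (ENNReal.tendsto_toReal (measure_ne_top _ _)).comp ?_
  refine tendsto_measure_of_ae_tendsto_indicator (nhds f) (hm f) hm MeasurableSet.univ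
    (measure_ne_top _ _) (Filter.Eventually.of_forall fun _ => subset_univ _) ?_
  have hae : ∀ᵐ x, ∀ i : Fin n, (f.1 : unitInterval → unitInterval)^[(i : ℕ)] x ∉ endp M := by
    rw [ae_all_iff]
    intro i
    have := (f.2.iterate i).quasiMeasurePreserving.preimage_null (endp_null M)
    exact measure_eq_zero_iff_ae_notMem.1 this
  filter_upwards [hae] with x hx
  have : ∀ᶠ g : CLam in nhds f, ∀ i : Fin n,
      cl M ((g.1 : unitInterval → unitInterval)^[(i : ℕ)] x) =
        cl M ((f.1 : unitInterval → unitInterval)^[(i : ℕ)] x) := by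
    rw [Filter.eventually_all]
    intro i
    exact (continuous_iter_eval i x).continuousAt.eventually (cl_eventually (hx i))
  filter_upwards [this] with g hg
  have : nameOf g.1 (fun x => φ (cl M x)) n x = nameOf f.1 (fun x => φ (cl M x)) n x := by
    ext i
    simp only [nameOf, hg i]
  simp only [mem_preimage, this]

/-- The open sets whose intersection is the set of zero entropy maps. -/
def UU (i : (Σ k : ℕ, Σ M : ℕ, Fin (M + 1) → Fin k) × ℕ) : Set CLam :=
  ⋃ n : ℕ, {g : CLam | HH (nameOf g.1 (fun x => i.1.2.2 (cl i.1.2.1 x)) (n + 1)) <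
    ((n + 1 : ℕ) : ℝ) * (1 / ((i.2 : ℝ) + 1))}

lemma isOpen_UU (i) : IsOpen (UU i) :=
  isOpen_iUnion fun _ => isOpen_lt (continuous_HH_name _ _ _) continuous_const

lemma zero_set_eq : {f : CLam | hLam ⇑f.1 = 0} = ⋂ i, UU i := by
  ext f
  rw [mem_ofPred_eq, hLam_eq_zero_iff f.2]
  simp only [mem_iInter]
  constructor
  · rintro h ⟨⟨k, M, φ⟩, m⟩
    obtain ⟨n, hn⟩ := h k (fun x => φ (cl M x)) (Measurable.of_discrete.comp (measurable_cl M))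
      (1 / ((m : ℝ) + 1)) (by positivity)
    exact mem_iUnion.2 ⟨n, hn⟩
  · intro h k X hX
    refine zeroEnt_of_steps f.2 (fun M φ ε hε => ?_) hX
    obtain ⟨m, hm⟩ := exists_nat_one_div_lt hε
    obtain ⟨n, hn⟩ := mem_iUnion.1 (h ⟨⟨k, M, φ⟩, m⟩)
    refine ⟨n, lt_trans hn ?_⟩
    gcongr

lemma isClosed_mp :
    IsClosed {f : C(unitInterval, unitInterval) | MeasurePreserving f volume volume} := by
  have : {f : C(unitInterval, unitInterval) | MeasurePreserving f volume volume} =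
      ⋂ u : BoundedContinuousFunction unitInterval ℝ,
        {f : C(unitInterval, unitInterval) | ∫ x, u (f x) = ∫ x, u x} := by
    ext f
    simp only [mem_iInter, mem_ofPred_eq]
    have hfm : Measurable f := f.continuous.measurable
    have hmap : ∀ u : BoundedContinuousFunction unitInterval ℝ,
        ∫ y, u y ∂(Measure.map f volume) = ∫ x, u (f x) := fun u =>
      integral_map hfm.aemeasurable u.continuous.aestronglyMeasurable
    constructor
    · intro hf u
      rw [← hmap u, hf.map_eq]
    · intro h
      have hp : IsProbabilityMeasure (Measure.map f (volume : Measure unitInterval)) :=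
        Measure.isProbabilityMeasure_map hfm.aemeasurable
      refine ⟨hfm, ext_of_forall_integral_eq_of_IsFiniteMeasure fun u => ?_⟩
      rw [hmap u, h u]
  rw [this]
  refine isClosed_iInter fun u => isClosed_eq ?_ continuous_const
  refine continuous_of_dominated (bound := fun _ => ‖u‖) ?_ ?_ ?_ ?_
  · intro f
    exact (u.continuous.comp f.continuous).aestronglyMeasurable
  · intro f
    exact Filter.Eventually.of_forall fun x => u.norm_coe_le_norm _
  · exact integrable_const _
  · refine Filter.Eventually.of_forall fun x => ?_
    exact u.continuous.comp (ContinuousEvalConst.continuous_eval_const x)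

lemma baire_CLam : BaireSpace CLam := by
  have : CompleteSpace CLam := isClosed_mp.isComplete.completeSpace_coe
  infer_instance

lemma exists_matching {f : unitInterval → unitInterval} (hf : MeasurePreserving f volume volume)
    (M : ℕ) : ∃ σ : Fin (M + 1) → Fin (M + 1), Function.Injective σ ∧
      ∀ i, ∃ x, cl M x = i ∧ cl M (f x) = σ i := by
  classical
  set t : Fin (M + 1) → Finset (Fin (M + 1)) := fun i =>
    Finset.univ.filter fun j => ∃ x, cl M x = i ∧ cl M (f x) = j with ht
  obtain ⟨σ, h1, h2⟩ := (Finset.all_card_le_biUnion_card_iff_exists_injective t).1 (by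
    intro s
    have hsub : {x | cl M x ∈ s} ⊆ f ⁻¹' {x | cl M x ∈ s.biUnion t} := by
      intro x hx
      simp only [mem_ofPred_eq, mem_preimage, Finset.mem_biUnion] at hx ⊢
      exact ⟨cl M x, hx, by simp only [ht, Finset.mem_filter, Finset.mem_univ, true_and]; exact ⟨x, rfl, rfl⟩⟩
    have hle := measureReal_mono (μ := volume) hsub
    have hms : MeasurableSet {x | cl M x ∈ s.biUnion t} :=
      measurable_cl M (MeasurableSet.of_discrete (s := {a | a ∈ s.biUnion t}))
    have he : volume.real (f ⁻¹' {x | cl M x ∈ s.biUnion t}) =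
        volume.real {x | cl M x ∈ s.biUnion t} := by
      simp only [Measure.real, hf.measure_preimage hms.nullMeasurableSet]
    rw [he, volume_cl_mem, volume_cl_mem] at hle
    have hM : (0 : ℝ) < (M : ℝ) + 1 := by positivity
    rw [div_le_div_iff_of_pos_right hM] at hle
    exact_mod_cast hle)
  refine ⟨σ, h1, fun i => ?_⟩
  have := h2 i
  simpa [ht] using this

lemma exists_atomless {g : unitInterval → ℝ} (hg : Continuous g) {t0 : ℝ} (ht0 : 0 < t0) :
    ∃ t : ℝ, 0 < t ∧ t < t0 ∧ ∀ c, volume {x : unitInterval | g x + t * x = c} = 0 := by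
  set As : ℝ × ℝ → Set unitInterval := fun i => {x : unitInterval | g x + i.1 * x = i.2} with hAs
  have hm : ∀ i, MeasurableSet (As i) := fun i =>
    (isClosed_eq (by fun_prop) continuous_const).measurableSet
  have hc : {i | 0 < volume (As i)}.Countable := by
    refine Measure.countable_meas_pos_of_disjoint_iUnion₀ (fun i => (hm i).nullMeasurableSet) ?_
    rintro ⟨t, c⟩ ⟨t', c'⟩ hne
    refine Set.Subsingleton.measure_zero ?_ _
    rintro x ⟨hx1, hx2⟩ y ⟨hy1, hy2⟩
    simp only [hAs, mem_ofPred_eq] at hx1 hx2 hy1 hy2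
    by_cases h : t = t'
    · exfalso
      subst h
      exact hne (by rw [← hx1, ← hx2])
    · have h' : t - t' ≠ 0 := sub_ne_zero.2 h
      have : (t - t') * (x : ℝ) = (t - t') * (y : ℝ) := by linarith
      exact Subtype.ext (mul_left_cancel₀ h' this)
  have hc1 : (Prod.fst '' {i | 0 < volume (As i)}).Countable := hc.image _
  obtain ⟨t, ht, h1, h2⟩ := (hc1.dense_compl ℝ).exists_between ht0
  refine ⟨t, h1, h2, fun c => ?_⟩
  by_contra hne
  exact ht ⟨(t, c), pos_iff_ne_zero.2 hne, rfl⟩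

lemma exists_transform {g : unitInterval → ℝ} (hg : Continuous g)
    (hat : ∀ c, volume {x : unitInterval | g x = c} = 0) :
    ∃ G : CLam, ∀ x, ((G.1 x : unitInterval) : ℝ) = volume.real {y | g y ≤ g x} := by
  set μ : Measure ℝ := Measure.map g volume with hμ
  have hp : IsProbabilityMeasure μ := Measure.isProbabilityMeasure_map hg.measurable.aemeasurable
  set ψ : ℝ → ℝ := fun y => volume.real {x | g x ≤ y} with hψ
  have hψμ : ∀ y, ψ y = ProbabilityTheory.cdf μ y := by
    intro y
    rw [ProbabilityTheory.cdf_eq_real, hμ, map_measureReal_apply hg.measurable measurableSet_Iic]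
    rfl
  have hmono : Monotone ψ := fun a b hab => measureReal_mono fun x hx => le_trans hx hab
  have hψc : Continuous ψ := by
    have e : ψ = ProbabilityTheory.cdf μ := funext hψμ
    rw [continuous_iff_continuousAt]
    intro a
    rw [hmono.continuousAt_iff_leftLim_eq_rightLim]
    have hs : μ {a} = 0 := by
      rw [hμ, Measure.map_apply hg.measurable (measurableSet_singleton a)]
      exact hat a
    rw [← ProbabilityTheory.measure_cdf μ, StieltjesFunction.measure_singleton,
      ENNReal.ofReal_eq_zero] at hs
    have hl := (ProbabilityTheory.monotone_cdf μ).leftLim_le (le_refl a)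
    have hr := (ProbabilityTheory.cdf μ).rightLim_eq a
    rw [e]
    linarith
  have h01 : ∀ y, ψ y ∈ unitInterval := fun y => ⟨measureReal_nonneg, measureReal_le_one⟩
  set G : C(unitInterval, unitInterval) :=
    ⟨fun x => ⟨ψ (g x), h01 _⟩, (hψc.comp hg).subtype_mk _⟩ with hG
  have hGv : ∀ x, ((G x : unitInterval) : ℝ) = ψ (g x) := fun x => rfl
  -- intermediate values
  have hivt : ∀ u : ℝ, 0 < u → u < 1 → ∃ y, ψ y = u := by
    intro u hu0 hu1
    have e : ψ = ProbabilityTheory.cdf μ := funext hψμ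
    have t0 := ProbabilityTheory.tendsto_cdf_atBot μ
    have t1 := ProbabilityTheory.tendsto_cdf_atTop μ
    rw [← e] at t0 t1
    obtain ⟨a, ha⟩ := (t0.eventually (gt_mem_nhds hu0)).exists
    obtain ⟨b, hb⟩ := (t1.eventually (lt_mem_nhds hu1)).exists
    exact mem_range_of_exists_le_of_exists_ge hψc ⟨a, ha.le⟩ ⟨b, hb.le⟩
  have hle : ∀ u : ℝ, 0 < u → u < 1 → u ≤ volume.real {x | ψ (g x) ≤ u} := by
    intro u h0 h1
    obtain ⟨y, hy⟩ := hivt u h0 h1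
    have : {x | g x ≤ y} ⊆ {x | ψ (g x) ≤ u} := fun x hx => by
      simp only [mem_ofPred_eq] at hx ⊢
      rw [← hy]; exact hmono hx
    calc u = ψ y := hy.symm
      _ ≤ _ := measureReal_mono this
  have hlt : ∀ u : ℝ, 0 < u → u < 1 → volume.real {x | ψ (g x) < u} ≤ u := by
    intro u h0 h1
    obtain ⟨y, hy⟩ := hivt u h0 h1
    have : {x | ψ (g x) < u} ⊆ {x | g x ≤ y} := fun x hx => by
      simp only [mem_ofPred_eq] at hx ⊢
      by_contra hc
      have := hmono (not_le.1 hc).le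
      linarith
    calc _ ≤ ψ y := measureReal_mono this
      _ = u := hy
  have heq : ∀ u : ℝ, 0 ≤ u → u ≤ 1 → volume.real {x | ψ (g x) ≤ u} = u := by
    intro u h0 h1
    apply le_antisymm
    · rcases h1.eq_or_lt with rfl | h1
      · exact measureReal_le_one
      refine le_of_forall_gt_imp_ge_of_dense fun v hv => ?_
      rcases lt_or_ge v 1 with hv1 | hv1
      · refine le_trans (measureReal_mono ?_) (hlt v (by linarith) hv1)
        intro x hx
        simp only [mem_ofPred_eq] at hx ⊢
        linarith
      · exact measureReal_le_one.trans hv1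
    · refine le_of_forall_lt_imp_le_of_dense fun v hv => ?_
      rcases lt_or_ge 0 v with hv0 | hv0
      · refine le_trans (hle v hv0 (by linarith)) (measureReal_mono ?_)
        intro x hx
        simp only [mem_ofPred_eq] at hx ⊢
        linarith
      · exact hv0.trans measureReal_nonneg
  have hGm : Measurable G := G.continuous.measurable
  have hp2 : IsProbabilityMeasure (Measure.map G (volume : Measure unitInterval)) :=
    Measure.isProbabilityMeasure_map hGm.aemeasurable
  refine ⟨⟨G, hGm, Measure.ext_of_Iic _ _ fun a => ?_⟩, hGv⟩
  rw [Measure.map_apply hGm measurableSet_Iic, unitInterval.volume_Iic]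
  have := heq a a.2.1 a.2.2
  rw [← this, ofReal_measureReal]
  rfl

lemma cl_factor (M L : ℕ) : ∃ Φ : Fin ((M + 1) * (L + 1) - 1 + 1) → Fin (M + 1),
    ∀ x, cl M x = Φ (cl ((M + 1) * (L + 1) - 1) x) := by
  refine ⟨fun a => ⟨min ((a : ℕ) / (L + 1)) M, by omega⟩, fun x => ?_⟩
  ext
  have h := cl_refine M L x
  have h2 := (cl M x).2
  simp only
  omega

lemma vol_le_of_mp {f : unitInterval → unitInterval} (hf : MeasurePreserving f volume volume)
    {c : ℝ} (hc : 0 ≤ c) : volume.real {y | ((f y : unitInterval) : ℝ) ≤ c} ≤ c := by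
  rcases le_total c 1 with h1 | h1
  · have : {y | ((f y : unitInterval) : ℝ) ≤ c} = f ⁻¹' (Iic ⟨c, hc, h1⟩) := rfl
    rw [this, Measure.real, hf.measure_preimage measurableSet_Iic.nullMeasurableSet,
      unitInterval.volume_Iic, ENNReal.toReal_ofReal hc]
  · exact measureReal_le_one.trans h1

lemma le_vol_of_mp {f : unitInterval → unitInterval} (hf : MeasurePreserving f volume volume)
    {c : ℝ} (h1 : c ≤ 1) : c ≤ volume.real {y | ((f y : unitInterval) : ℝ) ≤ c} := by
  rcases le_total 0 c with hc | hc
  · have : {y | ((f y : unitInterval) : ℝ) ≤ c} = f ⁻¹' (Iic ⟨c, hc, h1⟩) := rfl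
    rw [this, Measure.real, hf.measure_preimage measurableSet_Iic.nullMeasurableSet,
      unitInterval.volume_Iic, ENNReal.toReal_ofReal hc]
  · exact hc.trans measureReal_nonneg

lemma vol_near (c : ℝ) {η : ℝ} (hη : 0 ≤ η) :
    volume.real {y : unitInterval | |(y : ℝ) - c| ≤ η} ≤ 2 * η := by
  have : volume {y : unitInterval | |(y : ℝ) - c| ≤ η} ≤ ENNReal.ofReal (2 * η) := by
    rw [unitInterval.volume_apply]
    calc volume (Subtype.val '' {y : unitInterval | |(y : ℝ) - c| ≤ η})
        ≤ volume (Icc (c - η) (c + η)) := by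
          refine measure_mono ?_
          rintro _ ⟨y, hy, rfl⟩
          simp only [mem_ofPred_eq, abs_le] at hy
          exact ⟨by linarith, by linarith⟩
      _ = _ := by rw [Real.volume_Icc]; congr 1; ring
  exact ENNReal.toReal_le_of_le_ofReal (by positivity) this

lemma card_lt {M : ℕ} {σ : Fin (M + 1) → Fin (M + 1)} (hσ : Function.Injective σ) {j : ℕ}
    (hj : j ≤ M + 1) : (Finset.univ.filter fun i => (σ i : ℕ) < j).card = j := by
  classical
  have hb : Function.Bijective σ := Finite.injective_iff_bijective.1 hσ
  have h1 : (Finset.univ.filter fun i => (σ i : ℕ) < j).card =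
      (Finset.univ.filter fun i : Fin (M + 1) => (i : ℕ) < j).card := by
    refine Finset.card_bij (fun a _ => σ a) ?_ (fun a _ b _ h => hσ h) ?_
    · intro a ha; simpa using ha
    · intro b hb'
      obtain ⟨a, rfl⟩ := hb.2 b
      exact ⟨a, by simpa using hb', rfl⟩
  rw [h1, Fin.card_filter_val_lt]
  omega

/-- Approximation of `f` by maps in `C_λ` which nearly permute small intervals. -/
lemma exists_near_perm (f : CLam) {d : ℝ} (hd : 0 < d) {M : ℕ} (hMd : 1 / ((M : ℝ) + 1) ≤ d)
    (hu : ∀ x y, cl M x = cl M y → |((f.1 x : unitInterval) : ℝ) - (f.1 y : unitInterval)| < d)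
    {σ : Fin (M + 1) → Fin (M + 1)} (hσ : Function.Injective σ)
    (hσf : ∀ i, ∃ x, cl M x = i ∧ cl M (f.1 x) = σ i) {η : ℝ} (hη : 0 < η) :
    ∃ G : CLam, (∀ x, |((G.1 x : unitInterval) : ℝ) - (f.1 x : unitInterval)| ≤ 6 * d) ∧
      volume.real {x | cl M (G.1 x) ≠ σ (cl M x)} ≤ η + (M + 2) * (2 * η) := by
  have hN : (0 : ℝ) < (M : ℝ) + 1 := by positivity
  set p : unitInterval → ℝ := fun x => (((σ (cl M x) : ℕ) : ℝ) + 1 / 2) / ((M : ℝ) + 1) with hp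
  have hpi : Integrable p volume :=
    integrable_comp_fin (measurable_cl M) (fun a => (((σ a : ℕ) : ℝ) + 1 / 2) / ((M : ℝ) + 1))
  have hpf : ∀ x, |p x - (f.1 x : unitInterval)| ≤ 2 * d := by
    intro x
    obtain ⟨x0, h1, h2⟩ := hσf (cl M x)
    have h3 := hu x0 x h1
    have a := cl_le M (f.1 x0)
    have b := le_cl M (f.1 x0)
    rw [h2] at a b
    have h4 : |p x - (f.1 x0 : unitInterval)| ≤ d := by
      refine le_trans ?_ hMd
      have e : p x - (f.1 x0 : unitInterval) =
          ((((σ (cl M x) : ℕ) : ℝ) + 1 / 2) - ((M : ℝ) + 1) * (f.1 x0 : unitInterval)) / ((M : ℝ) + 1) := by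
        simp only [hp]; field_simp
      rw [e, abs_div, abs_of_pos hN]
      gcongr
      rw [abs_le]
      constructor <;> linarith
    have := abs_sub_le (p x) (f.1 x0 : unitInterval) (f.1 x : unitInterval)
    linarith
  set r : ℝ := 1 / (8 * ((M : ℝ) + 1)) with hr
  have hrpos : 0 < r := by positivity
  obtain ⟨g', hg', hB⟩ := exists_cont_approx hpi hrpos hη
  set B : Set unitInterval := {x | r ≤ |p x - g' x|} with hBdef
  set g0 : unitInterval → ℝ := fun x =>
    max ((f.1 x : unitInterval) - 2 * d) (min ((f.1 x : unitInterval) + 2 * d) (g' x)) with hg0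
  have hfc : Continuous fun x => ((f.1 x : unitInterval) : ℝ) :=
    continuous_subtype_val.comp f.1.continuous
  have hg0c : Continuous g0 :=
    (hfc.sub continuous_const).max ((hfc.add continuous_const).min hg')
  have hg0f : ∀ x, |g0 x - (f.1 x : unitInterval)| ≤ 2 * d := by
    intro x
    rw [abs_le]
    constructor
    · have := le_max_left ((f.1 x : unitInterval) - 2 * d)
        (min ((f.1 x : unitInterval) + 2 * d) (g' x))
      simp only [hg0]; linarith
    · have : g0 x ≤ (f.1 x : unitInterval) + 2 * d :=
        max_le (by linarith) (min_le_left _ _)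
      linarith
  have hg0p : ∀ x, |g0 x - p x| ≤ |p x - g' x| := by
    intro x
    have h1 := hpf x
    rw [abs_le] at h1
    rw [abs_sub_comm (p x)]
    simp only [hg0]
    generalize ((f.1 x : unitInterval) : ℝ) = F at h1
    generalize g' x = y
    generalize p x = P at h1
    rcases le_total y (F - 2 * d) with h | h
    · rw [min_eq_right (by linarith), max_eq_left h, abs_of_nonpos (by linarith),
        abs_of_nonpos (by linarith)]
      linarith
    · rcases le_total y (F + 2 * d) with h' | h'
      · rw [min_eq_right h', max_eq_right h]
      · rw [min_eq_left h', max_eq_right (by linarith), abs_of_nonneg (by linarith),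
          abs_of_nonneg (by linarith)]
        linarith
  obtain ⟨t, ht0, ht1, hat⟩ := exists_atomless hg0c (t0 := min d r) (by positivity)
  have htd : t < d := ht1.trans_le (min_le_left _ _)
  have htr : t < r := ht1.trans_le (min_le_right _ _)
  set g1 : unitInterval → ℝ := fun x => g0 x + t * x with hg1
  have hg1c : Continuous g1 := by fun_prop
  have htx : ∀ x : unitInterval, 0 ≤ t * x ∧ t * x ≤ t := fun x =>
    ⟨mul_nonneg ht0.le x.2.1, mul_le_of_le_one_right ht0.le x.2.2⟩
  have hg1f : ∀ x, |g1 x - (f.1 x : unitInterval)| ≤ 3 * d := by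
    intro x
    have h1 := hg0f x
    obtain ⟨h2, h3⟩ := htx x
    rw [abs_le] at h1 ⊢
    simp only [hg1]
    constructor <;> linarith
  have hg1p : ∀ x, x ∉ B → |g1 x - p x| < 2 * r := by
    intro x hx
    have h0 : |p x - g' x| < r := by
      simpa only [hBdef, mem_ofPred_eq, not_le] using hx
    have h1 := (hg0p x).trans_lt h0
    obtain ⟨h2, h3⟩ := htx x
    rw [abs_lt] at h1 ⊢
    simp only [hg1]
    constructor <;> linarith
  obtain ⟨G, hG⟩ := exists_transform hg1c hat
  refine ⟨G, ?_, ?_⟩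
  · intro x
    rw [hG x, abs_le]
    have hx := hg1f x
    rw [abs_le] at hx
    have hf0 : (0 : ℝ) ≤ (f.1 x : unitInterval) := (f.1 x).2.1
    have hf1 : ((f.1 x : unitInterval) : ℝ) ≤ 1 := (f.1 x).2.2
    constructor
    · have h1 := le_vol_of_mp f.2 (c := (f.1 x : unitInterval) - 6 * d) (by linarith)
      have h2 : {y | ((f.1 y : unitInterval) : ℝ) ≤ (f.1 x : unitInterval) - 6 * d} ⊆
          {y | g1 y ≤ g1 x} := by
        intro y hy
        have := hg1f y
        rw [abs_le] at this
        simp only [mem_ofPred_eq] at hy ⊢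
        linarith
      have h3 := measureReal_mono (μ := volume) h2
      linarith
    · have h1 := vol_le_of_mp f.2 (c := (f.1 x : unitInterval) + 6 * d) (by linarith)
      have h2 : {y | g1 y ≤ g1 x} ⊆
          {y | ((f.1 y : unitInterval) : ℝ) ≤ (f.1 x : unitInterval) + 6 * d} := by
        intro y hy
        have := hg1f y
        rw [abs_le] at this
        simp only [mem_ofPred_eq] at hy ⊢
        linarith
      have h3 := measureReal_mono (μ := volume) h2
      linarith
  · -- values of `p` scaled by `M + 1`
    have hscale : ∀ x, x ∉ B → ((σ (cl M x) : ℕ) : ℝ) + 1 / 4 < ((M : ℝ) + 1) * g1 x ∧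
        ((M : ℝ) + 1) * g1 x < ((σ (cl M x) : ℕ) : ℝ) + 3 / 4 := by
      intro x hx
      have h := hg1p x hx
      rw [abs_lt] at h
      have e1 : ((M : ℝ) + 1) * p x = ((σ (cl M x) : ℕ) : ℝ) + 1 / 2 := by
        simp only [hp]; field_simp
      have e2 : ((M : ℝ) + 1) * (2 * r) = 1 / 4 := by
        simp only [hr]; field_simp; norm_num
      constructor <;> nlinarith
    have hcount : ∀ j : ℕ, j ≤ M + 1 →
        volume.real {y | (σ (cl M y) : ℕ) < j} = j / ((M : ℝ) + 1) := by
      intro j hj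
      have := volume_cl_mem M (Finset.univ.filter fun i => (σ i : ℕ) < j)
      rw [card_lt hσ hj] at this
      simpa using this
    have hlow : ∀ x, x ∉ B → ((σ (cl M x) : ℕ) : ℝ) / ((M : ℝ) + 1) - η ≤ (G.1 x : unitInterval) := by
      intro x hx
      rw [hG x, ← hcount _ (σ (cl M x)).2.le]
      have hsub : {y | (σ (cl M y) : ℕ) < (σ (cl M x) : ℕ)} ⊆ {y | g1 y ≤ g1 x} ∪ B := by
        intro y hy
        by_cases hyB : y ∈ B
        · exact Or.inr hyB
        · left
          simp only [mem_ofPred_eq] at hy ⊢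
          have hy' : ((σ (cl M y) : ℕ) : ℝ) + 1 ≤ ((σ (cl M x) : ℕ) : ℝ) := by exact_mod_cast hy
          have h1 := (hscale x hx).1
          have h2 := (hscale y hyB).2
          have : ((M : ℝ) + 1) * g1 y ≤ ((M : ℝ) + 1) * g1 x := by linarith
          exact le_of_mul_le_mul_left this hN
      have h1 := measureReal_mono (μ := volume) hsub
      have h2 := measureReal_union_le (μ := volume) {y | g1 y ≤ g1 x} B
      linarith
    have hupp : ∀ x, x ∉ B →
        ((G.1 x : unitInterval) : ℝ) ≤ (((σ (cl M x) : ℕ) : ℝ) + 1) / ((M : ℝ) + 1) + η := by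
      intro x hx
      have hc := hcount ((σ (cl M x) : ℕ) + 1) (σ (cl M x)).2
      push_cast at hc
      rw [hG x, ← hc]
      have hsub : {y | g1 y ≤ g1 x} ⊆ {y | (σ (cl M y) : ℕ) < (σ (cl M x) : ℕ) + 1} ∪ B := by
        intro y hy
        by_cases hyB : y ∈ B
        · exact Or.inr hyB
        · left
          simp only [mem_ofPred_eq] at hy ⊢
          have h1 := (hscale x hx).2
          have h2 := (hscale y hyB).1
          have h3 : ((M : ℝ) + 1) * g1 y ≤ ((M : ℝ) + 1) * g1 x := by gcongr
          have h4 : ((σ (cl M y) : ℕ) : ℝ) < (((σ (cl M x) : ℕ) + 1 : ℕ) : ℝ) := by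
            push_cast; linarith
          exact_mod_cast h4
      have h1 := measureReal_mono (μ := volume) hsub
      have h2 := measureReal_union_le (μ := volume) {y | (σ (cl M y) : ℕ) < (σ (cl M x) : ℕ) + 1} B
      linarith
    set D : Fin (M + 2) → Set unitInterval := fun j =>
      {y : unitInterval | |(y : ℝ) - (j : ℕ) / ((M : ℝ) + 1)| ≤ η} with hD
    have hDm : ∀ j, MeasurableSet (D j) := fun j =>
      (isClosed_le (by fun_prop) continuous_const).measurableSet
    have hsub : {x | cl M (G.1 x) ≠ σ (cl M x)} ⊆ B ∪ ⋃ j, G.1 ⁻¹' D j := by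
      intro x hx
      by_cases hxB : x ∈ B
      · exact Or.inl hxB
      right
      simp only [mem_ofPred_eq] at hx
      have h1 := hlow x hxB
      have h2 := hupp x hxB
      rw [mem_iUnion]
      by_cases h3 : ((σ (cl M x) : ℕ) : ℝ) < ((M : ℝ) + 1) * (G.1 x : unitInterval)
      · by_cases h4 : ((M : ℝ) + 1) * (G.1 x : unitInterval) < ((σ (cl M x) : ℕ) : ℝ) + 1
        · exact absurd (cl_eq_of h3 h4) hx
        · refine ⟨⟨(σ (cl M x) : ℕ) + 1, by omega⟩, ?_⟩
          rw [not_lt, ← div_le_iff₀' hN] at h4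
          simp only [hD, mem_preimage, mem_ofPred_eq]
          push_cast
          rw [abs_le]
          constructor <;> linarith
      · refine ⟨⟨(σ (cl M x) : ℕ), by omega⟩, ?_⟩
        rw [not_lt, ← le_div_iff₀' hN] at h3
        simp only [hD, mem_preimage, mem_ofPred_eq]
        rw [abs_le]
        constructor <;> linarith
    calc volume.real {x | cl M (G.1 x) ≠ σ (cl M x)} ≤ volume.real (B ∪ ⋃ j, G.1 ⁻¹' D j) :=
          measureReal_mono hsub
      _ ≤ volume.real B + volume.real (⋃ j, G.1 ⁻¹' D j) := measureReal_union_le _ _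
      _ ≤ η + ∑ j, volume.real (G.1 ⁻¹' D j) := add_le_add hB (measureReal_iUnion_fintype_le _)
      _ ≤ η + ∑ j : Fin (M + 2), 2 * η := by
          gcongr with j
          rw [Measure.real, G.2.measure_preimage (hDm j).nullMeasurableSet]
          exact vol_near _ hη.le
      _ = η + (M + 2) * (2 * η) := by simp

lemma dense_UU (i) : Dense (UU i) := by
  classical
  obtain ⟨⟨k, M0, φ⟩, m⟩ := i
  rw [Metric.dense_iff]
  intro f δ hδ
  set ε : ℝ := 1 / ((m : ℝ) + 1) with hε
  have hεpos : 0 < ε := by positivity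
  have hk : 0 < k := (φ 0).pos
  have hk1 : (1 : ℝ) ≤ k := by exact_mod_cast hk
  set d : ℝ := δ / 10 with hd
  have hdpos : 0 < d := by positivity
  have hfc : Continuous fun x => ((f.1 x : unitInterval) : ℝ) :=
    continuous_subtype_val.comp f.1.continuous
  obtain ⟨M1, hM1⟩ := exists_unif hfc hdpos
  obtain ⟨M2, hM2⟩ := exists_nat_one_div_lt hdpos
  set L := M1 + M2 with hL
  obtain ⟨Φ, hΦ⟩ := cl_factor M0 L
  have hMge : L ≤ (M0 + 1) * (L + 1) - 1 := by
    have : L + 1 ≤ (M0 + 1) * (L + 1) := Nat.le_mul_of_pos_left _ (by omega)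
    omega
  generalize (M0 + 1) * (L + 1) - 1 = M at Φ hΦ hMge
  obtain ⟨σ, hσ, hσf⟩ := exists_matching f.2 M
  obtain ⟨n, hn⟩ := exists_nat_gt (Real.log (2 * (M + 1 : ℕ)) / (ε / 2))
  rw [div_lt_iff₀ (by positivity)] at hn
  set C : ℝ := Real.log (2 * Fintype.card (Fin (n + 1) → Fin k)) with hC
  have hCpos : 0 < C := by
    apply Real.log_pos
    have : 0 < Fintype.card (Fin (n + 1) → Fin k) := by
      rw [Fintype.card_fun, Fintype.card_fin, Fintype.card_fin]; positivity
    have : (1 : ℝ) ≤ Fintype.card (Fin (n + 1) → Fin k) := by exact_mod_cast this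
    linarith
  set β : ℝ := ε / 2 / C with hβ
  have hβpos : 0 < β := by positivity
  obtain ⟨G, hGf, hGb⟩ := exists_near_perm f hdpos (M := M) (by
      refine le_trans ?_ hM2.le
      have : (M2 : ℝ) ≤ M := by exact_mod_cast (by omega : M2 ≤ M)
      gcongr) (hM1 M (by omega)) hσ hσf (η := β / (2 * M + 5)) (by positivity)
  have hGb' : volume.real {x | cl M (G.1 x) ≠ σ (cl M x)} ≤ β := by
    refine hGb.trans (le_of_eq ?_)
    field_simp
    ring
  refine ⟨G, ?_, mem_iUnion.2 ⟨n, ?_⟩⟩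
  · rw [Metric.mem_ball, Subtype.dist_eq]
    refine lt_of_le_of_lt ((ContinuousMap.dist_le (C := 6 * d) (by positivity)).2 fun x => ?_) ?_
    · rw [Subtype.dist_eq, Real.dist_eq]
      exact hGf x
    · rw [hd]; linarith
  · simp only [mem_ofPred_eq]
    set Bad : Set unitInterval := {x | cl M (G.1 x) ≠ σ (cl M x)} with hBad
    have hBadm : MeasurableSet Bad :=
      (measurableSet_eq_fun ((measurable_cl M).comp G.2.measurable)
        (Measurable.of_discrete.comp (measurable_cl M))).compl
    set S : Finset (Fin (n + 1) → Fin k) :=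
      Finset.univ.image fun (a : Fin (M + 1)) (i : Fin (n + 1)) => φ (Φ (σ^[(i : ℕ)] a)) with hS
    have hScard : S.card ≤ M + 1 := by
      refine Finset.card_image_le.trans ?_
      simp
    have hY : Measurable (fun x => φ (cl M0 x)) := Measurable.of_discrete.comp (measurable_cl M0)
    have hsub : {x | nameOf G.1 (fun x => φ (cl M0 x)) (n + 1) x ∉ S} ⊆
        ⋃ i : Fin (n + 1), (G.1 : unitInterval → unitInterval)^[(i : ℕ)] ⁻¹' Bad := by
      intro x hx
      by_contra hcon
      simp only [mem_iUnion, mem_preimage, hBad, mem_ofPred_eq, not_exists, not_not] at hcon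
      apply hx
      rw [hS, Finset.mem_image]
      refine ⟨cl M x, Finset.mem_univ _, ?_⟩
      have hit : ∀ i : ℕ, i ≤ n + 1 →
          cl M ((G.1 : unitInterval → unitInterval)^[i] x) = σ^[i] (cl M x) := by
        intro i
        induction i with
        | zero => intro _; rfl
        | succ i ih =>
          intro hi
          rw [Function.iterate_succ_apply', Function.iterate_succ_apply', ← ih (by omega)]
          exact hcon ⟨i, by omega⟩
      funext i
      simp only [nameOf]
      rw [hΦ, hit i (by omega)]
    have hmeas : volume.real {x | nameOf G.1 (fun x => φ (cl M0 x)) (n + 1) x ∉ S} ≤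
        ((n + 1 : ℕ) : ℝ) * β := by
      calc _ ≤ volume.real (⋃ i : Fin (n + 1), (G.1 : unitInterval → unitInterval)^[(i : ℕ)] ⁻¹' Bad) :=
            measureReal_mono hsub
        _ ≤ ∑ i : Fin (n + 1), volume.real ((G.1 : unitInterval → unitInterval)^[(i : ℕ)] ⁻¹' Bad) :=
            measureReal_iUnion_fintype_le _
        _ ≤ ∑ i : Fin (n + 1), β := by
            gcongr with i
            rw [Measure.real, (G.2.iterate i).measure_preimage hBadm.nullMeasurableSet]
            exact hGb'
        _ = _ := by simp
    have : Nonempty (Fin k) := ⟨φ 0⟩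
    have hfin := HH_le_of_concentrated (measurable_nameOf G.2.measurable hY (n + 1)) S
      (N := M + 1) (by omega) hScard hmeas
    refine lt_of_le_of_lt hfin ?_
    rw [← hC, mul_assoc, hβ, div_mul_cancel₀ _ hCpos.ne']
    push_cast at hn ⊢
    nlinarith

/-- The set of maps in `C_λ` with zero measure-theoretic entropy with respect to
Lebesgue measure is a dense `G_δ` subset of `C_λ` in the uniform topology. -/
theorem stmt0 :
    IsGδ {f : CLam | hLam ⇑f.1 = 0} ∧ Dense {f : CLam | hLam ⇑f.1 = 0} := by
  have := baire_CLam
  rw [zero_set_eq]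
  exact ⟨IsGδ.iInter_of_isOpen isOpen_UU, dense_iInter_of_isOpen isOpen_UU dense_UU⟩

end
end

section
/- The set of piecewise affine maps in C_λ all of whose determining values are rational is dense in C_λ with respect to the uniform metric. -/
open MeasureTheory Set
open scoped ENNReal

noncomputable section

/-- The extension of `f : [0,1] → [0,1]` to a real function (constant outside `[0,1]`),
used to speak about (one-sided) differentiability of `f` within `[0,1]`. -/
def extMap (f : C(unitInterval, unitInterval)) : ℝ → ℝ :=
  fun x => (f (Set.projIcc 0 1 zero_le_one x) : ℝ)

/-- `f` is piecewise affine: there are `0 = t₀ < t₁ < ⋯ < t_m = 1` such that `f` is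
affine on each `[t_j, t_{j+1}]`. -/
def PiecewiseAffineMap (f : C(unitInterval, unitInterval)) : Prop :=
  ∃ (m : ℕ) (t : Fin (m + 1) → unitInterval), StrictMono t ∧
    t 0 = 0 ∧ t (Fin.last m) = 1 ∧
    ∀ j : Fin m, ∃ c d : ℝ, ∀ x : unitInterval,
      t j.castSucc ≤ x → x ≤ t j.succ → (f x : ℝ) = c * (x : ℝ) + d

/-- `c` is a determining value of `f`: either a critical value (the value at a local
maximum or local minimum) or the value of `f` at a point where the derivative of `f`
(within `[0,1]`) does not exist. -/
def IsDeterminingValue (f : C(unitInterval, unitInterval)) (c : ℝ) : Prop :=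
  ∃ x : unitInterval, (f x : ℝ) = c ∧
    (IsLocalMax f x ∨ IsLocalMin f x ∨
      ¬ DifferentiableWithinAt ℝ (extMap f) (Set.Icc 0 1) (x : ℝ))


/-- total time -/
def tot (N : ℕ) (d : ℕ → ℝ) : ℝ := ∑ k ∈ Finset.range N, d k

/-- open level interval -/
def Jo (N k : ℕ) : Set ℝ := Ioo ((k : ℝ) / N) (((k : ℝ) + 1) / N)

/-- timed walks on the path graph `0 - 1 - ... - N` -/
inductive TW (N : ℕ) (v : ℕ) : ℕ → (ℕ → ℝ) → Prop
  | nil : TW N v v 0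
  | up {w : ℕ} {d : ℕ → ℝ} {e : ℝ} : TW N v w d → w < N → 0 < e → TW N v (w + 1) (d + Pi.single w e)
  | down {w : ℕ} {d : ℕ → ℝ} {e : ℝ} : TW N v (w + 1) d → w < N → 0 < e → TW N v w (d + Pi.single w e)

theorem TW.trans {N u v w : ℕ} {d d' : ℕ → ℝ} (h : TW N u v d) (h' : TW N v w d') :
    TW N u w (d + d') := by
  induction h' with
  | nil => simpa using h
  | up _ h1 h2 ih => rw [← add_assoc]; exact ih.up h1 h2
  | down _ h1 h2 ih => rw [← add_assoc]; exact ih.down h1 h2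

theorem TW.nonneg {N v w : ℕ} {d : ℕ → ℝ} (h : TW N v w d) : ∀ k, 0 ≤ d k := by
  induction h with
  | nil => intro k; simp
  | @up w d e _ h1 h2 ih =>
    intro k
    have : 0 ≤ (Pi.single w e : ℕ → ℝ) k := by
      by_cases hk : k = w
      · subst hk; simpa using h2.le
      · simp [hk]
    exact add_nonneg (ih k) this
  | @down w d e _ h1 h2 ih =>
    intro k
    have : 0 ≤ (Pi.single w e : ℕ → ℝ) k := by
      by_cases hk : k = w
      · subst hk; simpa using h2.le
      · simp [hk]
    exact add_nonneg (ih k) this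

theorem TW.monoUp {N p : ℕ} (n : ℕ) (d : ℕ → ℝ) (hN : p + n ≤ N)
    (hpos : ∀ k, p ≤ k → k < p + n → 0 < d k) :
    TW N p (p + n) (fun k => if p ≤ k ∧ k < p + n then d k else 0) := by
  induction n with
  | zero =>
    have : (fun k => if p ≤ k ∧ k < p + 0 then d k else 0) = (0 : ℕ → ℝ) := by
      funext k; rw [if_neg (by omega)]; rfl
    rw [this]; exact TW.nil
  | succ n ih =>
    have h1 := (ih (by omega) (fun k h h' => hpos k h (by omega))).up (w := p + n) (e := d (p + n))
      (by omega) (hpos _ (by omega) (by omega))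
    show TW N p (p + n + 1) _
    convert h1 using 1
    funext k
    by_cases hk : k = p + n
    · subst hk; simp
    · simp only [Pi.add_apply, Pi.single_apply, hk, if_false, add_zero]
      congr 1
      apply propext; omega

theorem TW.monoDown {N p : ℕ} (n : ℕ) (d : ℕ → ℝ) (hN : p + n ≤ N)
    (hpos : ∀ k, p ≤ k → k < p + n → 0 < d k) :
    TW N (p + n) p (fun k => if p ≤ k ∧ k < p + n then d k else 0) := by
  induction n with
  | zero =>
    have : (fun k => if p ≤ k ∧ k < p + 0 then d k else 0) = (0 : ℕ → ℝ) := by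
      funext k; rw [if_neg (by omega)]; rfl
    rw [this]; exact TW.nil
  | succ n ih =>
    have h0 : TW N (p + n + 1) (p + n) (0 + Pi.single (p+n) (d (p+n))) :=
      TW.nil.down (by omega) (hpos _ (by omega) (by omega))
    have h1 := h0.trans (ih (by omega) (fun k h h' => hpos k h (by omega)))
    show TW N (p + n + 1) p _
    convert h1 using 1
    funext k
    by_cases hk : k = p + n
    · subst hk; simp
    · simp only [Pi.add_apply, Pi.single_apply, hk, if_false, add_zero, zero_add, Pi.zero_apply]
      congr 1
      apply propext; omega

theorem TW.exists {N p q v w : ℕ} (d : ℕ → ℝ) (hq : q ≤ N) (hpv : p ≤ v) (hvq : v ≤ q)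
    (hpw : p ≤ w) (hwq : w ≤ q) (hpos : ∀ k, p ≤ k → k < q → 0 < d k)
    (hz : ∀ k, ¬ (p ≤ k ∧ k < q) → d k = 0) : TW N v w d := by
  obtain ⟨n1, rfl⟩ := Nat.exists_eq_add_of_le hpv
  obtain ⟨n3, rfl⟩ := Nat.exists_eq_add_of_le hwq
  have hpq : p ≤ w + n3 := by omega
  obtain ⟨n2, hn2⟩ := Nat.exists_eq_add_of_le hpq
  have h1 := TW.monoDown (N := N) (p := p) n1 (fun k => d k / 3) (by omega)
    (fun k h h' => by have := hpos k h (by omega); positivity)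
  have h3 := TW.monoDown (N := N) (p := w) n3 (fun k => d k / 3) (by omega)
    (fun k h h' => by have := hpos k (by omega) (by omega); positivity)
  have h2 := TW.monoUp (N := N) (p := p) n2 (fun k => d k
      - (if p ≤ k ∧ k < p + n1 then d k / 3 else 0) - (if w ≤ k ∧ k < w + n3 then d k / 3 else 0))
    (by omega)
    (fun k h h' => by
      have := hpos k (by omega) (by omega)
      show 0 < _
      split_ifs <;> linarith)
  rw [← hn2] at h2
  have := (h1.trans h2).trans h3
  convert this using 1
  funext k
  simp only [Pi.add_apply]
  by_cases hk : p ≤ k ∧ k < w + n3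
  · simp only [hk, and_self, if_true]; ring
  · rw [hz k hk, if_neg hk]; simp

/-- piecewise affine with breakpoints mapped to the grid -/
inductive PA (N : ℕ) (h : ℝ → ℝ) (a : ℝ) : ℝ → Prop
  | nil : PA N h a a
  | snoc {b c α β : ℝ} {u : ℕ} : PA N h a b → b < c → α ≠ 0 → h c = u / N →
      (∀ x ∈ Icc b c, h x = α * x + β) → PA N h a c

theorem PA.le {N : ℕ} {h : ℝ → ℝ} {a b : ℝ} (H : PA N h a b) : a ≤ b := by
  induction H with
  | nil => exact le_rfl
  | snoc _ h1 _ _ _ ih => linarith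

theorem PA.trans {N : ℕ} {h : ℝ → ℝ} {a b c : ℝ} (H : PA N h a b) (H' : PA N h b c) :
    PA N h a c := by
  induction H' with
  | nil => exact H
  | snoc _ h1 h2 h3 h4 ih => exact ih.snoc h1 h2 h3 h4

theorem PA.congr {N : ℕ} {h h' : ℝ → ℝ} {a b : ℝ} (H : PA N h a b)
    (e : ∀ x ∈ Icc a b, h x = h' x) : PA N h' a b := by
  induction H with
  | nil => exact PA.nil
  | @snoc b c α β u H0 h1 h2 h3 h4 ih =>
    have := H0.le
    refine (ih (fun x hx => e x ⟨hx.1, by linarith [hx.2]⟩)).snoc h1 h2 (u := u) (β := β) ?_ ?_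
    · rw [← e c ⟨by linarith, le_rfl⟩, h3]
    · intro x hx; rw [← e x ⟨by linarith [hx.1], hx.2⟩, h4 x hx]

theorem PA.interior {N : ℕ} {h : ℝ → ℝ} {a b : ℝ} (H : PA N h a b) :
    ∀ x ∈ Ioc a b, (∃ u : ℕ, h x = u / N) ∨ ∃ c d α β : ℝ, α ≠ 0 ∧ a ≤ c ∧ c < x ∧ x < d ∧ d ≤ b ∧
      ∀ y ∈ Icc c d, h y = α * y + β := by
  induction H with
  | nil => intro x hx; simp at hx
  | @snoc b c α β u H0 h1 h2 h3 h4 ih =>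
    intro x hx
    by_cases hb : x ≤ b
    · rcases ih x ⟨hx.1, hb⟩ with h | ⟨c', d, α', β', k1, k2, k3, k4, k5, k6⟩
      · exact Or.inl h
      · exact Or.inr ⟨c', d, α', β', k1, k2, k3, k4, by linarith, k6⟩
    · push Not at hb
      rcases hx.2.eq_or_lt with h | h
      · subst h; exact Or.inl ⟨u, h3⟩
      · exact Or.inr ⟨b, c, α, β, h2, H0.le, hb, h, le_rfl, h4⟩

theorem PA.partition {N : ℕ} {h : ℝ → ℝ} {a b : ℝ} (H : PA N h a b) :
    ∃ (m : ℕ) (t : Fin (m + 1) → ℝ), StrictMono t ∧ t 0 = a ∧ t (Fin.last m) = b ∧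
      ∀ j : Fin m, ∃ c d : ℝ, ∀ x, t j.castSucc ≤ x → x ≤ t j.succ → h x = c * x + d := by
  induction H with
  | nil => exact ⟨0, fun _ => a, fun i j hij => by omega, rfl, rfl, fun j => j.elim0⟩
  | @snoc b c α β u H0 h1 h2 h3 h4 ih =>
    obtain ⟨m, t, ht, t0, t1, tj⟩ := ih
    refine ⟨m + 1, Fin.snoc t c, ?_, ?_, ?_, ?_⟩
    · rw [Fin.strictMono_iff_lt_succ]
      intro i
      induction i using Fin.lastCases with
      | last => simp [t1, h1]
      | cast i =>
        rw [Fin.succ_castSucc, Fin.snoc_castSucc, Fin.snoc_castSucc]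
        exact ht (Fin.castSucc_lt_succ)
    · rw [← Fin.castSucc_zero, Fin.snoc_castSucc, t0]
    · simp
    · intro i
      induction i using Fin.lastCases with
      | last =>
        refine ⟨α, β, fun x hx hx' => h4 x ⟨?_, ?_⟩⟩
        · simpa [t1] using hx
        · simpa using hx'
      | cast i =>
        rw [Fin.succ_castSucc, Fin.snoc_castSucc, Fin.snoc_castSucc]
        exact tj i

/-- realization of a timed walk on `[a,b]` -/
structure Rz (N : ℕ) (a b : ℝ) (v w : ℕ) (d : ℕ → ℝ) (h : ℝ → ℝ) : Prop where
  cont : Continuous h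
  left : h a = v / N
  right : h b = w / N
  le : a ≤ b
  pa : PA N h a b
  nn : ∀ k, 0 ≤ d k
  meas : (volume.restrict (Ioc a b)).map h =
    ∑ k ∈ Finset.range N, ENNReal.ofReal (N * d k) • volume.restrict (Jo N k)

/-- gluing -/
def glue (b : ℝ) (h h' : ℝ → ℝ) : ℝ → ℝ := fun x => if x ≤ b then h x else h' x

theorem glue_left {b : ℝ} {h h' : ℝ → ℝ} {x : ℝ} (hx : x ≤ b) : glue b h h' x = h x := if_pos hx

theorem glue_right {b : ℝ} {h h' : ℝ → ℝ} (e : h b = h' b) {x : ℝ} (hx : b ≤ x) :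
    glue b h h' x = h' x := by
  rcases hx.eq_or_lt with rfl | hx
  · rw [glue_left le_rfl, e]
  · exact if_neg (not_le.2 hx)

theorem Rz.glue {N : ℕ} {a b c : ℝ} {u v w : ℕ} {d d' : ℕ → ℝ} {h h' : ℝ → ℝ}
    (H : Rz N a b u v d h) (H' : Rz N b c v w d' h') : Rz N a c u w (d + d') (glue b h h') := by
  have e : h b = h' b := by rw [H.right, H'.left]
  have hc : Continuous (_root_.glue b h h') := by
    apply Continuous.if_le H.cont H'.cont continuous_id continuous_const
    rintro x rfl; exact e
  refine ⟨hc, ?_, ?_, H.le.trans H'.le, ?_, fun k => add_nonneg (H.nn k) (H'.nn k), ?_⟩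
  · rw [glue_left H.le, H.left]
  · rw [glue_right e H'.le, H'.right]
  · exact (H.pa.congr fun x hx => (glue_left hx.2).symm).trans
      (H'.pa.congr fun x hx => (glue_right e hx.1).symm)
  · rw [← Ioc_union_Ioc_eq_Ioc H.le H'.le,
      Measure.restrict_union (Ioc_disjoint_Ioc_of_le le_rfl) measurableSet_Ioc,
      Measure.map_add _ _ hc.measurable]
    have e1 : (volume.restrict (Ioc a b)).map (_root_.glue b h h') = (volume.restrict (Ioc a b)).map h := by
      apply Measure.map_congr
      filter_upwards [ae_restrict_mem measurableSet_Ioc] with x hx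
      exact glue_left hx.2
    have e2 : (volume.restrict (Ioc b c)).map (_root_.glue b h h') = (volume.restrict (Ioc b c)).map h' := by
      apply Measure.map_congr
      filter_upwards [ae_restrict_mem measurableSet_Ioc] with x hx
      exact glue_right e hx.1.le
    rw [e1, e2, H.meas, H'.meas, ← Finset.sum_add_distrib]
    refine Finset.sum_congr rfl fun k _ => ?_
    rw [← add_smul, Pi.add_apply, mul_add, ENNReal.ofReal_add]
    · exact mul_nonneg (Nat.cast_nonneg _) (H.nn k)
    · exact mul_nonneg (Nat.cast_nonneg _) (H'.nn k)

theorem Rz.nil (N : ℕ) (a : ℝ) (v : ℕ) : Rz N a a v v 0 (fun _ => v / N) :=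
  ⟨continuous_const, rfl, rfl, le_rfl, PA.nil, fun _ => le_rfl, by simp⟩

theorem map_affine {α β : ℝ} (hα : α ≠ 0) :
    (volume : Measure ℝ).map (fun x => α * x + β) = ENNReal.ofReal |α⁻¹| • volume := by
  have : (fun x : ℝ => α * x + β) = (fun x => x + β) ∘ (fun x => α * x) := rfl
  rw [this, ← Measure.map_map (by fun_prop) (by fun_prop), Real.map_volume_mul_left hα,
    Measure.map_smul, map_add_right_eq_self]

theorem single_sum (N w : ℕ) (hw : w < N) (e : ℝ) :
    ∑ k ∈ Finset.range N, ENNReal.ofReal (N * (Pi.single w e : ℕ → ℝ) k) • (volume : Measure ℝ).restrict (Jo N k)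
      = ENNReal.ofReal (N * e) • volume.restrict (Jo N w) := by
  rw [Finset.sum_eq_single w]
  · simp
  · intro b _ hb; simp [hb]
  · intro h; exact absurd (Finset.mem_range.2 hw) h

theorem single_nn {w : ℕ} {e : ℝ} (he : 0 < e) (k : ℕ) : 0 ≤ (Pi.single w e : ℕ → ℝ) k := by
  by_cases hk : k = w
  · subst hk; simpa using he.le
  · simp [hk]

theorem map_base {N w : ℕ} (hw : w < N) {a e α β : ℝ} (he : 0 < e) (hα : |α| = 1 / (N * e))
    (hpre : (fun x => α * x + β) ⁻¹' (Jo N w) = Ioo a (a + e)) :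
    (volume.restrict (Ioc a (a + e))).map (fun x => α * x + β) =
    ∑ k ∈ Finset.range N, ENNReal.ofReal (N * (Pi.single w e : ℕ → ℝ) k) • volume.restrict (Jo N k) := by
  have hN : (0:ℝ) < N := by exact_mod_cast (by omega : 0 < N)
  have h0 : α ≠ 0 := by
    rw [← abs_pos, hα]; positivity
  rw [single_sum N w hw, ← Measure.restrict_congr_set Ioo_ae_eq_Ioc, ← hpre,
    ← Measure.restrict_map (by fun_prop) (by unfold Jo; exact measurableSet_Ioo), map_affine h0, abs_inv, hα,
    Measure.restrict_smul]
  simp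

theorem Rz.up {N w : ℕ} (hw : w < N) (a : ℝ) {e : ℝ} (he : 0 < e) :
    ∃ h, Rz N a (a + e) w (w + 1) (Pi.single w e) h ∧
      ∀ x ∈ Icc a (a + e), (w : ℝ) / N ≤ h x ∧ h x ≤ ((w : ℝ) + 1) / N := by
  have hN : (0:ℝ) < N := by exact_mod_cast (by omega : 0 < N)
  have key : ∀ x, 1 / (N * e) * x + (w / N - a / (N * e)) = (w + (x - a) / e) / N := by
    intro x; field_simp; ring
  refine ⟨fun x => 1 / (N * e) * x + (w / N - a / (N * e)), ⟨by fun_prop, ?_, ?_, by linarith, ?_, single_nn he, ?_⟩, ?_⟩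
  · simp only [key]; simp
  · simp only [key]; field_simp; push_cast; ring
  · refine PA.nil.snoc (u := w + 1) (by linarith : a < a + e) (by positivity : 1 / (N * e) ≠ 0) ?_ (fun x _ => rfl)
    simp only [key]; field_simp; push_cast; ring
  · apply map_base hw he (abs_of_pos (by positivity))
    ext x
    simp only [mem_preimage, key, Jo, mem_Ioo, div_lt_div_iff_of_pos_right hN, lt_add_iff_pos_right,
      add_lt_add_iff_left]
    rw [div_lt_one he, div_pos_iff_of_pos_right he]
    constructor <;> rintro ⟨h1, h2⟩ <;> constructor <;> linarith
  · intro x hx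
    simp only [key, div_le_div_iff_of_pos_right hN]
    have h1 : 0 ≤ (x - a) / e := div_nonneg (by linarith [hx.1]) he.le
    have h2 : (x - a) / e ≤ 1 := (div_le_one he).2 (by linarith [hx.2])
    constructor <;> linarith

theorem Rz.down {N w : ℕ} (hw : w < N) (a : ℝ) {e : ℝ} (he : 0 < e) :
    ∃ h, Rz N a (a + e) (w + 1) w (Pi.single w e) h ∧
      ∀ x ∈ Icc a (a + e), (w : ℝ) / N ≤ h x ∧ h x ≤ ((w : ℝ) + 1) / N := by
  have hN : (0:ℝ) < N := by exact_mod_cast (by omega : 0 < N)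
  have key : ∀ x, (-(1 / (N * e))) * x + ((w + 1) / N + a / (N * e)) = (w + (1 - (x - a) / e)) / N := by
    intro x; field_simp; ring
  have hp : 0 < 1 / (N * e) := by positivity
  refine ⟨fun x => (-(1 / (N * e))) * x + ((w + 1) / N + a / (N * e)), ⟨by fun_prop, ?_, ?_, by linarith, ?_, single_nn he, ?_⟩, ?_⟩
  · simp only [key]; simp
  · simp only [key]; field_simp; ring
  · refine PA.nil.snoc (u := w) (by linarith : a < a + e) (by linarith : -(1 / (N * e)) < 0).ne ?_ (fun x _ => rfl)
    simp only [key]; field_simp; ring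
  · apply map_base hw he (by rw [abs_neg]; exact abs_of_pos hp)
    ext x
    simp only [mem_preimage, key, Jo, mem_Ioo, div_lt_div_iff_of_pos_right hN, lt_add_iff_pos_right,
      add_lt_add_iff_left]
    rw [sub_pos, div_lt_one he, sub_lt_self_iff, div_pos_iff_of_pos_right he]
    constructor <;> rintro ⟨h1, h2⟩ <;> constructor <;> linarith
  · intro x hx
    simp only [key, div_le_div_iff_of_pos_right hN]
    have h1 : 0 ≤ (x - a) / e := div_nonneg (by linarith [hx.1]) he.le
    have h2 : (x - a) / e ≤ 1 := (div_le_one he).2 (by linarith [hx.2])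
    constructor <;> linarith

theorem tot_add_single {N w : ℕ} (hw : w < N) (d : ℕ → ℝ) (e : ℝ) :
    tot N (d + Pi.single w e) = tot N d + e := by
  simp [tot, Finset.sum_add_distrib, Finset.sum_pi_single, hw]

/-- value control -/
def VC (N : ℕ) (a b : ℝ) (v : ℕ) (d : ℕ → ℝ) (h : ℝ → ℝ) : Prop :=
  ∀ x ∈ Icc a b, h x = v / N ∨ ∃ k, k < N ∧ 0 < d k ∧ (k : ℝ) / N ≤ h x ∧ h x ≤ ((k : ℝ) + 1) / N

theorem VC.glue {N : ℕ} {a b c e : ℝ} {v w : ℕ} {d : ℕ → ℝ} {h h' : ℝ → ℝ} (hw : w < N) (he : 0 < e)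
    (hd : ∀ k, 0 ≤ d k) (eq : h b = h' b)
    (H : VC N a b v d h) (H' : ∀ x ∈ Icc b c, (w : ℝ) / N ≤ h' x ∧ h' x ≤ ((w : ℝ) + 1) / N) :
    VC N a c v (d + Pi.single w e) (glue b h h') := by
  intro x hx
  rcases le_total x b with hb | hb
  · rw [glue_left hb]
    rcases H x ⟨hx.1, hb⟩ with h1 | ⟨k, h1, h2, h3⟩
    · exact Or.inl h1
    · exact Or.inr ⟨k, h1, add_pos_of_pos_of_nonneg h2 (single_nn he k), h3⟩
  · rw [glue_right eq hb]
    exact Or.inr ⟨w, hw, by simpa using add_pos_of_nonneg_of_pos (hd w) he, H' x ⟨hb, hx.2⟩⟩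

theorem TW.realize {N v w : ℕ} {d : ℕ → ℝ} (H : TW N v w d) (a : ℝ) :
    ∃ h, Rz N a (a + tot N d) v w d h ∧ VC N a (a + tot N d) v d h := by
  induction H with
  | nil =>
    refine ⟨_, by simpa [tot] using Rz.nil N a v, fun x _ => Or.inl rfl⟩
  | @up w d e H hw he ih =>
    obtain ⟨h, h1, h2⟩ := ih
    obtain ⟨h', h1', h2'⟩ := Rz.up hw (a + tot N d) he
    rw [tot_add_single hw, ← add_assoc]
    exact ⟨_, h1.glue h1', h2.glue hw he H.nonneg (by rw [h1.right, h1'.left]) h2'⟩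
  | @down w d e H hw he ih =>
    obtain ⟨h, h1, h2⟩ := ih
    obtain ⟨h', h1', h2'⟩ := Rz.down hw (a + tot N d) he
    rw [tot_add_single hw, ← add_assoc]
    exact ⟨_, h1.glue h1', h2.glue hw he H.nonneg (by rw [h1.right, h1'.left]) h2'⟩

theorem measurableSet_Jo (N k : ℕ) : MeasurableSet (Jo N k) := measurableSet_Ioo

theorem Jo_disj {N : ℕ} (hN : 0 < N) {j k : ℕ} (h : j < k) : Disjoint (Jo N j) (Jo N k) := by
  have hN' : (0:ℝ) < N := by exact_mod_cast hN
  rw [Set.disjoint_left]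
  rintro x ⟨_, h1⟩ ⟨h2, _⟩
  have h3 : (j : ℝ) + 1 ≤ k := by exact_mod_cast h
  have := (div_le_div_iff_of_pos_right hN').2 h3
  linarith

theorem cover {N : ℕ} (hN : 0 < N) (μ : Measure ℝ) (h01 : μ (Icc 0 1)ᶜ = 0) (hc : ∀ c, μ {c} = 0) :
    μ = ∑ k ∈ Finset.range N, μ.restrict (Jo N k) := by
  have hN' : (0:ℝ) < N := by exact_mod_cast hN
  have h1 : μ.restrict (⋃ k ∈ Finset.range N, Jo N k) = μ := by
    apply Measure.restrict_eq_self_of_ae_mem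
    have hg : μ (⋃ k ∈ Finset.range (N + 1), {(k : ℝ) / N}) = 0 := by
      refine (measure_biUnion_null_iff (Finset.countable_toSet (Finset.range (N + 1)))).2 ?_
      intro k _; exact hc _
    filter_upwards [compl_mem_ae_iff.2 h01, compl_mem_ae_iff.2 hg] with x hx hx'
    simp only [compl_compl] at hx
    simp only [mem_compl_iff, mem_iUnion, not_exists, mem_singleton_iff, Finset.mem_range] at hx'
    have hx0 : 0 ≤ N * x := mul_nonneg hN'.le hx.1
    have hfl := Nat.floor_le hx0
    have hfl' := Nat.lt_floor_add_one (N * x)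
    have hle : N * x ≤ N := by nlinarith [hx.2]
    have hk : ⌊N * x⌋₊ ≤ N := by
      have : (⌊N * x⌋₊ : ℝ) ≤ N := by linarith
      exact_mod_cast this
    have hne : (⌊N * x⌋₊ : ℝ) ≠ N * x := by
      intro h
      apply hx' _ (Nat.lt_succ_of_le hk)
      rw [h]; field_simp
    have hlt : (⌊N * x⌋₊ : ℝ) < N * x := lt_of_le_of_ne hfl hne
    have hk' : ⌊N * x⌋₊ < N := by
      have : (⌊N * x⌋₊ : ℝ) < N := by linarith
      exact_mod_cast this
    simp only [mem_iUnion]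
    refine ⟨⌊N * x⌋₊, Finset.mem_range.2 hk', ?_, ?_⟩
    · rw [div_lt_iff₀ hN']; linarith
    · rw [lt_div_iff₀ hN']; linarith
  conv_lhs => rw [← h1]
  have hd : Set.Pairwise (↑(Finset.range N)) (Function.onFun Disjoint (Jo N)) := by
    intro j _ k _ hjk
    rcases lt_or_gt_of_ne hjk with h | h
    · exact Jo_disj hN h
    · exact (Jo_disj hN h).symm
  ext s hs
  rw [Measure.restrict_apply hs, inter_iUnion₂, measure_biUnion_finset]
  · rw [Measure.finsetSum_apply]
    exact Finset.sum_congr rfl fun k _ => (Measure.restrict_apply hs).symm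
  · intro j hj k hk hjk
    exact (hd hj hk hjk).mono inter_subset_right inter_subset_right
  · intro k _; exact hs.inter (measurableSet_Jo N k)

/-- time spent in level k -/
def dur (N : ℕ) (F : ℝ → ℝ) (a b : ℝ) (k : ℕ) : ℝ := volume.real (Ioc a b ∩ F ⁻¹' Jo N k)

theorem dur_add {N : ℕ} {F : ℝ → ℝ} (hF : Continuous F) {a b c : ℝ} (hab : a ≤ b) (hbc : b ≤ c) :
    dur N F a b + dur N F b c = dur N F a c := by
  funext k
  simp only [dur, Pi.add_apply]
  rw [← Ioc_union_Ioc_eq_Ioc hab hbc, union_inter_distrib_right,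
    measureReal_union ?_ ?_ (measure_ne_top_of_subset inter_subset_left (by simp))
      (measure_ne_top_of_subset inter_subset_left (by simp))]
  · exact (Ioc_disjoint_Ioc_of_le le_rfl).mono inter_subset_left inter_subset_left
  · exact measurableSet_Ioc.inter (hF.measurable (measurableSet_Jo N k))

theorem tot_dur {N : ℕ} (hN : 0 < N) {F : ℝ → ℝ} (hF : Continuous F) (h01 : ∀ x, F x ∈ Icc (0:ℝ) 1)
    {a b : ℝ} (hab : a ≤ b) (hnull : ∀ c, volume (Ioc a b ∩ F ⁻¹' {c}) = 0) :
    tot N (dur N F a b) = b - a := by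
  have hm := hF.measurable
  have := cover hN ((volume.restrict (Ioc a b)).map F) ?_ ?_
  · have h2 := congrArg (fun μ : Measure ℝ => μ univ) this
    simp only [Measure.finsetSum_apply] at h2
    rw [Measure.map_apply hm MeasurableSet.univ, preimage_univ, Measure.restrict_apply_univ, Real.volume_Ioc] at h2
    unfold tot dur
    have h3 : ∀ k ∈ Finset.range N, (((volume.restrict (Ioc a b)).map F).restrict (Jo N k)) univ
        = ENNReal.ofReal (volume.real (Ioc a b ∩ F ⁻¹' Jo N k)) := by
      intro k _
      rw [Measure.restrict_apply_univ, Measure.map_apply hm (measurableSet_Jo N k),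
        Measure.restrict_apply (hm (measurableSet_Jo N k)), inter_comm, Measure.real,
        ENNReal.ofReal_toReal]
      exact measure_ne_top_of_subset inter_subset_left (by simp)
    rw [Finset.sum_congr rfl h3, ← ENNReal.ofReal_sum_of_nonneg (fun _ _ => measureReal_nonneg)] at h2
    rw [ENNReal.ofReal_eq_ofReal_iff (by linarith) (Finset.sum_nonneg fun _ _ => measureReal_nonneg)] at h2
    exact h2.symm
  · rw [Measure.map_apply hm measurableSet_Icc.compl]
    have : F ⁻¹' (Icc 0 1)ᶜ = ∅ := by
      ext x; simpa using h01 x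
    simp [this]
  · intro c
    rw [Measure.map_apply hm (measurableSet_singleton c),
      Measure.restrict_apply (hm (measurableSet_singleton c)), inter_comm, hnull]

theorem localStep {N : ℕ} (hN : 0 < N) {F : ℝ → ℝ} (hF : Continuous F) (h01 : ∀ x, F x ∈ Icc (0:ℝ) 1)
    {a b : ℝ} (hab : a < b) (hnull : ∀ c, volume (Ioc a b ∩ F ⁻¹' {c}) = 0)
    (hosc : ∀ x ∈ Icc a b, ∀ y ∈ Icc a b, |F x - F y| ≤ 1 / N) :
    ∃ h, Rz N a b ⌊N * F a⌋₊ ⌊N * F b⌋₊ (dur N F a b) h ∧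
      ∀ x ∈ Icc a b, |h x - F x| ≤ 2 / N ∧ h x ∈ Icc (0:ℝ) 1 := by
  have hN' : (0:ℝ) < N := by exact_mod_cast hN
  have hne : (Icc a b).Nonempty := nonempty_Icc.2 hab.le
  obtain ⟨y0, hy0, hmin⟩ := isCompact_Icc.exists_isMinOn hne hF.continuousOn
  obtain ⟨y1, hy1, hmax⟩ := isCompact_Icc.exists_isMaxOn hne hF.continuousOn
  have hmin' : ∀ x ∈ Icc a b, F y0 ≤ F x := fun x hx => hmin hx
  have hmax' : ∀ x ∈ Icc a b, F x ≤ F y1 := fun x hx => hmax hx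
  have hlt : F y0 < F y1 := by
    by_contra hcon
    push Not at hcon
    have : Ioc a b ∩ F ⁻¹' {F y0} = Ioc a b := by
      apply inter_eq_left.2
      intro x hx
      have hx' := Ioc_subset_Icc_self hx
      exact le_antisymm ((hmax' x hx').trans hcon) (hmin' x hx')
    have h2 := hnull (F y0)
    rw [this, Real.volume_Ioc, ENNReal.ofReal_eq_zero] at h2
    linarith
  have hmul : ∀ {s t : ℝ}, s ≤ t → N * s ≤ N * t := fun h => mul_le_mul_of_nonneg_left h hN'.le
  have hint : ∀ t ∈ Icc (F y0) (F y1), ∃ y ∈ Icc a b, F y = t := by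
    intro t ht
    have := (isPreconnected_Icc (a := a) (b := b)).intermediate_value hy0 hy1 hF.continuousOn ht
    simpa using this
  have hpos : ∀ k, ⌊N * F y0⌋₊ ≤ k → k < ⌈N * F y1⌉₊ → 0 < dur N F a b k := by
    intro k h1 h2
    have h1' : N * F y0 < k + 1 := by
      have := Nat.lt_floor_add_one (N * F y0)
      have h3 : (⌊N * F y0⌋₊ : ℝ) ≤ k := by exact_mod_cast h1
      linarith
    have h2' : (k : ℝ) < N * F y1 := Nat.lt_ceil.1 h2
    obtain ⟨t, ht1, ht2⟩ := exists_between (show max ((k : ℝ) / N) (F y0) < min (((k : ℝ) + 1) / N) (F y1) by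
      rw [max_lt_iff, lt_min_iff, lt_min_iff]
      refine ⟨⟨?_, ?_⟩, ?_, hlt⟩
      · rw [div_lt_div_iff_of_pos_right hN']; linarith
      · rw [div_lt_iff₀ hN']; linarith
      · rw [lt_div_iff₀ hN']; linarith)
    rw [max_lt_iff] at ht1
    rw [lt_min_iff] at ht2
    obtain ⟨y, hy, hyt⟩ := hint t ⟨ht1.2.le, ht2.2.le⟩
    have hopen : IsOpen (F ⁻¹' Jo N k) := isOpen_Ioo.preimage hF
    have hyJ : y ∈ F ⁻¹' Jo N k := by
      show F y ∈ Jo N k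
      rw [hyt]; exact ⟨ht1.1, ht2.1⟩
    have hcl : y ∈ closure (Ioo a b) := by rwa [closure_Ioo hab.ne]
    have hnon : (F ⁻¹' Jo N k ∩ Ioo a b).Nonempty := mem_closure_iff.1 hcl _ hopen hyJ
    have hp := (hopen.inter isOpen_Ioo).measure_pos volume hnon
    unfold dur
    refine ENNReal.toReal_pos ?_ (measure_ne_top_of_subset inter_subset_left (by simp))
    refine (hp.trans_le (measure_mono ?_)).ne'
    rintro x ⟨h1, h2⟩
    exact ⟨Ioo_subset_Ioc_self h2, h1⟩
  have hex : ∀ k, 0 < dur N F a b k → ∃ y ∈ Icc a b, F y ∈ Jo N k := by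
    intro k hk
    by_contra hcon
    push Not at hcon
    have : Ioc a b ∩ F ⁻¹' Jo N k = ∅ := by
      ext x
      simp only [mem_inter_iff, mem_preimage, mem_empty_iff_false, iff_false, not_and]
      exact fun hx => hcon x (Ioc_subset_Icc_self hx)
    simp [dur, this] at hk
  have hz : ∀ k, ¬ (⌊N * F y0⌋₊ ≤ k ∧ k < ⌈N * F y1⌉₊) → dur N F a b k = 0 := by
    intro k hk
    by_contra hcon
    have hk0 : 0 < dur N F a b k := lt_of_le_of_ne measureReal_nonneg (Ne.symm hcon)
    obtain ⟨y, hy, h1, h2⟩ := hex k hk0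
    rw [div_lt_iff₀ hN'] at h1
    rw [lt_div_iff₀ hN'] at h2
    apply hk
    constructor
    · rw [← Nat.lt_add_one_iff, Nat.floor_lt (mul_nonneg hN'.le (h01 _).1)]
      push_cast
      have := hmul (hmin' y hy)
      linarith
    · rw [Nat.lt_ceil]
      have := hmul (hmax' y hy)
      linarith
  have hfl : ∀ y ∈ Icc a b, ⌊N * F y0⌋₊ ≤ ⌊N * F y⌋₊ ∧ ⌊N * F y⌋₊ ≤ ⌈N * F y1⌉₊ := by
    intro y hy
    exact ⟨Nat.floor_mono (hmul (hmin' y hy)), (Nat.floor_le_ceil _).trans (Nat.ceil_mono (hmul (hmax' y hy)))⟩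
  have hq : ⌈N * F y1⌉₊ ≤ N := by
    rw [Nat.ceil_le]
    have := hmul (h01 y1).2
    linarith
  have ha : a ∈ Icc a b := left_mem_Icc.2 hab.le
  have hb : b ∈ Icc a b := right_mem_Icc.2 hab.le
  have htw : TW N ⌊N * F a⌋₊ ⌊N * F b⌋₊ (dur N F a b) :=
    TW.exists _ hq (hfl a ha).1 (hfl a ha).2 (hfl b hb).1 (hfl b hb).2 hpos hz
  obtain ⟨h, hR, hV⟩ := htw.realize a
  rw [tot_dur hN hF h01 hab.le hnull, add_sub_cancel] at hR hV
  refine ⟨h, hR, fun x hx => ?_⟩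
  have h2N : (2:ℝ) / N = 1 / N + 1 / N := by ring
  rcases hV x hx with h1 | ⟨k, hk, hk0, h1, h2⟩
  · have h3 := Nat.floor_le (mul_nonneg hN'.le (h01 a).1)
    have h4 := Nat.lt_floor_add_one (N * F a)
    have h5 : (⌊N * F a⌋₊ : ℝ) / N ≤ F a := by rw [div_le_iff₀ hN']; linarith
    have h6 : F a ≤ (⌊N * F a⌋₊ : ℝ) / N + 1 / N := by rw [← add_div, le_div_iff₀ hN']; linarith
    have h7 := abs_le.1 (hosc a ha x hx)
    refine ⟨?_, ?_, ?_⟩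
    · rw [abs_le, h2N, h1]; constructor <;> linarith
    · rw [h1]; positivity
    · rw [h1]; linarith [(h01 a).2]
  · obtain ⟨y, hy, h3, h4⟩ := hex k hk0
    have h7 := abs_le.1 (hosc y hy x hx)
    rw [add_div] at h2 h4
    refine ⟨?_, ?_, ?_⟩
    · rw [abs_le, h2N]; constructor <;> linarith
    · exact le_trans (by positivity) h1
    · refine h2.trans ?_
      rw [← add_div, div_le_one hN']
      exact_mod_cast hk

theorem globalStep {N M : ℕ} (hN : 0 < N) (hM : 0 < M) {F : ℝ → ℝ} (hF : Continuous F)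
    (h01 : ∀ x, F x ∈ Icc (0:ℝ) 1) (hnull : ∀ c, volume (Ioc 0 1 ∩ F ⁻¹' {c}) = 0)
    (hosc : ∀ x ∈ Icc (0:ℝ) 1, ∀ y ∈ Icc (0:ℝ) 1, |x - y| ≤ 1 / M → |F x - F y| ≤ 1 / N)
    (i : ℕ) (hi : i ≤ M) :
    ∃ h, Rz N 0 ((i : ℝ) / M) ⌊N * F 0⌋₊ ⌊N * F ((i : ℝ) / M)⌋₊ (dur N F 0 ((i : ℝ) / M)) h ∧
      ∀ x ∈ Ioc 0 ((i : ℝ) / M), |h x - F x| ≤ 2 / N ∧ h x ∈ Icc (0:ℝ) 1 := by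
  have hM' : (0:ℝ) < M := by exact_mod_cast hM
  induction i with
  | zero =>
    refine ⟨fun _ => (⌊N * F 0⌋₊ : ℝ) / N, ?_, ?_⟩
    · have := Rz.nil N 0 ⌊N * F 0⌋₊
      have h2 : dur N F 0 0 = 0 := by funext k; simp [dur]
      simpa [h2] using this
    · intro x hx; simp at hx
  | succ i ih =>
    obtain ⟨h, hR, hV⟩ := ih (by omega)
    have hlt : (i : ℝ) / M < ((i + 1 : ℕ) : ℝ) / M := by
      rw [div_lt_div_iff_of_pos_right hM']; push_cast; linarith
    have h0 : 0 ≤ (i : ℝ) / M := by positivity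
    have h1 : ((i + 1 : ℕ) : ℝ) / M ≤ 1 := by
      rw [div_le_one hM']; exact_mod_cast hi
    have hd : ((i + 1 : ℕ) : ℝ) / M = (i : ℝ) / M + 1 / M := by push_cast; ring
    obtain ⟨h', hR', hV'⟩ := localStep hN hF h01 hlt
      (fun c => measure_mono_null (inter_subset_inter_left _ (Ioc_subset_Ioc h0 h1)) (hnull c))
      (fun x hx y hy => hosc x ⟨h0.trans hx.1, hx.2.trans h1⟩ y ⟨h0.trans hy.1, hy.2.trans h1⟩ (by
        rw [hd] at hx hy
        rw [abs_le]; constructor <;> linarith [hx.1, hx.2, hy.1, hy.2]))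
    have hG := hR.glue hR'
    rw [dur_add hF h0 hlt.le] at hG
    refine ⟨_, hG, fun x hx => ?_⟩
    rcases le_total x ((i : ℝ) / M) with hb | hb
    · rw [glue_left hb]; exact hV x ⟨hx.1, hb⟩
    · rw [glue_right (by rw [hR.right, hR'.left]) hb]; exact hV' x ⟨hb, hx.2⟩

theorem extMap_cont (f : C(unitInterval, unitInterval)) : Continuous (extMap f) := by
  unfold extMap
  exact continuous_subtype_val.comp (f.continuous.comp continuous_projIcc)

theorem extMap_coe (f : C(unitInterval, unitInterval)) (x : unitInterval) : extMap f x = f x := by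
  simp [extMap]

theorem map_extMap (f : C(unitInterval, unitInterval)) :
    (volume.restrict (Ioc 0 1)).map (extMap f) =
      ((volume : Measure unitInterval).map f).map ((↑) : unitInterval → ℝ) := by
  rw [Measure.restrict_congr_set Ioc_ae_eq_Icc]
  have : volume.restrict (Icc (0:ℝ) 1) = (volume : Measure unitInterval).map ((↑) : unitInterval → ℝ) :=
    unitInterval.measurePreserving_coe.map_eq.symm
  rw [this, Measure.map_map (extMap_cont f).measurable measurable_subtype_coe,
    Measure.map_map measurable_subtype_coe f.continuous.measurable]
  congr 1
  funext x
  exact extMap_coe f x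

theorem mp_iff (f : C(unitInterval, unitInterval)) :
    MeasurePreserving f volume volume ↔
      (volume.restrict (Ioc 0 1)).map (extMap f) = volume.restrict (Icc 0 1) := by
  have h1 : volume.restrict (Icc (0:ℝ) 1) = (volume : Measure unitInterval).map ((↑) : unitInterval → ℝ) :=
    unitInterval.measurePreserving_coe.map_eq.symm
  rw [map_extMap, h1]
  constructor
  · intro h; rw [h.map_eq]
  · intro h
    refine ⟨f.continuous.measurable, ?_⟩
    have h2 := congrArg (Measure.comap ((↑) : unitInterval → ℝ)) h
    rwa [unitInterval.measurableEmbedding_coe.comap_map, unitInterval.measurableEmbedding_coe.comap_map] at h2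

theorem pa_of_PA {N : ℕ} {h : ℝ → ℝ} (g : C(unitInterval, unitInterval))
    (hg : ∀ x : unitInterval, (g x : ℝ) = h x) (H : PA N h 0 1) : PiecewiseAffineMap g := by
  obtain ⟨m, t, ht, t0, t1, tj⟩ := H.partition
  have hmem : ∀ i, t i ∈ Icc (0:ℝ) 1 := fun i =>
    ⟨t0 ▸ ht.monotone (Fin.zero_le i), t1 ▸ ht.monotone (Fin.le_last i)⟩
  refine ⟨m, fun i => ⟨t i, hmem i⟩, fun i j hij => ht hij, Subtype.ext t0, Subtype.ext t1, fun j => ?_⟩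
  obtain ⟨c, d, hcd⟩ := tj j
  refine ⟨c, d, fun x hx hx' => ?_⟩
  rw [hg, hcd x hx hx']

theorem dv_of_PA {N : ℕ} {h : ℝ → ℝ} (g : C(unitInterval, unitInterval))
    (hg : ∀ x : unitInterval, (g x : ℝ) = h x) (H : PA N h 0 1) {v : ℕ} (h0 : h 0 = v / N) (c : ℝ)
    (hc : IsDeterminingValue g c) : ∃ q : ℚ, c = (q : ℝ) := by
  obtain ⟨x, rfl, hx⟩ := hc
  have grid : ∀ u : ℕ, h x = u / N → ∃ q : ℚ, (g x : ℝ) = (q : ℝ) := by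
    intro u hu
    exact ⟨(u : ℚ) / N, by rw [hg, hu]; push_cast; rfl⟩
  rcases x.2.1.eq_or_lt with hx0 | hx0
  · exact grid v (by rw [← hx0, h0])
  rcases H.interior x ⟨hx0, x.2.2⟩ with ⟨u, hu⟩ | ⟨p, q, α, β, hα, h1, h2, h3, h4, h5⟩
  · exact grid u hu
  exfalso
  have hev : extMap g =ᶠ[nhds (x : ℝ)] fun y => α * y + β := by
    filter_upwards [Ioo_mem_nhds h2 h3] with y hy
    have hy' : y ∈ Icc (0:ℝ) 1 := ⟨by linarith [hy.1], by linarith [hy.2]⟩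
    have := extMap_coe g ⟨y, hy'⟩
    rw [this, hg, h5 y (Ioo_subset_Icc_self hy)]
  have hder : HasDerivAt (extMap g) α x := by
    have : HasDerivAt (fun y : ℝ => α * y + β) α x := by
      simpa using ((hasDerivAt_id (x : ℝ)).const_mul α).add_const β
    exact this.congr_of_eventuallyEq hev
  have hpr : Set.projIcc (0:ℝ) 1 zero_le_one x = x := Set.projIcc_val _ x
  have htend : Filter.Tendsto (Set.projIcc (0:ℝ) 1 zero_le_one) (nhds (x : ℝ)) (nhds x) := by
    have := (continuous_projIcc (a := (0:ℝ)) (b := 1) (h := zero_le_one)).tendsto (x : ℝ)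
    rwa [hpr] at this
  rcases hx with hx | hx | hx
  · have : IsLocalMax (extMap g) x := by
      have h6 := htend.eventually hx
      filter_upwards [h6] with y hy
      rw [extMap_coe]; exact hy
    exact hα (this.hasDerivAt_eq_zero hder)
  · have : IsLocalMin (extMap g) x := by
      have h6 := htend.eventually hx
      filter_upwards [h6] with y hy
      rw [extMap_coe]; exact hy
    exact hα (this.hasDerivAt_eq_zero hder)
  · exact hx hder.differentiableAt.differentiableWithinAt

theorem dur_full {N : ℕ} (hN : 0 < N) {F : ℝ → ℝ} (hF : Continuous F)
    (hmap : (volume.restrict (Ioc 0 1)).map F = volume.restrict (Icc 0 1)) {k : ℕ} (hk : k < N) :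
    dur N F 0 1 k = 1 / N := by
  have hN' : (0:ℝ) < N := by exact_mod_cast hN
  have h := congrArg (fun μ : Measure ℝ => μ (Jo N k)) hmap
  rw [Measure.map_apply hF.measurable (measurableSet_Jo N k),
    Measure.restrict_apply (hF.measurable (measurableSet_Jo N k)),
    Measure.restrict_apply (measurableSet_Jo N k), inter_comm, inter_eq_left (s := Jo N k) |>.2] at h
  · rw [dur, Measure.real, h, Jo, Real.volume_Ioo, ENNReal.toReal_ofReal] <;> rw [← sub_div]
    · ring
    · rw [add_sub_cancel_left]; positivity
  · rintro x ⟨h1, h2⟩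
    have h3 : ((k : ℝ) + 1) / N ≤ 1 := by
      rw [div_le_one hN']; exact_mod_cast hk
    have h4 : 0 ≤ (k : ℝ) / N := by positivity
    exact ⟨by linarith, by linarith⟩

theorem approx (f : CLam) {N : ℕ} (hN : 0 < N) :
    ∃ g : CLam, (PiecewiseAffineMap g.1 ∧
      ∀ c : ℝ, IsDeterminingValue g.1 c → ∃ q : ℚ, c = (q : ℝ)) ∧
      ∀ x, |(g.1 x : ℝ) - f.1 x| ≤ 2 / N := by
  have hN' : (0:ℝ) < N := by exact_mod_cast hN
  set F := extMap f.1 with hFdef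
  have hF : Continuous F := extMap_cont f.1
  have h01 : ∀ x, F x ∈ Icc (0:ℝ) 1 := fun x => (f.1 _).2
  have hmap := (mp_iff f.1).1 f.2
  have hnull : ∀ c, volume (Ioc 0 1 ∩ F ⁻¹' {c}) = 0 := by
    intro c
    rw [inter_comm, ← Measure.restrict_apply (hF.measurable (measurableSet_singleton c)),
      ← Measure.map_apply hF.measurable (measurableSet_singleton c), hmap]
    simp
  have huc := isCompact_Icc.uniformContinuousOn_of_continuous (hF.continuousOn (s := Icc (0:ℝ) 1))
  rw [Metric.uniformContinuousOn_iff] at huc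
  obtain ⟨δ, hδ, hδ'⟩ := huc (1 / N) (by positivity)
  obtain ⟨n, hn⟩ := exists_nat_one_div_lt hδ
  obtain ⟨h, hR, hV⟩ := globalStep (M := n + 1) hN (by omega) hF h01 hnull
    (fun x hx y hy hxy => by
      push_cast at hxy
      have := hδ' x hx y hy (by rw [Real.dist_eq]; linarith)
      rw [Real.dist_eq] at this; exact this.le) (n + 1) le_rfl
  have hone : ((n + 1 : ℕ) : ℝ) / ((n + 1 : ℕ) : ℝ) = 1 := div_self (by positivity)
  rw [hone] at hR hV
  have hcl : ∀ x ∈ Icc (0:ℝ) 1, |h x - F x| ≤ 2 / N ∧ h x ∈ Icc (0:ℝ) 1 := by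
    have hclosed : IsClosed {x | |h x - F x| ≤ 2 / N ∧ h x ∈ Icc (0:ℝ) 1} :=
      (isClosed_le ((hR.cont.sub hF).abs) continuous_const).inter (isClosed_Icc.preimage hR.cont)
    have h1 := closure_minimal (s := Ioc (0:ℝ) 1) (fun x hx => hV x hx) hclosed
    rw [closure_Ioc (by norm_num)] at h1
    exact fun x hx => h1 hx
  let g : C(unitInterval, unitInterval) :=
    ⟨fun x => ⟨h x, (hcl x x.2).2⟩, (hR.cont.comp continuous_subtype_val).subtype_mk _⟩
  have hg : ∀ x : unitInterval, (g x : ℝ) = h x := fun x => rfl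
  have hmp : MeasurePreserving g volume volume := by
    rw [mp_iff]
    have e1 : (volume.restrict (Ioc 0 1)).map (extMap g) = (volume.restrict (Ioc 0 1)).map h := by
      apply Measure.map_congr
      filter_upwards [ae_restrict_mem measurableSet_Ioc] with x hx
      exact (extMap_coe g ⟨x, Ioc_subset_Icc_self hx⟩).trans (hg _)
    rw [e1, hR.meas]
    have e2 := cover hN (volume.restrict (Icc (0:ℝ) 1))
      (by rw [Measure.restrict_apply measurableSet_Icc.compl]; simp) (by intro c; simp)
    rw [e2]
    refine Finset.sum_congr rfl fun k hk => ?_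
    have hk' := Finset.mem_range.1 hk
    rw [dur_full hN hF hmap hk', mul_one_div_cancel hN'.ne', ENNReal.ofReal_one, one_smul,
      Measure.restrict_restrict (measurableSet_Jo N k), inter_eq_left.2]
    rintro x ⟨h1, h2⟩
    have h3 : ((k : ℝ) + 1) / N ≤ 1 := by
      rw [div_le_one hN']; exact_mod_cast hk'
    have h4 : 0 ≤ (k : ℝ) / N := by positivity
    exact ⟨by linarith, by linarith⟩
  refine ⟨⟨g, hmp⟩, ⟨pa_of_PA g hg hR.pa, dv_of_PA g hg hR.pa hR.left⟩, fun x => ?_⟩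
  have := (hcl x x.2).1
  rwa [hFdef, extMap_coe] at this

/-- The set of piecewise affine maps in `C_λ` all of whose determining values are
rational is dense in `C_λ` with respect to the uniform metric. -/
theorem stmt8 :
    Dense {f : CLam | PiecewiseAffineMap f.1 ∧
      ∀ c : ℝ, IsDeterminingValue f.1 c → ∃ q : ℚ, c = (q : ℝ)} := by
  rw [Metric.dense_iff]
  intro f r hr
  obtain ⟨n, hn⟩ := exists_nat_one_div_lt (show 0 < r / 2 by positivity)
  obtain ⟨g, hg, hd⟩ := approx f (N := n + 1) (by omega)
  refine ⟨g, ?_, hg⟩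
  rw [Metric.mem_ball, Subtype.dist_eq, ContinuousMap.dist_lt_iff hr]
  intro x
  rw [Subtype.dist_eq, Real.dist_eq]
  refine (hd x).trans_lt ?_
  push_cast
  have : (2:ℝ) / (n + 1) = 2 * (1 / (n + 1)) := by ring
  rw [this]; linarith

end
end

section
/- There is a dense G_δ subset of C_λ (in the uniform topology) such that every map f in this subset is of nonmonotonic type, i.e., f is not of monotonic type at any point of I. -/
open MeasureTheory Set
open scoped ENNReal

/-- `g` is non-decreasing at `x`: for some `δ > 0`, `g(t) ≤ g(x)` for
`t ∈ I ∩ (x−δ, x)` and `g(t) ≥ g(x)` for `t ∈ I ∩ (x, x+δ)`. -/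
def NonDecreasingAt (g : unitInterval → ℝ) (x : unitInterval) : Prop :=
  ∃ δ : ℝ, 0 < δ ∧
    (∀ t : unitInterval, (x : ℝ) - δ < (t : ℝ) → (t : ℝ) < (x : ℝ) → g t ≤ g x) ∧
    (∀ t : unitInterval, (x : ℝ) < (t : ℝ) → (t : ℝ) < (x : ℝ) + δ → g x ≤ g t)

/-- `g` is monotone at `x`: `g` or `−g` is non-decreasing at `x`. -/
def MonotoneAtPt (g : unitInterval → ℝ) (x : unitInterval) : Prop :=
  NonDecreasingAt g x ∨ NonDecreasingAt (fun t => -(g t)) x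

/-- `g` is of monotonic type at `x`: for some `γ ∈ ℝ` the function
`g_{−γ} : t ↦ g(t) − γ t` is monotone at `x`. -/
def MonotonicTypeAt (g : unitInterval → ℝ) (x : unitInterval) : Prop :=
  ∃ γ : ℝ, MonotoneAtPt (fun t => g t - γ * (t : ℝ)) x

/-- `g` is of nonmonotonic type: it is not of monotonic type at any point of `[0,1]`. -/
def NonmonotonicType (g : unitInterval → ℝ) : Prop :=
  ∀ x : unitInterval, ¬ MonotonicTypeAt g x


namespace NMT

/-! ### Integral criterion for preserving Lebesgue measure -/

lemma mp_iff (f : C(unitInterval, unitInterval)) :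
    MeasurePreserving f volume volume ↔
      ∀ u : C(unitInterval, ℝ), ∫ x, u (f x) = ∫ x, u x := by
  constructor
  · intro h u
    have h1 : ∫ x, u x = ∫ x, u x ∂(Measure.map f volume) := by rw [h.map_eq]
    rw [h1, integral_map h.measurable.aemeasurable u.continuous.aestronglyMeasurable]
  · intro h
    refine ⟨f.continuous.measurable, ?_⟩
    have : IsFiniteMeasure (Measure.map f volume) :=
      Measure.isFiniteMeasure_map volume f
    apply ext_of_forall_integral_eq_of_IsFiniteMeasure
    intro u
    rw [integral_map f.continuous.measurable.aemeasurable
      u.continuous.aestronglyMeasurable]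
    exact h u.toContinuousMap

lemma isClosed_mp :
    IsClosed {f : C(unitInterval, unitInterval) | MeasurePreserving f volume volume} := by
  have : {f : C(unitInterval, unitInterval) | MeasurePreserving f volume volume} =
      ⋂ u : C(unitInterval, ℝ), {f | ∫ x, u (f x) = ∫ x, u x} := by
    ext f
    simp only [mem_ofPred_eq, mem_iInter]
    exact mp_iff f
  rw [this]
  refine isClosed_iInter fun u => isClosed_eq ?_ continuous_const
  refine continuous_of_dominated (bound := fun _ => ‖u‖) ?_ ?_ ?_ ?_
  · intro f
    exact (u.continuous.comp f.continuous).aestronglyMeasurable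
  · intro f
    exact Filter.Eventually.of_forall fun x => u.norm_coe_le_norm _
  · exact integrable_const _
  · exact Filter.Eventually.of_forall fun x => u.continuous.comp (continuous_eval_const x)

instance : CompleteSpace CLam := isClosed_mp.isComplete.completeSpace_coe

lemma integral_unit (U : ℝ → ℝ) : ∫ x : unitInterval, U x = ∫ x in (0:ℝ)..1, U x := by
  rw [intervalIntegral.integral_of_le zero_le_one, ← integral_Icc_eq_integral_Ioc]
  exact integral_subtype measurableSet_Icc U

/-- Build an element of `C_λ` from a real function. -/
lemma exists_clam (h : ℝ → ℝ) (hc : Continuous h)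
    (hm : ∀ x ∈ Icc (0:ℝ) 1, h x ∈ Icc (0:ℝ) 1)
    (hi : ∀ U : ℝ → ℝ, Continuous U → ∫ x in (0:ℝ)..1, U (h x) = ∫ x in (0:ℝ)..1, U x) :
    ∃ F : CLam, ∀ x : unitInterval, (F.1 x : ℝ) = h x := by
  refine ⟨⟨⟨fun x => ⟨h x, hm x x.2⟩, by fun_prop⟩, ?_⟩, fun x => rfl⟩
  rw [mp_iff]
  intro u
  have hU : Continuous (fun x : ℝ => u (projIcc 0 1 zero_le_one x)) :=
    u.continuous.comp continuous_projIcc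
  have h1 := hi _ hU
  rw [← integral_unit (fun x => u (projIcc 0 1 zero_le_one (h x))), ← integral_unit] at h1
  convert h1 using 3 with x x
  · congr 1
    rw [projIcc_of_mem zero_le_one (hm x x.2)]
    rfl
  · rw [projIcc_val]

def comp (f g : CLam) : CLam := ⟨f.1.comp g.1, f.2.comp g.2⟩

lemma comp_apply (f g : CLam) (x) : (comp f g).1 x = f.1 (g.1 x) := rfl

def refl : CLam := ⟨⟨unitInterval.symm, unitInterval.continuous_symm⟩,
  unitInterval.measurePreserving_symm⟩

lemma nonconst (f : CLam) (a b : unitInterval) (hab : a < b) (q : unitInterval) :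
    ∃ t ∈ Icc a b, f.1 t ≠ q := by
  by_contra! h
  have h1 : volume (f.1 ⁻¹' {q}) = 0 := by
    rw [f.2.measure_preimage (measurableSet_singleton q).nullMeasurableSet]
    simp
  have h2 : volume (Icc a b) ≤ volume (f.1 ⁻¹' {q}) := measure_mono fun t ht => h t ht
  rw [h1, unitInterval.volume_Icc] at h2
  have : (a:ℝ) < b := hab
  simp at h2
  exact absurd h2 (not_le.2 hab)

/-! ### Triangle wave and the zigzag map -/

noncomputable def tri (s : ℝ) : ℝ := Real.arccos (Real.cos (Real.pi * s)) / Real.pi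

lemma tri_cont : Continuous tri := by
  unfold tri
  exact (Real.continuous_arccos.comp (by fun_prop)).div_const _

lemma tri_mem (s : ℝ) : tri s ∈ Icc (0:ℝ) 1 := by
  unfold tri
  refine ⟨div_nonneg (Real.arccos_nonneg _) Real.pi_pos.le, ?_⟩
  rw [div_le_one Real.pi_pos]
  exact Real.arccos_le_pi _

lemma tri_even (k : ℤ) {t : ℝ} (h0 : 0 ≤ t) (h1 : t ≤ 1) : tri (t + 2 * k) = t := by
  unfold tri
  have : Real.pi * (t + 2 * k) = Real.pi * t + k * (2 * Real.pi) := by ring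
  rw [this, Real.cos_add_int_mul_two_pi, Real.arccos_cos]
  · field_simp
  · exact mul_nonneg Real.pi_pos.le h0
  · nlinarith [Real.pi_pos]

lemma tri_odd (k : ℤ) {t : ℝ} (h0 : 0 ≤ t) (h1 : t ≤ 1) : tri (t + 1 + 2 * k) = 1 - t := by
  unfold tri
  have : Real.pi * (t + 1 + 2 * k) = (Real.pi * t + Real.pi) + k * (2 * Real.pi) := by ring
  rw [this, Real.cos_add_int_mul_two_pi, Real.cos_add_pi, Real.arccos_neg, Real.arccos_cos]
  · field_simp
  · exact mul_nonneg Real.pi_pos.le h0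
  · nlinarith [Real.pi_pos]

lemma tri_cover (a : ℝ) {y : ℝ} (hy : y ∈ Icc (0:ℝ) 1) :
    ∃ s, a ≤ s ∧ s ≤ a + 2 ∧ tri s = y := by
  refine ⟨y + 2 * (⌈(a - y) / 2⌉ : ℤ), ?_, ?_, tri_even _ hy.1 hy.2⟩
  · have := Int.le_ceil ((a - y) / 2); linarith
  · have := Int.ceil_lt_add_one ((a - y) / 2); linarith

lemma tri_int_cell (U : ℝ → ℝ) (k : ℕ) :
    ∫ x in (k:ℝ)..((k+1 : ℕ):ℝ), U (tri x) = ∫ x in (0:ℝ)..1, U x := by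
  rcases Nat.even_or_odd k with ⟨j, hj⟩ | ⟨j, hj⟩
  · have h : ∫ x in (k:ℝ)..((k+1 : ℕ):ℝ), U (tri x) =
        ∫ x in (k:ℝ)..((k+1 : ℕ):ℝ), U (x - k) := by
      apply intervalIntegral.integral_congr
      intro x hx
      rw [uIcc_of_le (by push_cast; linarith)] at hx
      have e : x = (x - k) + 2 * ((j : ℤ) : ℝ) := by rw [hj]; push_cast; ring
      have hx2 := hx.2
      push_cast at hx2
      have := tri_even j (t := x - k) (by linarith [hx.1]) (by linarith)
      rw [← e] at this
      simp only [this]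
    rw [h, intervalIntegral.integral_comp_sub_right]
    simp
  · have h : ∫ x in (k:ℝ)..((k+1 : ℕ):ℝ), U (tri x) =
        ∫ x in (k:ℝ)..((k+1 : ℕ):ℝ), U ((k + 1) - x) := by
      apply intervalIntegral.integral_congr
      intro x hx
      rw [uIcc_of_le (by push_cast; linarith)] at hx
      have e : x = (x - k) + 1 + 2 * ((j : ℤ) : ℝ) := by rw [hj]; push_cast; ring
      have hx2 := hx.2
      push_cast at hx2
      have := tri_odd j (t := x - k) (by linarith [hx.1]) (by linarith)
      rw [← e] at this
      simp only [this]
      congr 1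
      ring
    rw [h, intervalIntegral.integral_comp_sub_left]
    simp

lemma tri_int (U : ℝ → ℝ) (hU : Continuous U) (m : ℕ) (hm : 0 < m) :
    ∫ x in (0:ℝ)..1, U (tri (m * x)) = ∫ x in (0:ℝ)..1, U x := by
  have hm' : (m:ℝ) ≠ 0 := by positivity
  rw [intervalIntegral.integral_comp_mul_left (fun x => U (tri x)) hm']
  have h := intervalIntegral.sum_integral_adjacent_intervals (μ := volume)
    (f := fun x => U (tri x)) (a := fun k : ℕ => (k:ℝ)) (n := m)
    (fun k _ => (hU.comp tri_cont).intervalIntegrable _ _)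
  simp only [tri_int_cell] at h
  simp at h
  simp [← h]
  field_simp

noncomputable def zig (N m : ℕ) (x : ℝ) : ℝ :=
  x + (tri (m * Int.fract (N * x)) - Int.fract (N * x)) / N

lemma zig_cont (N m : ℕ) (hm : Odd m) : Continuous (zig N m) := by
  have h : Continuous ((fun s => tri (m * s) - s) ∘ Int.fract) := by
    apply ContinuousOn.comp_fract''
    · exact ((tri_cont.comp (by fun_prop)).sub continuous_id).continuousOn
    · obtain ⟨j, hj⟩ := hm
      have h0 := tri_even 0 (t := 0) le_rfl zero_le_one
      have h1 := tri_even j (t := 1) zero_le_one le_rfl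
      have e : (m:ℝ) * 1 = 1 + 2 * ((j:ℤ):ℝ) := by rw [hj]; push_cast; ring
      simp only [e, h1]
      simpa using h0
  have h2 : Continuous fun x : ℝ => ((fun s => tri (m * s) - s) ∘ Int.fract) (N * x) :=
    h.comp (by fun_prop)
  exact continuous_id.add (h2.div_const _)

lemma zig_win (N m : ℕ) (hN : 0 < N) (hm : Odd m) (i : ℤ) {x : ℝ}
    (h0 : i ≤ N * x) (h1 : N * x ≤ i + 1) :
    zig N m x = (i + tri (m * (N * x - i))) / N := by
  have hN' : (N:ℝ) ≠ 0 := by positivity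
  unfold zig
  rcases lt_or_eq_of_le h1 with h | h
  · have : Int.fract (N * x) = N * x - i := by
      rw [Int.fract, Int.floor_eq_iff.2 ⟨h0, h⟩]
    rw [this]
    field_simp
    ring
  · have e0 : Int.fract (N * x) = 0 := by
      rw [h]; exact_mod_cast Int.fract_intCast (i + 1)
    have t0 := tri_even 0 (t := 0) le_rfl zero_le_one
    obtain ⟨j, hj⟩ := hm
    have t1 := tri_even j (t := 1) zero_le_one le_rfl
    have e : (m:ℝ) * (N * x - i) = 1 + 2 * ((j:ℤ):ℝ) := by rw [h, hj]; push_cast; ring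
    rw [e0, e, t1, ← h]
    simp at t0
    simp [t0]
    field_simp

lemma zig_int (N m : ℕ) (hN : 0 < N) (hm : Odd m) (i : ℤ) : zig N m (i / N) = i / N := by
  have hN' : (N:ℝ) ≠ 0 := by positivity
  have e : (N:ℝ) * (i / N) = i := by field_simp
  have t0 := tri_even 0 (t := 0) le_rfl zero_le_one
  rw [zig_win N m hN hm i (by rw [e]) (by rw [e]; linarith), e]
  simp at t0
  simp [t0]

lemma zig_near (N m : ℕ) (hN : 0 < N) (x : ℝ) : |zig N m x - x| ≤ 1 / N := by
  have hN' : (0:ℝ) < N := by positivity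
  unfold zig
  rw [add_sub_cancel_left, abs_div, abs_of_pos hN']
  gcongr
  have := tri_mem (m * Int.fract (N * x))
  have h1 := Int.fract_nonneg ((N:ℝ) * x)
  have h2 := (Int.fract_lt_one ((N:ℝ) * x)).le
  rw [abs_le]
  constructor <;> linarith [this.1, this.2]

lemma zig_mem (N m : ℕ) (hN : 0 < N) (hm : Odd m) (x : ℝ) (hx : x ∈ Icc (0:ℝ) 1) :
    zig N m x ∈ Icc (0:ℝ) 1 := by
  have hN' : (0:ℝ) < N := by positivity
  rcases eq_or_lt_of_le hx.2 with h | h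
  · have := zig_int N m hN hm N
    have e : ((N:ℤ):ℝ) / N = 1 := by rw [Int.cast_natCast]; field_simp
    rw [e] at this
    rw [h, this]; simp
  · have hi := zig_win N m hN hm ⌊N * x⌋ (Int.floor_le _) (Int.lt_floor_add_one _).le
    have t := tri_mem (m * (N * x - ⌊N * x⌋))
    have f0 : 0 ≤ ⌊N * x⌋ := Int.floor_nonneg.2 (mul_nonneg hN'.le hx.1)
    have f1 : ⌊N * x⌋ < N := by
      rw [Int.floor_lt]; push_cast; nlinarith
    have f0' : (0:ℝ) ≤ ⌊N * x⌋ := by exact_mod_cast f0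
    have f1' : (⌊N * x⌋:ℝ) + 1 ≤ N := by exact_mod_cast f1
    rw [hi]
    refine ⟨div_nonneg (by linarith [t.1]) hN'.le, ?_⟩
    rw [div_le_one hN']; linarith [t.2]

lemma zig_integral (N m : ℕ) (hN : 0 < N) (hm : Odd m) (U : ℝ → ℝ) (hU : Continuous U) :
    ∫ x in (0:ℝ)..1, U (zig N m x) = ∫ x in (0:ℝ)..1, U x := by
  have hN' : (N:ℝ) ≠ 0 := by positivity
  have key : ∀ V : ℝ → ℝ, Continuous V →
      ∫ x in (0:ℝ)..1, V x = ∑ k ∈ Finset.range N, ∫ x in ((k:ℝ)/N)..(((k+1:ℕ):ℝ)/N), V x := by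
    intro V hV
    rw [intervalIntegral.sum_integral_adjacent_intervals (a := fun k : ℕ => (k:ℝ)/N)
      (fun k _ => hV.intervalIntegrable _ _)]
    simp [hN']
  rw [key (fun x => U (zig N m x)) (hU.comp (zig_cont N m hm)), key _ hU]
  refine Finset.sum_congr rfl fun k _ => ?_
  have hle : (k:ℝ)/N ≤ ((k+1:ℕ):ℝ)/N := by
    push_cast; gcongr; linarith
  have e1 : ∫ x in ((k:ℝ)/N)..(((k+1:ℕ):ℝ)/N), U (zig N m x) =
      ∫ x in ((k:ℝ)/N)..(((k+1:ℕ):ℝ)/N), (fun s => U ((k + tri (m * s)) / N)) (N * x - k) := by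
    apply intervalIntegral.integral_congr
    intro x hx
    rw [uIcc_of_le hle] at hx
    have hNp : (0:ℝ) < N := by positivity
    have a0 : (k:ℝ) ≤ N * x := by
      have := hx.1; rw [div_le_iff₀ hNp] at this; linarith
    have a1 : (N:ℝ) * x ≤ k + 1 := by
      have := hx.2; rw [le_div_iff₀ hNp] at this; push_cast at this; linarith
    have := zig_win N m hN hm k (x := x) (by exact_mod_cast a0) (by exact_mod_cast a1)
    simp only [this, Int.cast_natCast]
  have e2 : ∫ x in ((k:ℝ)/N)..(((k+1:ℕ):ℝ)/N), U x =
      ∫ x in ((k:ℝ)/N)..(((k+1:ℕ):ℝ)/N), (fun s => U ((k + s) / N)) (N * x - k) := by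
    apply intervalIntegral.integral_congr
    intro x hx
    simp only
    congr 1
    field_simp
    ring
  have b0 : (N:ℝ) * (k / N) - k = 0 := by field_simp; ring
  have b1 : (N:ℝ) * (((k+1:ℕ):ℝ) / N) - k = 1 := by push_cast; field_simp; ring
  rw [e1, e2, intervalIntegral.integral_comp_mul_sub
      (fun s => U ((k + tri (m * s)) / N)) hN',
    intervalIntegral.integral_comp_mul_sub (fun s => U ((k + s) / N)) hN', b0, b1,
    tri_int (fun s => U ((k + s) / N)) (by fun_prop) m hm.pos]

lemma exists_zig (N m : ℕ) (hN : 0 < N) (hm : Odd m) :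
    ∃ F : CLam, ∀ x : unitInterval, (F.1 x : ℝ) = zig N m x :=
  exists_clam _ (zig_cont N m hm) (zig_mem N m hN hm) (zig_integral N m hN hm)

lemma zig_cover (N m : ℕ) (hN : 0 < N) (hm : Odd m) (i : ℤ) (a t : ℝ)
    (h0 : i / N ≤ a) (h1 : a + 2 / (N * m) ≤ (i + 1) / N)
    (ht0 : i / N ≤ t) (ht1 : t ≤ (i + 1) / N) :
    ∃ s, a ≤ s ∧ s ≤ a + 2 / (N * m) ∧ zig N m s = t := by
  have hNp : (0:ℝ) < N := by positivity
  have hmp : (0:ℝ) < m := by exact_mod_cast hm.pos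
  rw [div_le_iff₀ hNp] at h0 ht0
  rw [le_div_iff₀ hNp] at h1 ht1
  obtain ⟨s, hs0, hs1, hs⟩ := tri_cover (m * (N * a - i)) (y := N * t - i)
    ⟨by linarith, by linarith⟩
  have e : a + 2 / (N * m) = (m * (N * a - i) + 2) / (N * m) + i / N := by field_simp; ring
  have e0 : a = (m * (N * a - i)) / (N * m) + i / N := by field_simp; ring
  have g0 : a ≤ s / (N * m) + i / N := by
    rw [e0]; gcongr
  have g1 : s / (N * m) + i / N ≤ a + 2 / (N * m) := by rw [e]; gcongr
  refine ⟨s / (N * m) + i / N, g0, g1, ?_⟩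
  rw [zig_win N m hN hm i (by nlinarith) (by nlinarith)]
  have : (m:ℝ) * (N * (s / (N * m) + i / N) - i) = s := by field_simp; ring
  rw [this, hs]
  field_simp
  ring

/-! ### The fold map at zero -/

noncomputable def fold (p x : ℝ) : ℝ := max (p - 2 * x) (min x (2 * x - p))

lemma fold_integral (p : ℝ) (hp : 0 ≤ p) (hp1 : p ≤ 1) (U : ℝ → ℝ) (hU : Continuous U) :
    ∫ x in (0:ℝ)..1, U (fold p x) = ∫ x in (0:ℝ)..1, U x := by
  have hc : Continuous fun x => U (fold p x) := by unfold fold; fun_prop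
  have hi : ∀ a b : ℝ, IntervalIntegrable (fun x => U (fold p x)) volume a b :=
    fun a b => hc.intervalIntegrable a b
  have e1 : ∫ x in (0:ℝ)..(p / 2), U (fold p x) = ∫ x in (0:ℝ)..(p / 2), U (p - 2 * x) := by
    apply intervalIntegral.integral_congr
    intro x hx
    rw [uIcc_of_le (by linarith)] at hx
    simp only [fold]
    rw [max_eq_left]
    exact (min_le_right _ _).trans (by linarith [hx.2])
  have e2 : ∫ x in (p / 2)..p, U (fold p x) = ∫ x in (p / 2)..p, U (2 * x - p) := by
    apply intervalIntegral.integral_congr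
    intro x hx
    rw [uIcc_of_le (by linarith)] at hx
    simp only [fold]
    rw [min_eq_right (by linarith [hx.2]), max_eq_right (by linarith [hx.1])]
  have e3 : ∫ x in p..(1:ℝ), U (fold p x) = ∫ x in p..(1:ℝ), U x := by
    apply intervalIntegral.integral_congr
    intro x hx
    rw [uIcc_of_le hp1] at hx
    simp only [fold]
    rw [min_eq_left (by linarith [hx.1]), max_eq_right (by linarith [hx.1])]
  rw [← intervalIntegral.integral_add_adjacent_intervals (hi 0 (p / 2)) (hi (p / 2) 1),
    ← intervalIntegral.integral_add_adjacent_intervals (hi (p / 2) p) (hi p 1), e1, e2, e3,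
    intervalIntegral.integral_comp_sub_mul _ two_ne_zero,
    intervalIntegral.integral_comp_mul_sub _ two_ne_zero,
    ← intervalIntegral.integral_add_adjacent_intervals (hU.intervalIntegrable 0 p)
      (hU.intervalIntegrable p 1)]
  have a1 : p - 2 * (p / 2) = 0 := by ring
  have a2 : p - 2 * 0 = p := by ring
  have a3 : 2 * (p / 2) - p = 0 := by ring
  have a4 : 2 * p - p = p := by ring
  rw [a1, a2, a3, a4, smul_eq_mul]
  ring

lemma fold_lo {p x : ℝ} (hxp : x ≤ p) : fold p x = |2 * x - p| := by
  unfold fold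
  rw [min_eq_right (by linarith)]
  rcases abs_cases (2 * x - p) with h | h
  · rw [h.1, max_eq_right (by linarith)]
  · rw [h.1, max_eq_left (by linarith)]; ring

lemma fold_hi {p x : ℝ} (hp : 0 ≤ p) (hxp : p ≤ x) : fold p x = x := by
  unfold fold
  rw [min_eq_left (by linarith), max_eq_right (by linarith)]

lemma fold_near {p x : ℝ} (hp : 0 ≤ p) (hx : 0 ≤ x) : |fold p x - x| ≤ p := by
  rcases le_total x p with h | h
  · rw [fold_lo h]
    rcases abs_cases (2 * x - p) with h | h <;> rw [abs_le] <;> constructor <;> linarith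
  · rw [fold_hi hp h]; simpa using hp

lemma fold_mem {p : ℝ} (hp : 0 ≤ p) (hp1 : p ≤ 1) (x : ℝ) (hx : x ∈ Icc (0:ℝ) 1) :
    fold p x ∈ Icc (0:ℝ) 1 := by
  rcases le_total x p with h | h
  · rw [fold_lo h]
    refine ⟨abs_nonneg _, ?_⟩
    rw [abs_le]; constructor <;> linarith [hx.1]
  · rw [fold_hi hp h]; exact hx

lemma fold_cover {p t w : ℝ} (hp : 0 ≤ p) (ht : 0 ≤ t) (htw : t ≤ w) (hpw : p ≤ w) :
    ∃ s, 0 ≤ s ∧ s ≤ w ∧ fold p s = t := by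
  rcases le_total t p with h | h
  · refine ⟨(t + p) / 2, by linarith, by linarith, ?_⟩
    rw [fold_lo (by linarith)]
    have : 2 * ((t + p) / 2) - p = t := by ring
    rw [this, abs_of_nonneg ht]
  · exact ⟨t, ht, htw, fold_hi hp h⟩

lemma exists_fold (p : ℝ) (hp : 0 ≤ p) (hp1 : p ≤ 1) :
    ∃ F : CLam, ∀ x : unitInterval, (F.1 x : ℝ) = fold p x :=
  exists_clam _ (by unfold fold; fun_prop) (fold_mem hp hp1) (fold_integral p hp hp1)

end NMT

namespace NMT

/-- slope greater than `n` -/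
def PosAt (g : unitInterval → ℝ) (n : ℝ) (x t : unitInterval) : Prop :=
  0 < (g t - g x - n * ((t:ℝ) - x)) * ((t:ℝ) - x)

/-- slope less than `-n` -/
def NegAt (g : unitInterval → ℝ) (n : ℝ) (x t : unitInterval) : Prop :=
  (g t - g x + n * ((t:ℝ) - x)) * ((t:ℝ) - x) < 0

lemma pos_right {g : unitInterval → ℝ} {n η c : ℝ} (hn : 0 ≤ n) (hc : 0 < c) (h : n * η < c)
    {x s : unitInterval} (h0 : (x:ℝ) ≤ s) (h1 : (s:ℝ) ≤ x + η) (hg : g x + c ≤ g s) :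
    PosAt g n x s := by
  have hne : (x:ℝ) ≠ s := by
    intro e
    have : x = s := Subtype.ext e
    subst this; linarith
  have hlt := lt_of_le_of_ne h0 hne
  unfold PosAt
  apply mul_pos
  · nlinarith
  · linarith

lemma pos_left {g : unitInterval → ℝ} {n η c : ℝ} (hn : 0 ≤ n) (hc : 0 < c) (h : n * η < c)
    {x s : unitInterval} (h0 : (s:ℝ) ≤ x) (h1 : (x:ℝ) - η ≤ s) (hg : g s ≤ g x - c) :
    PosAt g n x s := by
  have hne : (s:ℝ) ≠ x := by
    intro e
    have : s = x := Subtype.ext e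
    subst this; linarith
  have hlt := lt_of_le_of_ne h0 hne
  unfold PosAt
  apply mul_pos_of_neg_of_neg
  · nlinarith
  · linarith

lemma neg_iff {g : unitInterval → ℝ} {n : ℝ} {x s : unitInterval} :
    NegAt g n x s ↔ PosAt (fun t => - g t) n x s := by
  unfold NegAt PosAt
  have : (-g s - -g x - n * ((s:ℝ) - x)) * ((s:ℝ) - x) =
    - ((g s - g x + n * ((s:ℝ) - x)) * ((s:ℝ) - x)) := by ring
  rw [this, neg_pos]

lemma neg_right {g : unitInterval → ℝ} {n η c : ℝ} (hn : 0 ≤ n) (hc : 0 < c) (h : n * η < c)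
    {x s : unitInterval} (h0 : (x:ℝ) ≤ s) (h1 : (s:ℝ) ≤ x + η) (hg : g s ≤ g x - c) :
    NegAt g n x s :=
  neg_iff.2 (pos_right hn hc h h0 h1 (by linarith))

lemma neg_left {g : unitInterval → ℝ} {n η c : ℝ} (hn : 0 ≤ n) (hc : 0 < c) (h : n * η < c)
    {x s : unitInterval} (h0 : (s:ℝ) ≤ x) (h1 : (x:ℝ) - η ≤ s) (hg : g x + c ≤ g s) :
    NegAt g n x s :=
  neg_iff.2 (pos_left hn hc h h0 h1 (by linarith))

lemma local_lemma (g : unitInterval → ℝ) (x : unitInterval) {n η c : ℝ} (q : ℝ)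
    (hn : 0 ≤ n) (hc : 0 < c) (h : n * η < c)
    (hq : c ≤ |g x - q| → (∃ s : unitInterval, (s:ℝ) ≤ x ∧ (x:ℝ) - η ≤ s ∧ g s = q) ∧
      (∃ s : unitInterval, (x:ℝ) ≤ s ∧ (s:ℝ) ≤ x + η ∧ g s = q))
    (hP : ∃ s : unitInterval, ((x:ℝ) ≤ s ∧ (s:ℝ) ≤ x + η ∧ q + 2 * c ≤ g s) ∨
      ((s:ℝ) ≤ x ∧ (x:ℝ) - η ≤ s ∧ g s ≤ q - 2 * c))
    (hN : ∃ s : unitInterval, ((x:ℝ) ≤ s ∧ (s:ℝ) ≤ x + η ∧ g s ≤ q - 2 * c) ∨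
      ((s:ℝ) ≤ x ∧ (x:ℝ) - η ≤ s ∧ q + 2 * c ≤ g s)) :
    (∃ t, PosAt g n x t) ∧ (∃ t, NegAt g n x t) := by
  rcases le_or_gt c |g x - q| with hy | hy
  · obtain ⟨⟨s, a1, a2, a3⟩, ⟨s', b1, b2, b3⟩⟩ := hq hy
    rcases le_abs.1 hy with hy | hy
    · exact ⟨⟨s, pos_left hn hc h a1 a2 (by linarith)⟩,
        ⟨s', neg_right hn hc h b1 b2 (by linarith)⟩⟩
    · exact ⟨⟨s', pos_right hn hc h b1 b2 (by linarith)⟩,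
        ⟨s, neg_left hn hc h a1 a2 (by linarith)⟩⟩
  · rw [abs_lt] at hy
    constructor
    · obtain ⟨s, ⟨a, b, d⟩ | ⟨a, b, d⟩⟩ := hP
      · exact ⟨s, pos_right hn hc h a b (by linarith)⟩
      · exact ⟨s, pos_left hn hc h a b (by linarith)⟩
    · obtain ⟨s, ⟨a, b, d⟩ | ⟨a, b, d⟩⟩ := hN
      · exact ⟨s, neg_right hn hc h a b (by linarith)⟩
      · exact ⟨s, neg_left hn hc h a b (by linarith)⟩

/-- real valued version -/
def ev (f : CLam) : unitInterval → ℝ := fun x => (f.1 x : ℝ)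

lemma ev_cont : Continuous fun p : CLam × unitInterval => ev p.1 p.2 := by
  unfold ev
  exact continuous_subtype_val.comp
    (continuous_eval.comp ((continuous_subtype_val.comp continuous_fst).prodMk continuous_snd))

def U (n : ℝ) : Set CLam := {f | ∀ x, (∃ t, PosAt (ev f) n x t) ∧ (∃ t, NegAt (ev f) n x t)}

lemma ev_cont' (t : unitInterval) : Continuous fun p : CLam × unitInterval => ev p.1 t :=
  ev_cont.comp (continuous_fst.prodMk continuous_const)

lemma isOpen_U (n : ℝ) : IsOpen (U n) := by
  have hO : IsOpen {p : CLam × unitInterval |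
      (∃ t, PosAt (ev p.1) n p.2 t) ∧ (∃ t, NegAt (ev p.1) n p.2 t)} := by
    have e : {p : CLam × unitInterval |
      (∃ t, PosAt (ev p.1) n p.2 t) ∧ (∃ t, NegAt (ev p.1) n p.2 t)} =
      (⋃ t, {p | PosAt (ev p.1) n p.2 t}) ∩ (⋃ t, {p | NegAt (ev p.1) n p.2 t}) := by
      ext p; simp
    rw [e]
    refine (isOpen_iUnion fun t => ?_).inter (isOpen_iUnion fun t => ?_)
    · refine isOpen_lt continuous_const ?_
      have := ev_cont' t
      have := ev_cont
      fun_prop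
    · refine isOpen_lt ?_ continuous_const
      have := ev_cont' t
      have := ev_cont
      fun_prop
  have hC := isClosedMap_fst_of_compactSpace (X := CLam) (Y := unitInterval) _ hO.isClosed_compl
  have : U n = (Prod.fst '' {p : CLam × unitInterval |
      (∃ t, PosAt (ev p.1) n p.2 t) ∧ (∃ t, NegAt (ev p.1) n p.2 t)}ᶜ)ᶜ := by
    ext f
    constructor
    · rintro hf ⟨⟨f', x⟩, hp, rfl⟩
      exact hp (hf x)
    · intro hf x
      by_contra hx
      exact hf ⟨(f, x), hx, rfl⟩
  rw [this]
  exact hC.isOpen_compl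

lemma nonmono (f : CLam) (hf : ∀ n : ℕ, f ∈ U n) : NonmonotonicType (ev f) := by
  have hr : ∀ x t, |ev f t - ev f x| ≤ 1 := by
    intro x t
    have h1 := (f.1 x).2
    have h2 := (f.1 t).2
    rw [abs_le]
    unfold ev
    constructor <;> linarith [h1.1, h1.2, h2.1, h2.2]
  have key : ∀ g : unitInterval → ℝ, (∀ x t, |g t - g x| ≤ 1) →
      (∀ n : ℕ, ∀ x, ∃ t, NegAt g n x t) → ∀ γ x, ¬ NonDecreasingAt (fun t => g t - γ * t) x := by
    rintro g hg hn γ x ⟨δ, hδ, h1, h2⟩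
    obtain ⟨n, hn'⟩ := exists_nat_gt (max (-γ) (1 / δ))
    obtain ⟨t, ht⟩ := hn n x
    have a1 : -γ < n := (le_max_left _ _).trans_lt hn'
    have a2 : 1 / δ < n := (le_max_right _ _).trans_lt hn'
    rw [div_lt_iff₀ hδ] at a2
    have a3 := abs_le.1 (hg x t)
    unfold NegAt at ht
    rcases lt_trichotomy (t:ℝ) x with h | h | h
    · have hlt : 0 < g t - g x + n * ((t:ℝ) - x) := by
        by_contra hh
        push Not at hh
        nlinarith [mul_nonneg_of_nonpos_of_nonpos hh (by linarith : (t:ℝ) - x ≤ 0)]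
      have hd : (x:ℝ) - δ < t := by
        by_contra hh
        push Not at hh
        nlinarith [(Nat.cast_nonneg n : (0:ℝ) ≤ n)]
      have := h1 t hd h
      simp only at this
      nlinarith
    · rw [h] at ht; simp at ht
    · have hlt : g t - g x + n * ((t:ℝ) - x) < 0 := by
        by_contra hh
        push Not at hh
        nlinarith [mul_nonneg hh (by linarith : 0 ≤ (t:ℝ) - x)]
      have hd : (t:ℝ) < x + δ := by
        by_contra hh
        push Not at hh
        nlinarith [(Nat.cast_nonneg n : (0:ℝ) ≤ n)]
      have := h2 t h hd
      simp only at this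
      nlinarith
  rintro x ⟨γ, h | h⟩
  · exact key _ hr (fun n x => (hf n x).2) γ x h
  · refine key (fun t => - ev f t) ?_ (fun n x => ?_) (-γ) x ?_
    · intro x t
      have := hr t x
      have e : -ev f t - -ev f x = ev f x - ev f t := by ring
      rw [e]; exact this
    · obtain ⟨t, ht⟩ := (hf n x).1
      refine ⟨t, neg_iff.2 ?_⟩
      simpa using ht
    · have e : (fun t : unitInterval => - ev f t - -γ * t) =
        fun t : unitInterval => -(ev f t - γ * t) := by
        funext t; ring
      rw [e]; exact h

/-! ### Non-monotonicity at a point -/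

def G (r : unitInterval) (δ : ℝ) : Set CLam :=
  {f | (∃ t : unitInterval, |(t:ℝ) - r| ≤ δ ∧ PosAt (ev f) 0 r t) ∧
       (∃ t : unitInterval, |(t:ℝ) - r| ≤ δ ∧ NegAt (ev f) 0 r t)}

lemma isOpen_G (r : unitInterval) (δ : ℝ) : IsOpen (G r δ) := by
  have e : G r δ = (⋃ t : unitInterval, {f | |(t:ℝ) - r| ≤ δ ∧ PosAt (ev f) 0 r t}) ∩
      (⋃ t : unitInterval, {f | |(t:ℝ) - r| ≤ δ ∧ NegAt (ev f) 0 r t}) := by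
    ext f; simp [G]
  have hc : ∀ t : unitInterval, Continuous fun f : CLam => ev f t := fun t =>
    ev_cont.comp (continuous_id.prodMk continuous_const)
  rw [e]
  refine (isOpen_iUnion fun t => ?_).inter (isOpen_iUnion fun t => ?_)
  · refine IsOpen.and isOpen_const (isOpen_lt continuous_const ?_)
    have := hc t
    have := hc r
    fun_prop
  · refine IsOpen.and isOpen_const (isOpen_lt ?_ continuous_const)
    have := hc t
    have := hc r
    fun_prop

lemma dist_lt {f g : CLam} {ε : ℝ} : dist f g < ε ↔ ∀ x, |ev f x - ev g x| < ε := by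
  rw [Subtype.dist_eq, ContinuousMap.dist_lt_iff_of_nonempty]
  rfl

lemma modulus (f : CLam) {ε : ℝ} (hε : 0 < ε) :
    ∃ δ > 0, ∀ x y : unitInterval, |(x:ℝ) - y| < δ → |ev f x - ev f y| < ε := by
  have := CompactSpace.uniformContinuous_of_continuous f.1.continuous
  obtain ⟨δ, hδ, h⟩ := Metric.uniformContinuous_iff.1 this ε hε
  exact ⟨δ, hδ, fun x y hxy => h hxy⟩

lemma dense_G_int (r : unitInterval) (h0 : (0:ℝ) < r) (h1 : (r:ℝ) < 1) {δ : ℝ} (hδ : 0 < δ) :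
    Dense (G r δ) := by
  rw [Metric.dense_iff]
  intro f ε hε
  obtain ⟨w, hw, hmod⟩ := modulus f hε
  -- window count
  obtain ⟨N, hNpos, hNw, hNδ, i, hi0, hi1⟩ : ∃ N : ℕ, 0 < N ∧ 1 / (N:ℝ) < w ∧ 1 / (N:ℝ) < δ ∧
      ∃ i : ℤ, (i:ℝ) < N * r ∧ (N:ℝ) * r < i + 1 := by
    obtain ⟨N0, hN0⟩ := exists_nat_gt (max (1 / w) (1 / δ))
    have a1 : 1 / w < N0 := (le_max_left _ _).trans_lt hN0
    have a2 : 1 / δ < N0 := (le_max_right _ _).trans_lt hN0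
    have gen : ∀ N : ℕ, N0 ≤ N → 0 < N ∧ 1 / (N:ℝ) < w ∧ 1 / (N:ℝ) < δ := by
      intro N hN
      have hN' : (N0:ℝ) ≤ N := by exact_mod_cast hN
      have hp : (0:ℝ) < N := by have : 0 < 1 / w := by positivity
                                linarith
      refine ⟨by exact_mod_cast hp, ?_, ?_⟩
      · rw [div_lt_comm₀ hp hw]; linarith
      · rw [div_lt_comm₀ hp hδ]; linarith
    have fl : ∀ N : ℕ, ((⌊(N:ℝ) * r⌋ : ℤ) : ℝ) ≠ N * r →
        ∃ i : ℤ, (i:ℝ) < N * r ∧ (N:ℝ) * r < i + 1 := fun N hN =>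
      ⟨⌊(N:ℝ) * r⌋, lt_of_le_of_ne (Int.floor_le _) hN, Int.lt_floor_add_one _⟩
    by_cases hA : ((⌊(N0:ℝ) * r⌋ : ℤ) : ℝ) = N0 * r
    · refine ⟨N0 + 1, (gen _ (by omega)).1, (gen _ (by omega)).2.1, (gen _ (by omega)).2.2, fl _ ?_⟩
      intro hB
      push_cast at hB
      set k := ⌊(N0:ℝ) * r⌋
      set l := ⌊((N0:ℝ) + 1) * r⌋
      have e : ((l - k : ℤ) : ℝ) = r := by push_cast; linarith
      have c0 : (0:ℝ) < ((l - k : ℤ) : ℝ) := by rw [e]; exact h0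
      have c1 : ((l - k : ℤ) : ℝ) < 1 := by rw [e]; exact h1
      have c0' : 0 < l - k := by exact_mod_cast c0
      have c1' : l - k < 1 := by exact_mod_cast c1
      omega
    · exact ⟨N0, (gen _ le_rfl).1, (gen _ le_rfl).2.1, (gen _ le_rfl).2.2, fl _ hA⟩
  have hNp : (0:ℝ) < N := by exact_mod_cast hNpos
  have hi0' : (i:ℝ) / N < r := by rw [div_lt_iff₀ hNp]; linarith
  have hi1' : (r:ℝ) < (i + 1) / N := by rw [lt_div_iff₀ hNp]; linarith
  have hin : 0 ≤ i := by
    have : (-1:ℝ) < i := by nlinarith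
    have : (-1:ℤ) < i := by exact_mod_cast this
    omega
  have hiN : i + 1 ≤ N := by
    have : (i:ℝ) < N := by nlinarith
    exact_mod_cast this
  -- number of laps
  obtain ⟨m, hm, hm0, hm1, hm2⟩ : ∃ m : ℕ, Odd m ∧ (i:ℝ) / N ≤ r - 2 / (N * m) ∧
      (r:ℝ) + 2 / (N * m) ≤ (i + 1) / N ∧ 2 / ((N:ℝ) * m) ≤ δ := by
    set d := min (min ((r:ℝ) - i / N) ((i + 1) / N - r)) δ
    have hd : 0 < d := lt_min (lt_min (by linarith) (by linarith)) hδ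
    obtain ⟨k, hk⟩ := exists_nat_gt (2 / (N * d))
    refine ⟨2 * k + 1, ⟨k, rfl⟩, ?_⟩
    have : 2 / ((N:ℝ) * ((2 * k + 1 : ℕ):ℝ)) ≤ d := by
      rw [div_lt_iff₀ (by positivity)] at hk
      rw [div_le_iff₀ (by positivity)]
      push_cast
      nlinarith [mul_pos hNp hd, (Nat.cast_nonneg k : (0:ℝ) ≤ k)]
    have l1 : d ≤ (r:ℝ) - i / N := (min_le_left _ _).trans (min_le_left _ _)
    have l2 : d ≤ (i + 1) / N - r := (min_le_left _ _).trans (min_le_right _ _)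
    have l3 : d ≤ δ := min_le_right _ _
    exact ⟨by linarith, by linarith, by linarith⟩
  obtain ⟨Z, hZ⟩ := exists_zig N m hNpos hm
  have hη : 0 < 2 / ((N:ℝ) * m) := by have := hm.pos; positivity
  have hb0 : (0:ℝ) ≤ i / N := div_nonneg (by exact_mod_cast hin) hNp.le
  have hb1 : ((i:ℝ) + 1) / N ≤ 1 := by
    rw [div_le_one hNp]; exact_mod_cast hiN
  refine ⟨comp f Z, ?_, ?_⟩
  · rw [Metric.mem_ball, dist_lt]
    intro x
    apply hmod
    rw [hZ]
    exact (zig_near N m hNpos x).trans_lt hNw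
  · obtain ⟨t, ht, hne⟩ := nonconst f ⟨i / N, hb0, by linarith⟩ ⟨(i + 1) / N, by linarith, hb1⟩
      (show (i:ℝ) / N < (i + 1) / N by linarith) ((comp f Z).1 r)
    have ht0 : (i:ℝ) / N ≤ t := ht.1
    have ht1 : (t:ℝ) ≤ (i + 1) / N := ht.2
    obtain ⟨s1, a1, a2, a3⟩ := zig_cover N m hNpos hm i (r - 2 / (N * m)) t hm0
      (by linarith) ht0 ht1
    obtain ⟨s2, b1, b2, b3⟩ := zig_cover N m hNpos hm i r t hi0'.le hm1 ht0 ht1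
    have v1 : ∀ s : unitInterval, zig N m s = t → ev (comp f Z) s = ev f t := by
      intro s hs
      have : Z.1 s = t := Subtype.ext (by rw [hZ, hs])
      unfold ev
      rw [comp_apply, this]
    set S1 : unitInterval := ⟨s1, by linarith, by linarith⟩ with hS1
    set S2 : unitInterval := ⟨s2, by linarith, by linarith⟩ with hS2
    have V1 := v1 S1 a3
    have V2 := v1 S2 b3
    have d1 : |(S1:ℝ) - r| ≤ δ := by
      show |s1 - r| ≤ δ
      rw [abs_le]; constructor <;> linarith
    have d2 : |(S2:ℝ) - r| ≤ δ := by
      show |s2 - r| ≤ δ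
      rw [abs_le]; constructor <;> linarith
    have hne' : ev f t ≠ ev (comp f Z) r := fun h => hne (Subtype.ext h)
    have L1 : (S1:ℝ) ≤ r := by show s1 ≤ r; linarith
    have L2 : (r:ℝ) ≤ S2 := b1
    have L1' : (r:ℝ) - 1 ≤ S1 := by linarith [S1.2.1]
    have L2' : (S2:ℝ) ≤ r + 1 := by linarith [S2.2.2]
    rcases lt_or_gt_of_ne hne' with hh | hh
    · have hc : 0 < ev (comp f Z) r - ev f t := by linarith
      exact ⟨⟨S1, d1, pos_left le_rfl hc (by linarith) L1 L1' (by linarith)⟩,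
        ⟨S2, d2, neg_right le_rfl hc (by linarith) L2 L2' (by linarith)⟩⟩
    · have hc : 0 < ev f t - ev (comp f Z) r := by linarith
      exact ⟨⟨S2, d2, pos_right le_rfl hc (by linarith) L2 L2' (by linarith)⟩,
        ⟨S1, d1, neg_left le_rfl hc (by linarith) L1 L1' (by linarith)⟩⟩

lemma dense_G_zero {δ : ℝ} (hδ : 0 < δ) : Dense (G 0 δ) := by
  rw [Metric.dense_iff]
  intro f ε hε
  obtain ⟨w0, hw0, hmod⟩ := modulus f hε
  obtain ⟨w, hw, hww, hwδ, hw1⟩ : ∃ w : ℝ, 0 < w ∧ w < w0 ∧ w ≤ δ ∧ w ≤ 1 :=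
    ⟨min (w0 / 2) (min δ 1), by positivity, (min_le_left _ _).trans_lt (by linarith),
      (min_le_right _ _).trans (min_le_left _ _), (min_le_right _ _).trans (min_le_right _ _)⟩
  obtain ⟨b, hb, hne⟩ := nonconst f 0 ⟨w, hw.le, hw1⟩ (show (0:ℝ) < w from hw) (f.1 0)
  have hbw : (b:ℝ) ≤ w := hb.2
  -- two values and an intermediate point
  obtain ⟨lo, hi, p, hlo, hhi, hp, h1, h2⟩ : ∃ lo hi p : unitInterval, (lo:ℝ) ≤ w ∧ (hi:ℝ) ≤ w ∧
      (p:ℝ) ≤ w ∧ ev f lo < ev f p ∧ ev f p < ev f hi := by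
    have hfc : ContinuousOn (ev f) (Icc 0 b) :=
      (continuous_subtype_val.comp f.1.continuous).continuousOn
    have hne' : ev f b ≠ ev f 0 := fun h => hne (Subtype.ext h)
    rcases lt_or_gt_of_ne hne' with hh | hh
    · obtain ⟨p, hp, hpv⟩ := intermediate_value_Icc' hb.1 hfc
        (show (ev f 0 + ev f b) / 2 ∈ Icc (ev f b) (ev f 0) from ⟨by linarith, by linarith⟩)
      exact ⟨b, 0, p, hbw, hw.le, le_trans hp.2 hbw, by linarith, by linarith⟩
    · obtain ⟨p, hp, hpv⟩ := intermediate_value_Icc hb.1 hfc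
        (show (ev f 0 + ev f b) / 2 ∈ Icc (ev f 0) (ev f b) from ⟨by linarith, by linarith⟩)
      exact ⟨0, b, p, hw.le, hbw, le_trans hp.2 hbw, by linarith, by linarith⟩
  obtain ⟨F, hF⟩ := exists_fold p p.2.1 p.2.2
  have val : ∀ t : unitInterval, (t:ℝ) ≤ w → ∃ s : unitInterval, (s:ℝ) ≤ w ∧
      ev (comp f F) s = ev f t := by
    intro t ht
    obtain ⟨s, s0, s1, s2⟩ := fold_cover p.2.1 t.2.1 ht hp
    refine ⟨⟨s, s0, by linarith⟩, s1, ?_⟩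
    have : F.1 ⟨s, s0, by linarith⟩ = t := Subtype.ext (by rw [hF]; exact s2)
    unfold ev
    rw [comp_apply, this]
  have v0 : ev (comp f F) 0 = ev f p := by
    have : F.1 0 = p := Subtype.ext (by
      rw [hF]
      show fold p 0 = p
      rw [fold_lo p.2.1]; simp [abs_of_nonneg p.2.1])
    unfold ev
    rw [comp_apply, this]
  refine ⟨comp f F, ?_, ?_⟩
  · rw [Metric.mem_ball, dist_lt]
    intro x
    apply hmod
    rw [hF]
    exact (fold_near p.2.1 x.2.1).trans_lt (by linarith)
  · obtain ⟨sl, l1, l2⟩ := val lo hlo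
    obtain ⟨sh, u1, u2⟩ := val hi hhi
    have z : ((0:unitInterval):ℝ) = 0 := rfl
    have dd : ∀ s : unitInterval, (s:ℝ) ≤ w → |(s:ℝ) - (0:unitInterval)| ≤ δ := by
      intro s hs
      rw [z, sub_zero, abs_of_nonneg s.2.1]; linarith
    refine ⟨⟨sh, dd _ u1, ?_⟩, ⟨sl, dd _ l1, ?_⟩⟩
    · exact pos_right (η := 1) (c := ev f hi - ev f p) le_rfl (by linarith) (by linarith)
        sh.2.1 (by linarith [sh.2.2, z]) (by linarith)
    · exact neg_right (η := 1) (c := ev f p - ev f lo) le_rfl (by linarith) (by linarith)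
        sl.2.1 (by linarith [sl.2.2, z]) (by linarith)

lemma dense_G_one {δ : ℝ} (hδ : 0 < δ) : Dense (G 1 δ) := by
  rw [Metric.dense_iff]
  intro f ε hε
  obtain ⟨g, hg, ⟨t, t1, t2⟩, ⟨s, s1, s2⟩⟩ :=
    Metric.dense_iff.1 (dense_G_zero hδ) (comp f refl) ε hε
  have e : ∀ x, ev (comp g refl) x = ev g (unitInterval.symm x) := fun x => rfl
  have z : ((0:unitInterval):ℝ) = 0 := rfl
  have o : ((1:unitInterval):ℝ) = 1 := rfl
  have d : ∀ x : unitInterval, |((unitInterval.symm x : unitInterval):ℝ) - (1:unitInterval)| =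
      |(x:ℝ) - (0:unitInterval)| := by
    intro x
    rw [unitInterval.coe_symm_eq, z, o, ← abs_neg]; congr 1; ring
  refine ⟨comp g refl, ?_, ⟨unitInterval.symm s, by rw [d]; exact s1, ?_⟩,
    ⟨unitInterval.symm t, by rw [d]; exact t1, ?_⟩⟩
  · rw [Metric.mem_ball, dist_lt] at hg ⊢
    intro x
    have := hg (unitInterval.symm x)
    have e2 : ev (comp f refl) (unitInterval.symm x) = ev f x := by
      show ev f (unitInterval.symm (unitInterval.symm x)) = _
      rw [unitInterval.symm_symm]
    rw [e2] at this
    exact this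
  · unfold NegAt at s2
    unfold PosAt
    rw [e, e, unitInterval.symm_symm, unitInterval.symm_one, unitInterval.coe_symm_eq, o]
    rw [z] at s2
    nlinarith
  · unfold PosAt at t2
    unfold NegAt
    rw [e, e, unitInterval.symm_symm, unitInterval.symm_one, unitInterval.coe_symm_eq, o]
    rw [z] at t2
    nlinarith

lemma dense_G (r : unitInterval) {δ : ℝ} (hδ : 0 < δ) : Dense (G r δ) := by
  rcases eq_or_lt_of_le r.2.1 with h | h
  · have : r = 0 := Subtype.ext h.symm
    rw [this]; exact dense_G_zero hδ
  rcases eq_or_lt_of_le r.2.2 with h' | h'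
  · have : r = 1 := Subtype.ext h'
    rw [this]; exact dense_G_one hδ
  exact dense_G_int r h h' hδ

end NMT

namespace NMT

lemma gap_G (f : CLam) (r : unitInterval) (δ : ℝ) (h : f ∈ G r δ) :
    ∀ᶠ c in nhdsWithin (0:ℝ) (Ioi 0),
      (∃ t : unitInterval, |(t:ℝ) - r| ≤ δ ∧
        (((r:ℝ) < t ∧ ev f r + 2 * c ≤ ev f t) ∨ ((t:ℝ) < r ∧ ev f t ≤ ev f r - 2 * c))) ∧
      (∃ t : unitInterval, |(t:ℝ) - r| ≤ δ ∧
        (((r:ℝ) < t ∧ ev f t ≤ ev f r - 2 * c) ∨ ((t:ℝ) < r ∧ ev f r + 2 * c ≤ ev f t))) := by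
  obtain ⟨⟨t, t1, t2⟩, ⟨s, s1, s2⟩⟩ := h
  have small : ∀ d : ℝ, 0 < d → ∀ᶠ c in nhdsWithin (0:ℝ) (Ioi 0), 2 * c ≤ d := by
    intro d hd
    filter_upwards [Ioc_mem_nhdsGT (show (0:ℝ) < d / 2 by linarith)] with c hc
    linarith [hc.2]
  refine Filter.Eventually.and ?_ ?_
  · unfold PosAt at t2
    rw [zero_mul, sub_zero] at t2
    rcases pos_and_pos_or_neg_and_neg_of_mul_pos t2 with ⟨a, b⟩ | ⟨a, b⟩
    · filter_upwards [small _ a] with c hc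
      exact ⟨t, t1, Or.inl ⟨by linarith, by linarith⟩⟩
    · filter_upwards [small _ (neg_pos.2 a)] with c hc
      exact ⟨t, t1, Or.inr ⟨by linarith, by linarith⟩⟩
  · unfold NegAt at s2
    rw [zero_mul, add_zero] at s2
    rcases mul_neg_iff.1 s2 with ⟨a, b⟩ | ⟨a, b⟩
    · filter_upwards [small _ a] with c hc
      exact ⟨s, s1, Or.inr ⟨by linarith, by linarith⟩⟩
    · filter_upwards [small _ (neg_pos.2 a)] with c hc
      exact ⟨s, s1, Or.inl ⟨by linarith, by linarith⟩⟩

/-- The grid point `i / N`. -/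
noncomputable def pt (N : ℕ) (i : Fin (N + 1)) : unitInterval :=
  ⟨(i:ℝ) / N, by positivity, by
    have : (i:ℝ) ≤ N := by exact_mod_cast Nat.lt_succ_iff.1 i.2
    exact div_le_one_of_le₀ this (by positivity)⟩

lemma main_step (f : CLam) (N : ℕ) (hN : 0 < N) (n : ℝ) (hn : 0 ≤ n)
    (hf : ∀ i, f ∈ G (pt N i) (1 / N)) :
    ∃ Z : CLam, (∀ x, |(Z.1 x : ℝ) - x| ≤ 1 / N) ∧ comp f Z ∈ U n := by
  have hNp : (0:ℝ) < N := by exact_mod_cast hN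
  have E1 := Filter.eventually_all.2 fun i => gap_G f (pt N i) (1 / N) (hf i)
  have E2 : ∀ᶠ c in nhdsWithin (0:ℝ) (Ioi 0), ∀ i : Fin N, ∃ t : unitInterval,
      (i:ℝ) / N ≤ t ∧ (t:ℝ) ≤ (i + 1) / N ∧ 2 * c ≤ |ev f t - ev f (pt N i.castSucc)| := by
    refine Filter.eventually_all.2 fun i => ?_
    have hlt : pt N i.castSucc < pt N i.succ := by
      show ((i.castSucc : Fin (N+1)) : ℝ) / N < ((i.succ : Fin (N+1)) : ℝ) / N
      gcongr
      simp
    obtain ⟨t, ht, hne⟩ := nonconst f _ _ hlt (f.1 (pt N i.castSucc))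
    have hpos : 0 < |ev f t - ev f (pt N i.castSucc)| := by
      rw [abs_pos, sub_ne_zero]
      exact fun h => hne (Subtype.ext h)
    filter_upwards [Ioc_mem_nhdsGT (half_pos hpos)] with c hc
    refine ⟨t, ?_, ?_, by linarith [hc.2]⟩
    · have : (pt N i.castSucc : ℝ) ≤ t := ht.1
      simpa [pt] using this
    · have : (t:ℝ) ≤ pt N i.succ := ht.2
      simpa [pt] using this
  obtain ⟨c, ⟨⟨H1, H2⟩, hc⟩⟩ := ((E1.and E2).and self_mem_nhdsWithin).exists
  have hc : 0 < c := hc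
  obtain ⟨m, hm, hm4, hmn⟩ : ∃ m : ℕ, Odd m ∧ 4 ≤ m ∧ n * (3 * (2 / ((N:ℝ) * m))) < c := by
    obtain ⟨k, hk⟩ := exists_nat_gt (6 * n / (N * c))
    refine ⟨2 * (k + 2) + 1, ⟨k + 2, rfl⟩, by omega, ?_⟩
    rw [div_lt_iff₀ (by positivity)] at hk
    have : n * (3 * (2 / ((N:ℝ) * ((2 * (k + 2) + 1 : ℕ):ℝ)))) =
      6 * n / (N * ((2 * (k + 2) + 1 : ℕ):ℝ)) := by field_simp; ring
    rw [this, div_lt_iff₀ (by positivity)]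
    push_cast
    nlinarith [mul_pos hNp hc, (Nat.cast_nonneg k : (0:ℝ) ≤ k),
      mul_nonneg (mul_pos hNp hc).le (Nat.cast_nonneg k : (0:ℝ) ≤ k)]
  obtain ⟨Z, hZ⟩ := exists_zig N m hN hm
  set η : ℝ := 2 / ((N:ℝ) * m) with hη
  have hmp : (0:ℝ) < m := by exact_mod_cast hm.pos
  have hηpos : 0 < η := by positivity
  have hη2 : 2 * η ≤ 1 / N := by
    have : (4:ℝ) ≤ m := by exact_mod_cast hm4
    rw [hη, ← mul_div_assoc, div_le_div_iff₀ (by positivity) hNp]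
    nlinarith
  refine ⟨Z, fun x => by rw [hZ]; exact zig_near N m hN x, ?_⟩
  set g := comp f Z with hg
  have gval : ∀ s t : unitInterval, zig N m s = t → ev g s = ev f t := by
    intro s t hs
    have : Z.1 s = t := Subtype.ext (by rw [hZ, hs])
    unfold ev
    rw [hg, comp_apply, this]
  have cov : ∀ (i : ℕ) (_ : i < N) (a : ℝ) (t : unitInterval), (i:ℝ) / N ≤ a →
      a + η ≤ i / N + 1 / N → (i:ℝ) / N ≤ t → (t:ℝ) ≤ i / N + 1 / N →
      ∃ s : unitInterval, a ≤ s ∧ (s:ℝ) ≤ a + η ∧ ev g s = ev f t := by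
    intro i hi a t h1 h2 h3 h4
    rw [← add_div] at h2 h4
    obtain ⟨s, s1, s2, s3⟩ := zig_cover N m hN hm i a t (by rwa [Int.cast_natCast])
      (by rwa [Int.cast_natCast]) (by rwa [Int.cast_natCast]) (by rwa [Int.cast_natCast])
    have b0 : (0:ℝ) ≤ (i:ℝ) / N := by positivity
    have b1 : ((i:ℝ) + 1) / N ≤ 1 := by
      rw [div_le_one hNp]; exact_mod_cast hi
    exact ⟨⟨s, by linarith, by linarith⟩, s1, s2, gval _ _ s3⟩
  intro x
  by_cases hx : ∃ i : Fin (N + 1), |(x:ℝ) - pt N i| ≤ η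
  · -- near a grid point
    obtain ⟨i, hi⟩ := hx
    obtain ⟨⟨t, t1, t2⟩, ⟨s, s1, s2⟩⟩ := H1 i
    set r := pt N i with hr
    have hrv : (r:ℝ) = (i:ℕ) / N := rfl
    rw [abs_le] at hi
    have gr : ev g r = ev f r := by
      apply gval
      rw [hrv]
      have h := zig_int N m hN hm ((i:ℕ):ℤ)
      rwa [Int.cast_natCast] at h
    have covR : (r:ℝ) < 1 → ∀ t : unitInterval, (r:ℝ) ≤ t → (t:ℝ) ≤ r + 1 / N →
        ∃ s : unitInterval, (x:ℝ) ≤ s ∧ (s:ℝ) ≤ x + 3 * η ∧ ev g s = ev f t := by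
      intro h1 t ht1 ht2
      rw [hrv, div_lt_one hNp] at h1
      obtain ⟨s, a, b, d⟩ := cov i (by exact_mod_cast h1) (r + η) t (by linarith) (by linarith)
        (by linarith) (by linarith)
      exact ⟨s, by linarith, by linarith, d⟩
    have covL : (0:ℝ) < r → ∀ t : unitInterval, (t:ℝ) ≤ r → (r:ℝ) - 1 / N ≤ t →
        ∃ s : unitInterval, (s:ℝ) ≤ x ∧ (x:ℝ) - 3 * η ≤ s ∧ ev g s = ev f t := by
      intro h1 t ht1 ht2
      have hi0 : (i:ℕ) ≠ 0 := by
        intro h0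
        rw [hrv, h0] at h1; simp at h1
      obtain ⟨j, hj⟩ := Nat.exists_eq_succ_of_ne_zero hi0
      have hrj : (r:ℝ) = (j:ℝ) / N + 1 / N := by rw [hrv, hj]; push_cast; ring
      have hjN : j < N := by have := i.2; omega
      obtain ⟨s, a, b, d⟩ := cov j hjN (r - 2 * η) t (by linarith) (by linarith)
        (by linarith) (by linarith)
      exact ⟨s, by linarith, by linarith, d⟩
    rw [abs_le] at t1 s1
    refine local_lemma (ev g) x (η := 3 * η) (c := c) (ev f r) hn hc hmn ?_ ?_ ?_
    · intro hh
      rcases lt_trichotomy (x:ℝ) r with h | h | h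
      · exact ⟨covL (lt_of_le_of_lt x.2.1 h) r le_rfl (by linarith [one_div_pos.2 hNp]),
          ⟨r, h.le, by linarith, gr⟩⟩
      · have : x = r := Subtype.ext h
        rw [this, gr] at hh
        simp at hh
        linarith
      · exact ⟨⟨r, h.le, by linarith, gr⟩,
          covR (lt_of_lt_of_le h x.2.2) r le_rfl (by linarith [one_div_pos.2 hNp])⟩
    · rcases t2 with ⟨h, h'⟩ | ⟨h, h'⟩
      · obtain ⟨u, a, b, d⟩ := covR (lt_of_lt_of_le h t.2.2) t h.le (by linarith)
        exact ⟨u, Or.inl ⟨a, b, by rw [d]; exact h'⟩⟩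
      · obtain ⟨u, a, b, d⟩ := covL (lt_of_le_of_lt t.2.1 h) t h.le (by linarith)
        exact ⟨u, Or.inr ⟨a, b, by rw [d]; exact h'⟩⟩
    · rcases s2 with ⟨h, h'⟩ | ⟨h, h'⟩
      · obtain ⟨u, a, b, d⟩ := covR (lt_of_lt_of_le h s.2.2) s h.le (by linarith)
        exact ⟨u, Or.inl ⟨a, b, by rw [d]; exact h'⟩⟩
      · obtain ⟨u, a, b, d⟩ := covL (lt_of_le_of_lt s.2.1 h) s h.le (by linarith)
        exact ⟨u, Or.inr ⟨a, b, by rw [d]; exact h'⟩⟩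
  · -- in the middle of a window
    push Not at hx
    have hx1 : (x:ℝ) < 1 := by
      refine lt_of_le_of_ne x.2.2 fun h => ?_
      have h1 := hx (Fin.last N)
      have h2 : ((pt N (Fin.last N) : unitInterval) : ℝ) = 1 := by
        simp [pt, hNp.ne']
      rw [h, h2] at h1
      simp at h1
      linarith
    have hx0 : (0:ℝ) ≤ N * x := mul_nonneg hNp.le x.2.1
    have fl := Nat.floor_le hx0
    have fl' := Nat.lt_floor_add_one ((N:ℝ) * x)
    set i := ⌊(N:ℝ) * x⌋₊ with hidef
    have hiN : i < N := by
      have : (i:ℝ) < N := by nlinarith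
      exact_mod_cast this
    have e1 : (i:ℝ) / N ≤ x := by rw [div_le_iff₀ hNp]; linarith
    have e2 : (x:ℝ) ≤ i / N + 1 / N := by
      rw [← add_div, le_div_iff₀ hNp]; linarith
    have f1 := hx (Fin.castSucc ⟨i, hiN⟩)
    have f2 := hx (Fin.succ ⟨i, hiN⟩)
    have p1 : ((pt N (Fin.castSucc ⟨i, hiN⟩) : unitInterval) : ℝ) = i / N := by simp [pt]
    have p2 : ((pt N (Fin.succ ⟨i, hiN⟩) : unitInterval) : ℝ) = i / N + 1 / N := by
      simp [pt]; ring
    rw [p1, abs_of_nonneg (by linarith)] at f1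
    rw [p2, abs_of_nonpos (by linarith)] at f2
    obtain ⟨t, t1, t2, t3⟩ := H2 ⟨i, hiN⟩
    simp only at t1 t2
    rw [add_div] at t2
    set r := pt N (Fin.castSucc ⟨i, hiN⟩) with hr
    have covR : ∀ t : unitInterval, (i:ℝ) / N ≤ t → (t:ℝ) ≤ i / N + 1 / N →
        ∃ s : unitInterval, (x:ℝ) ≤ s ∧ (s:ℝ) ≤ x + 3 * η ∧ ev g s = ev f t := by
      intro t h1 h2
      obtain ⟨s, a, b, d⟩ := cov i hiN x t e1 (by linarith) h1 h2
      exact ⟨s, a, by linarith, d⟩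
    have covL : ∀ t : unitInterval, (i:ℝ) / N ≤ t → (t:ℝ) ≤ i / N + 1 / N →
        ∃ s : unitInterval, (s:ℝ) ≤ x ∧ (x:ℝ) - 3 * η ≤ s ∧ ev g s = ev f t := by
      intro t h1 h2
      obtain ⟨s, a, b, d⟩ := cov i hiN (x - η) t (by linarith) (by linarith) h1 h2
      exact ⟨s, by linarith, by linarith, d⟩
    obtain ⟨sR, a1, a2, a3⟩ := covR t t1 t2
    obtain ⟨sL, b1, b2, b3⟩ := covL t t1 t2
    refine local_lemma (ev g) x (η := 3 * η) (c := c) (ev f r) hn hc hmn ?_ ?_ ?_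
    · intro _
      exact ⟨covL r p1.ge (by linarith), covR r p1.ge (by linarith)⟩
    · rcases le_abs.1 t3 with h | h
      · exact ⟨sR, Or.inl ⟨a1, a2, by linarith⟩⟩
      · exact ⟨sL, Or.inr ⟨b1, b2, by linarith⟩⟩
    · rcases le_abs.1 t3 with h | h
      · exact ⟨sL, Or.inr ⟨b1, b2, by linarith⟩⟩
      · exact ⟨sR, Or.inl ⟨a1, a2, by linarith⟩⟩

lemma dense_U (n : ℝ) (hn : 0 ≤ n) : Dense (U n) := by
  rw [Metric.dense_iff]
  intro f ε hε
  have hε4 : 0 < ε / 4 := by linarith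
  obtain ⟨w, hw, hmod⟩ := modulus f hε4
  obtain ⟨N, hN⟩ := exists_nat_gt (1 / w)
  have hNp : (0:ℝ) < N := lt_trans (by positivity) hN
  have hNw : 1 / (N:ℝ) < w := by rw [div_lt_comm₀ hNp hw]; exact hN
  have hD : Dense (⋂ i, G (pt N i) (1 / N)) :=
    dense_iInter_of_isOpen (fun i => isOpen_G _ _) (fun i => dense_G _ (by positivity))
  obtain ⟨f1, hf1, hf1G⟩ := Metric.dense_iff.1 hD f (ε / 4) hε4
  rw [Metric.mem_ball, dist_lt] at hf1
  obtain ⟨Z, hZ, hU⟩ := main_step f1 N (by exact_mod_cast hNp) n hn (mem_iInter.1 hf1G)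
  refine ⟨comp f1 Z, ?_, hU⟩
  rw [Metric.mem_ball, dist_lt]
  intro x
  have h1 := abs_lt.1 (hf1 (Z.1 x))
  have h2 := abs_lt.1 (hmod (Z.1 x) x ((hZ x).trans_lt hNw))
  have e : ev (comp f1 Z) x = ev f1 (Z.1 x) := rfl
  rw [e, abs_lt]
  constructor <;> linarith

end NMT

/-- There is a dense `G_δ` subset of `C_λ` (uniform topology) every member of which is
of nonmonotonic type. -/
theorem stmt9 :
    ∃ S : Set CLam, IsGδ S ∧ Dense S ∧
      ∀ f ∈ S, NonmonotonicType fun x => ((f : CLam).1 x : ℝ) := by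
  refine ⟨⋂ n : ℕ, NMT.U n, IsGδ.iInter_of_isOpen fun n => NMT.isOpen_U n, ?_, ?_⟩
  · exact dense_iInter_of_isOpen (fun n => NMT.isOpen_U n)
      (fun n => NMT.dense_U n (Nat.cast_nonneg n))
  · intro f hf
    exact NMT.nonmono f (mem_iInter.1 hf)
end

section
/- For every n ∈ ℕ, the set A_n — consisting of all f ∈ C_λ for which there exist γ ∈ [−n,n] and x ∈ [0,1] such that f(t) − γt ≤ f(x) − γx for all t ∈ [0,1] ∩ (x − 1/n, x) and f(t) − γt ≥ f(x) − γx for all t ∈ [0,1] ∩ (x, x + 1/n) — is nowhere dense in C_λ with respect to the uniform metric. -/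
open MeasureTheory Set
open scoped ENNReal

/-- Probability integral transform: continuity of the distribution function. -/
lemma pit_cont (u : C(unitInterval, ℝ))
    (hu : ∀ y, (volume : Measure unitInterval) {s | u s = y} = 0) :
    Continuous (fun y : ℝ => (volume : Measure unitInterval).real {s | u s ≤ y}) := by
  have hm : Measurable u := u.continuous.measurable
  set ν : Measure ℝ := (volume : Measure unitInterval).map u with hν
  have : IsProbabilityMeasure ν := Measure.isProbabilityMeasure_map hm.aemeasurable
  have hF : (fun y : ℝ => (volume : Measure unitInterval).real {s | u s ≤ y})
      = ProbabilityTheory.cdf ν := by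
    ext y
    rw [ProbabilityTheory.cdf_eq_real, measureReal_def, measureReal_def, hν,
      Measure.map_apply hm measurableSet_Iic]
    rfl
  rw [hF, continuous_iff_continuousAt]
  intro y
  rw [(ProbabilityTheory.monotone_cdf ν).continuousAt_iff_leftLim_eq_rightLim,
    StieltjesFunction.rightLim_eq]
  have h1 : ν {y} = 0 := by
    rw [hν, Measure.map_apply hm (measurableSet_singleton y)]
    exact hu y
  have h2 := (ProbabilityTheory.cdf ν).measure_singleton y
  rw [ProbabilityTheory.measure_cdf, h1, eq_comm, ENNReal.ofReal_eq_zero] at h2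
  have h3 := (ProbabilityTheory.monotone_cdf ν).leftLim_le (le_refl y)
  linarith

/-- The transformed map. -/
noncomputable def pitMap (u : C(unitInterval, ℝ))
    (hu : ∀ y, (volume : Measure unitInterval) {s | u s = y} = 0) :
    C(unitInterval, unitInterval) where
  toFun x := ⟨(volume : Measure unitInterval).real {s | u s ≤ u x},
    measureReal_nonneg, measureReal_le_one⟩
  continuous_toFun := ((pit_cont u hu).comp u.continuous).subtype_mk _

lemma pit_mp (u : C(unitInterval, ℝ))
    (hu : ∀ y, (volume : Measure unitInterval) {s | u s = y} = 0) :
    MeasurePreserving (pitMap u hu) volume volume := by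
  have hm : Measurable (pitMap u hu) := (pitMap u hu).continuous.measurable
  refine ⟨hm, ?_⟩
  have : IsProbabilityMeasure ((volume : Measure unitInterval).map (pitMap u hu)) :=
    Measure.isProbabilityMeasure_map hm.aemeasurable
  refine Measure.ext_of_Iic _ _ fun y => ?_
  rw [Measure.map_apply hm measurableSet_Iic, unitInterval.volume_Iic]
  set F : ℝ → ℝ := fun y : ℝ => (volume : Measure unitInterval).real {s | u s ≤ y} with hF
  have hFc : Continuous F := pit_cont u hu
  have hFm : Monotone F := fun a b hab => measureReal_mono (fun s hs => le_trans hs hab)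
  have hset : (pitMap u hu) ⁻¹' Iic y = {s | F (u s) ≤ y} := by
    ext s; rfl
  rw [hset]
  rcases eq_or_lt_of_le y.2.2 with h1 | h1
  · have : {s : unitInterval | F (u s) ≤ y} = univ := by
      ext s; simp only [mem_ofPred_eq, mem_univ, iff_true, h1]; exact measureReal_le_one
    rw [this, h1]; simp
  obtain ⟨B, hB⟩ : ∃ B : ℝ, ∀ s, |u s| < B := by
    refine ⟨‖u‖ + 1, fun s => ?_⟩
    have := u.norm_coe_le_norm s
    rw [Real.norm_eq_abs] at this; linarith
  have hF1 : F B = 1 := by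
    have : {s : unitInterval | u s ≤ B} = univ := by
      ext s; simp only [mem_ofPred_eq, mem_univ, iff_true]; exact (abs_lt.1 (hB s)).2.le
    simp only [hF, this]; simp
  have hF0 : F (-B) = 0 := by
    have : {s : unitInterval | u s ≤ -B} = ∅ := by
      ext s; simp only [mem_ofPred_eq, mem_empty_iff_false, iff_false, not_le]
      exact (abs_lt.1 (hB s)).1
    simp only [hF, this]; simp
  have hBB : -B ≤ B := by have := (abs_nonneg (u 0)).trans_lt (hB 0); linarith
  obtain ⟨w, -, hw⟩ : (y : ℝ) ∈ F '' Icc (-B) B :=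
    intermediate_value_Icc hBB hFc.continuousOn (by rw [hF0, hF1]; exact ⟨y.2.1, y.2.2⟩)
  set S : Set ℝ := {z | F z ≤ y} with hS
  have hSc : IsClosed S := isClosed_le hFc continuous_const
  have hSb : BddAbove S := ⟨B, fun z hz => by
    by_contra h
    have := hFm (not_le.1 h).le
    have hz' : F z ≤ y := hz
    linarith⟩
  have hwS : w ∈ S := hw.le
  have hz := hSc.csSup_mem ⟨w, hwS⟩ hSb
  set z := sSup S
  have hzy : F z = y := le_antisymm hz (hw ▸ hFm (le_csSup hSb hwS))
  have : {s : unitInterval | F (u s) ≤ y} = {s | u s ≤ z} := by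
    ext s
    exact ⟨fun h => le_csSup hSb h, fun h => (hFm h).trans hz⟩
  rw [this, ← hzy, hF, ofReal_measureReal]

lemma vol_f_le (f : CLam) (y : ℝ) (hy0 : 0 ≤ y) (hy1 : y ≤ 1) :
    (volume : Measure unitInterval).real {s | (f.1 s : ℝ) ≤ y} = y := by
  have h := f.2.measure_preimage (measurableSet_Iic (a := (⟨y, hy0, hy1⟩ : unitInterval))).nullMeasurableSet
  rw [unitInterval.volume_Iic] at h
  have e : {s | (f.1 s : ℝ) ≤ y} = f.1 ⁻¹' Iic (⟨y, hy0, hy1⟩ : unitInterval) := by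
    ext s; rfl
  rw [measureReal_def, e, h, ENNReal.toReal_ofReal hy0]

lemma pit_close (f : CLam) (u : C(unitInterval, ℝ))
    (hu : ∀ y, (volume : Measure unitInterval) {s | u s = y} = 0) (ε : ℝ)
    (h : ∀ s, |u s - f.1 s| ≤ ε) (x : unitInterval) :
    |(pitMap u hu x : ℝ) - f.1 x| ≤ 2 * ε := by
  have hv : (pitMap u hu x : ℝ) = (volume : Measure unitInterval).real {s | u s ≤ u x} := rfl
  have hε : 0 ≤ ε := (abs_nonneg _).trans (h 0)
  have p0 := (pitMap u hu x).2.1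
  have p1 := (pitMap u hu x).2.2
  have f0 := (f.1 x).2.1
  have f1 := (f.1 x).2.2
  have hx := abs_le.1 (h x)
  rw [abs_le]
  constructor
  · by_cases hc : 0 ≤ (f.1 x : ℝ) - 2 * ε
    · have h1 := vol_f_le f _ hc (by linarith)
      have h2 : (volume : Measure unitInterval).real {s | (f.1 s : ℝ) ≤ f.1 x - 2 * ε}
          ≤ (volume : Measure unitInterval).real {s | u s ≤ u x} := by
        refine measureReal_mono fun s hs => ?_
        have := abs_le.1 (h s)
        simp only [mem_ofPred_eq] at hs ⊢
        linarith
      linarith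
    · linarith
  · by_cases hc : (f.1 x : ℝ) + 2 * ε ≤ 1
    · have h1 := vol_f_le f _ (by linarith) hc
      have h2 : (volume : Measure unitInterval).real {s | u s ≤ u x}
          ≤ (volume : Measure unitInterval).real {s | (f.1 s : ℝ) ≤ f.1 x + 2 * ε} := by
        refine measureReal_mono fun s hs => ?_
        have := abs_le.1 (h s)
        simp only [mem_ofPred_eq] at hs ⊢
        linarith
      linarith
    · linarith

lemma count_real (a r N o : ℝ) (hr : 0 < r) (hN : 0 < N) (hNr : 8 ≤ r * N) :
    ENNReal.ofReal (r / 96) ≤ volume {s : ℝ | s ∈ Icc a (a + r) ∧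
      ∃ i : ℤ, 2 * (i : ℝ) + o + 1 / 4 < N * s ∧ N * s < 2 * (i : ℝ) + o + 1 / 3} := by
  set i0 : ℤ := ⌈(a * N - o) / 2⌉ with hi0
  have hi1 : (a * N - o) / 2 ≤ i0 := Int.le_ceil _
  have hi2 : (i0 : ℝ) < (a * N - o) / 2 + 1 := Int.ceil_lt_add_one _
  set L : ℕ := ⌊r * N / 4⌋₊ with hL
  have hL1 : (L : ℝ) ≤ r * N / 4 := Nat.floor_le (by positivity)
  have hL2 : r * N / 4 < L + 1 := Nat.lt_floor_add_one _
  set A : ℕ → Set ℝ := fun j =>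
    Ioo ((2 * ((i0 : ℝ) + j) + o + 1 / 4) / N) ((2 * ((i0 : ℝ) + j) + o + 1 / 3) / N) with hA
  have hmem : ∀ j s, s ∈ A j ↔ 2 * ((i0 : ℝ) + j) + o + 1 / 4 < N * s ∧
      N * s < 2 * ((i0 : ℝ) + j) + o + 1 / 3 := by
    intro j s
    simp only [hA, mem_Ioo, div_lt_iff₀ hN, lt_div_iff₀ hN, mul_comm s N]
  have hsub : (⋃ j ∈ Finset.range L, A j) ⊆ {s : ℝ | s ∈ Icc a (a + r) ∧
      ∃ i : ℤ, 2 * (i : ℝ) + o + 1 / 4 < N * s ∧ N * s < 2 * (i : ℝ) + o + 1 / 3} := by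
    intro s hs
    simp only [mem_iUnion, Finset.mem_range] at hs
    obtain ⟨j, hj, hs⟩ := hs
    rw [hmem] at hs
    have hj' : (j : ℝ) + 1 ≤ L := by exact_mod_cast hj
    have hj0 : (0 : ℝ) ≤ j := Nat.cast_nonneg j
    refine ⟨⟨?_, ?_⟩, i0 + j, by push_cast; exact hs.1, by push_cast; exact hs.2⟩
    · refine le_of_mul_le_mul_left ?_ hN
      linarith
    · refine le_of_mul_le_mul_left ?_ hN
      nlinarith
  refine le_trans ?_ (measure_mono hsub)
  rw [measure_biUnion_finset]
  · have : ∀ j ∈ Finset.range L, volume (A j) = ENNReal.ofReal (1 / (12 * N)) := by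
      intro j _
      simp only [hA, Real.volume_Ioo]
      congr 1
      field_simp
      ring
    rw [Finset.sum_congr rfl this, Finset.sum_const, Finset.card_range, nsmul_eq_mul,
      ← ENNReal.ofReal_natCast, ← ENNReal.ofReal_mul (Nat.cast_nonneg _)]
    apply ENNReal.ofReal_le_ofReal
    rw [mul_one_div, div_le_div_iff₀ (by norm_num) (by positivity)]
    nlinarith
  · intro j _ k _ hjk
    refine Set.disjoint_left.2 fun s hs hs' => hjk ?_
    rw [hmem] at hs hs'
    have h1 : (j : ℝ) < k + 1 := by linarith
    have h2 : (k : ℝ) < j + 1 := by linarith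
    have h1' : j < k + 1 := by exact_mod_cast h1
    have h2' : k < j + 1 := by exact_mod_cast h2
    omega
  · intro j _
    exact measurableSet_Ioo

lemma count_I (x : unitInterval) (r N o : ℝ) (hr : 0 < r) (hr2 : r ≤ 1 / 2) (hN : 0 < N)
    (hNr : 8 ≤ r * N) (T : Set unitInterval)
    (hT : ∀ s : unitInterval, |(s : ℝ) - x| ≤ r → ∀ i : ℤ,
      2 * (i : ℝ) + o + 1 / 4 < N * s → N * s < 2 * (i : ℝ) + o + 1 / 3 → s ∈ T) :
    r / 96 ≤ (volume : Measure unitInterval).real T := by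
  have x0 := x.2.1
  have x1 := x.2.2
  obtain ⟨a, ha0, ha1, hax, hax'⟩ : ∃ a : ℝ, 0 ≤ a ∧ a + r ≤ 1 ∧ x - r ≤ a ∧ a ≤ x := by
    by_cases h : (x : ℝ) ≤ 1 / 2
    · exact ⟨x, x0, by linarith, by linarith, le_rfl⟩
    · exact ⟨x - r, by linarith, by linarith, le_rfl, by linarith⟩
  have h := count_real a r N o hr hN hNr
  rw [measureReal_def, ← ENNReal.ofReal_le_iff_le_toReal (measure_ne_top _ _),
    unitInterval.volume_apply]
  refine h.trans (measure_mono ?_)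
  rintro s ⟨⟨h1, h2⟩, i, h3, h4⟩
  refine ⟨⟨s, by linarith, by linarith⟩, hT _ ?_ i h3 h4, rfl⟩
  rw [abs_le]
  constructor <;> simp only <;> linarith

lemma level_null (q : Polynomial ℝ) (ε N : ℝ)
    (hnc : ∀ y : ℝ, ∃ x : ℝ, q.eval x + ε * Real.cos (N * x * Real.pi) ≠ y) (y : ℝ) :
    (volume : Measure unitInterval)
      {s | q.eval (s : ℝ) + ε * Real.cos (N * s * Real.pi) = y} = 0 := by
  set g : ℝ → ℝ := fun x => q.eval x + ε * Real.cos (N * x * Real.pi) - y with hg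
  have han : AnalyticOnNhd ℝ g univ := by
    intro x _
    have h1 : AnalyticAt ℝ (fun x : ℝ => q.eval x) x := by
      simpa using (analyticAt_id (𝕜 := ℝ) (z := x)).aeval_polynomial q
    have h2 : AnalyticAt ℝ (fun x : ℝ => Real.cos (N * x * Real.pi)) x := by
      refine Real.analyticAt_cos.fun_comp ?_
      exact (analyticAt_const.mul analyticAt_id).mul analyticAt_const
    exact (h1.add (analyticAt_const.mul h2)).sub analyticAt_const
  obtain ⟨x, hx⟩ := hnc y
  have hc := han.preimage_zero_mem_codiscrete (x := x) (by simpa [hg, sub_eq_zero] using hx)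
  have hae : (g ⁻¹' {0})ᶜ ∈ ae (volume.restrict (univ : Set ℝ)) :=
    ae_restrict_le_codiscreteWithin MeasurableSet.univ hc
  rw [Measure.restrict_univ, mem_ae_iff, compl_compl] at hae
  rw [unitInterval.volume_apply]
  refine measure_mono_null ?_ hae
  rintro _ ⟨s, hs, rfl⟩
  have hs' : q.eval (s : ℝ) + ε * Real.cos (N * s * Real.pi) = y := hs
  simp [hg, hs']

lemma cos_win (v : ℝ) (i : ℤ) (h1 : 2 * (i : ℝ) + 1 / 4 < v) (h2 : v < 2 * (i : ℝ) + 1 / 3) :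
    1 / 2 ≤ Real.cos (v * Real.pi) ∧ Real.cos (v * Real.pi) ≤ 3 / 4 := by
  have hpi := Real.pi_pos
  have e : Real.cos (v * Real.pi) = Real.cos ((v - 2 * i) * Real.pi) := by
    rw [← Real.cos_sub_int_mul_two_pi _ i]
    congr 1; ring
  rw [e]
  constructor
  · rw [← Real.cos_pi_div_three]
    apply Real.cos_le_cos_of_nonneg_of_le_pi <;> nlinarith
  · have h : Real.cos ((v - 2 * i) * Real.pi) ≤ Real.cos (Real.pi / 4) := by
      apply Real.cos_le_cos_of_nonneg_of_le_pi <;> nlinarith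
    rw [Real.cos_pi_div_four] at h
    have : √2 ≤ 3 / 2 := by
      rw [Real.sqrt_le_left (by norm_num)]; norm_num
    linarith

lemma cos_win' (v : ℝ) (i : ℤ) (h1 : 2 * (i : ℝ) + 1 + 1 / 4 < v)
    (h2 : v < 2 * (i : ℝ) + 1 + 1 / 3) :
    Real.cos (v * Real.pi) ≤ -(1 / 2) ∧ -(3 / 4) ≤ Real.cos (v * Real.pi) := by
  have h := cos_win (v - 1) i (by linarith) (by linarith)
  have e : Real.cos ((v - 1) * Real.pi) = - Real.cos (v * Real.pi) := by
    rw [← Real.cos_sub_pi]; congr 1; ring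
  rw [e] at h
  constructor <;> linarith [h.1, h.2]

lemma key (Q : ℝ → ℝ) (ε r : ℝ) (M : ℕ) (hε : 0 < ε) (hr : 0 < r) (hr2 : r ≤ 1 / 2)
    (hQ : ∀ a b : unitInterval, |(a : ℝ) - b| ≤ r → |Q a - Q b| ≤ ε / 16)
    (N : ℝ) (hN : N = 2 * M + 1) (hNr : 8 ≤ r * N) (u : unitInterval → ℝ)
    (hum : Measurable u)
    (hu : ∀ s : unitInterval, u s = Q s + ε * Real.cos (N * s * Real.pi)) (x : unitInterval) :
    (∃ t : unitInterval, (t : ℝ) < x ∧ (x : ℝ) - t ≤ 2 / N ∧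
      r / 96 ≤ (volume : Measure unitInterval).real {s | u s ≤ u t}
        - (volume : Measure unitInterval).real {s | u s ≤ u x}) ∨
    (∃ t : unitInterval, (x : ℝ) < t ∧ (t : ℝ) - x ≤ 2 / N ∧
      r / 96 ≤ (volume : Measure unitInterval).real {s | u s ≤ u x}
        - (volume : Measure unitInterval).real {s | u s ≤ u t}) := by
  have hM : (0 : ℝ) ≤ M := Nat.cast_nonneg M
  have hN0 : 0 < N := by linarith
  have x0 := x.2.1
  have x1 := x.2.2
  have hdr : 2 / N ≤ r := by rw [div_le_iff₀ hN0]; linarith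
  have gap : ∀ (a b : unitInterval) (T : Set unitInterval), r / 96 ≤ (volume : Measure unitInterval).real T →
      (∀ s ∈ T, u a < u s ∧ u s ≤ u b) →
      r / 96 ≤ (volume : Measure unitInterval).real {s | u s ≤ u b}
        - (volume : Measure unitInterval).real {s | u s ≤ u a} := by
    intro a b T hT hTs
    have hab : u a ≤ u b := by
      by_contra hcon
      have : T = ∅ := by
        ext s; simp only [mem_empty_iff_false, iff_false]
        intro hs; have := hTs s hs; linarith [this.1, this.2]
      rw [this] at hT
      simp at hT
      linarith
    have hma : (volume : Measure unitInterval).real T +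
        (volume : Measure unitInterval).real {s | u s ≤ u a}
        ≤ (volume : Measure unitInterval).real {s | u s ≤ u b} := by
      rw [← measureReal_union]
      · refine measureReal_mono ?_
        rintro s (hs | hs)
        · exact (hTs s hs).2
        · exact le_trans hs hab
      · exact Set.disjoint_left.2 fun s hs hs' => absurd (hTs s hs).1 (not_lt.2 hs')
      · exact measurableSet_le hum measurable_const
    linarith
  rcases le_total (Real.cos (N * x * Real.pi)) 0 with hc | hc
  · left
    set j : ℤ := ⌊N * x / 2⌋ with hj
    have hj1 : (j : ℝ) ≤ N * x / 2 := Int.floor_le _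
    have hj2 : N * x / 2 < j + 1 := Int.lt_floor_add_one _
    have hj0 : (0 : ℝ) ≤ j := by
      have : 0 ≤ j := Int.floor_nonneg.2 (by positivity)
      exact_mod_cast this
    have ht1 : 2 * (j : ℝ) / N ≤ x := by rw [div_le_iff₀ hN0]; linarith
    have ht2 : (x : ℝ) - 2 * (j : ℝ) / N ≤ 2 / N := by
      rw [sub_le_iff_le_add, ← add_div, le_div_iff₀ hN0]; linarith
    obtain ⟨t, ht⟩ : ∃ t : unitInterval, (t : ℝ) = 2 * (j : ℝ) / N :=
      ⟨⟨2 * (j : ℝ) / N, by positivity, by linarith⟩, rfl⟩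
    rw [← ht] at ht1 ht2
    have hct : Real.cos (N * t * Real.pi) = 1 := by
      rw [ht, ← Real.cos_int_mul_two_pi j]; congr 1; field_simp
    have hne : (t : ℝ) ≠ x := by
      intro h; rw [h] at hct; linarith
    refine ⟨t, lt_of_le_of_ne ht1 hne, ht2, ?_⟩
    refine gap x t {s | |(s : ℝ) - x| ≤ r ∧ ∃ i : ℤ, 2 * (i : ℝ) + 1 / 4 < N * s ∧
      N * s < 2 * (i : ℝ) + 1 / 3} ?_ ?_
    · refine count_I x r N 0 hr hr2 hN0 hNr _ fun s hs i h1 h2 => ⟨hs, i, ?_, ?_⟩ <;> linarith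
    · rintro s ⟨hs, i, h1, h2⟩
      have hw := cos_win _ i h1 h2
      have q1 := abs_le.1 (hQ s x hs)
      have q2 := abs_le.1 (hQ t x (by rw [abs_le]; constructor <;> linarith))
      rw [hu, hu, hu, hct]
      constructor <;> nlinarith [hw.1, hw.2]
  · right
    set j : ℤ := ⌈(N * x - 1) / 2⌉ with hj
    have hj1 : (N * x - 1) / 2 ≤ j := Int.le_ceil _
    have hj2 : (j : ℝ) < (N * x - 1) / 2 + 1 := Int.ceil_lt_add_one _
    have hj0 : (j : ℝ) ≤ M := by
      have : j ≤ (M : ℤ) := Int.ceil_le.2 (by push_cast; nlinarith)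
      exact_mod_cast this
    have hx0 : 0 ≤ N * x := by positivity
    have ht1 : (x : ℝ) ≤ (2 * (j : ℝ) + 1) / N := by rw [le_div_iff₀ hN0]; linarith
    have ht2 : (2 * (j : ℝ) + 1) / N - x ≤ 2 / N := by
      rw [sub_le_iff_le_add, div_le_iff₀ hN0, add_mul, div_mul_cancel₀ _ hN0.ne']; linarith
    have ht3 : (2 * (j : ℝ) + 1) / N ≤ 1 := by rw [div_le_one hN0]; linarith
    obtain ⟨t, ht⟩ : ∃ t : unitInterval, (t : ℝ) = (2 * (j : ℝ) + 1) / N :=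
      ⟨⟨(2 * (j : ℝ) + 1) / N, by linarith, ht3⟩, rfl⟩
    rw [← ht] at ht1 ht2
    have hct : Real.cos (N * t * Real.pi) = -1 := by
      rw [ht, ← Real.cos_int_mul_two_pi_add_pi j]; congr 1; field_simp; try ring
    have hne : (x : ℝ) ≠ t := by
      intro h; rw [← h] at hct; linarith
    refine ⟨t, lt_of_le_of_ne ht1 hne, ht2, ?_⟩
    refine gap t x {s | |(s : ℝ) - x| ≤ r ∧ ∃ i : ℤ, 2 * (i : ℝ) + 1 + 1 / 4 < N * s ∧
      N * s < 2 * (i : ℝ) + 1 + 1 / 3} ?_ ?_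
    · exact count_I x r N 1 hr hr2 hN0 hNr _ fun s hs i h1 h2 => ⟨hs, i, h1, h2⟩
    · rintro s ⟨hs, i, h1, h2⟩
      have hw := cos_win' _ i h1 h2
      have q1 := abs_le.1 (hQ s x hs)
      have q2 := abs_le.1 (hQ t x (by rw [abs_le]; constructor <;> linarith))
      rw [hu, hu, hu, hct]
      constructor <;> nlinarith [hw.1, hw.2]

lemma main_approx (f : CLam) (ε₀ : ℝ) (hε₀ : 0 < ε₀) (n : ℕ) (hn : 1 ≤ n) :
    ∃ g : CLam, dist g f < ε₀ ∧ ∃ c : ℝ, 0 < c ∧ ∃ d : ℝ, d < 1 / n ∧ 2 * (n * d) < c ∧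
      ∀ x : unitInterval,
        (∃ t : unitInterval, (t : ℝ) < x ∧ (x : ℝ) - t ≤ d ∧ c ≤ (g.1 t : ℝ) - g.1 x) ∨
        (∃ t : unitInterval, (x : ℝ) < t ∧ (t : ℝ) - x ≤ d ∧ c ≤ (g.1 x : ℝ) - g.1 t) := by
  have hn' : (1 : ℝ) ≤ n := by exact_mod_cast hn
  set ε := ε₀ / 8 with hε
  have hε0 : 0 < ε := by positivity
  let f' : C(unitInterval, ℝ) := ⟨fun x => (f.1 x : ℝ), by fun_prop⟩
  obtain ⟨q, hq⟩ := exists_polynomial_near_continuousMap 0 1 f' ε hε0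
  have hqf : ∀ s : unitInterval, |q.eval (s : ℝ) - f.1 s| ≤ ε := by
    intro s
    have h := (ContinuousMap.norm_coe_le_norm (q.toContinuousMapOn (Icc 0 1) - f') s).trans hq.le
    simpa [f', Real.norm_eq_abs] using h
  have huc : UniformContinuous (fun s : unitInterval => q.eval (s : ℝ)) :=
    CompactSpace.uniformContinuous_of_continuous (by fun_prop)
  obtain ⟨r₀, hr₀, hQ₀⟩ := Metric.uniformContinuous_iff.1 huc (ε / 16) (by positivity)
  set r := min (r₀ / 2) (1 / 2) with hr
  have hr0 : 0 < r := by positivity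
  have hr2 : r ≤ 1 / 2 := min_le_right _ _
  have hr1 : r < r₀ := (min_le_left _ _).trans_lt (by linarith)
  have hQ : ∀ a b : unitInterval, |(a : ℝ) - b| ≤ r →
      |q.eval (a : ℝ) - q.eval (b : ℝ)| ≤ ε / 16 := by
    intro a b hab
    have := hQ₀ (a := a) (b := b) (by rw [Subtype.dist_eq, Real.dist_eq]; linarith)
    rw [Real.dist_eq] at this
    exact this.le
  obtain ⟨M, hM⟩ := exists_nat_gt (8 * n * 96 / r)
  set N : ℝ := 2 * M + 1 with hN
  have hM0 : (0 : ℝ) ≤ M := Nat.cast_nonneg M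
  have hN0 : 0 < N := by linarith
  have hrM : 8 * n * 96 < M * r := (div_lt_iff₀ hr0).1 hM
  have hrN : 8 * n * 96 < r * N := by nlinarith
  have hNr : 8 ≤ r * N := by nlinarith
  let u : C(unitInterval, ℝ) :=
    ⟨fun s => q.eval (s : ℝ) + ε * Real.cos (N * s * Real.pi), by fun_prop⟩
  have hu : ∀ s, u s = q.eval (s : ℝ) + ε * Real.cos (N * s * Real.pi) := fun s => rfl
  have hnull : ∀ y, (volume : Measure unitInterval) {s | u s = y} = 0 := by
    refine level_null q ε N ?_
    intro y
    by_contra! hcon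
    have h0 := hcon 0
    have h1 := hcon (1 / N)
    have hNle : 1 / N ≤ r := by rw [div_le_iff₀ hN0]; linarith
    have hNpos : 0 < 1 / N := by positivity
    have hq' := abs_le.1 (hQ 0 ⟨1 / N, hNpos.le, by linarith⟩ (by
      simp only [Set.Icc.coe_zero, zero_sub, abs_neg]
      rw [abs_of_pos hNpos]; exact hNle))
    rw [mul_one_div_cancel hN0.ne', one_mul, Real.cos_pi] at h1
    simp only [mul_zero, zero_mul, Real.cos_zero] at h0
    simp only [Set.Icc.coe_zero] at hq'
    linarith [hq'.1, hq'.2]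
  have hclose : ∀ s, |u s - f.1 s| ≤ 2 * ε := by
    intro s
    have h1 := abs_le.1 (hqf s)
    have h2 := Real.neg_one_le_cos (N * s * Real.pi)
    have h3 := Real.cos_le_one (N * s * Real.pi)
    rw [hu, abs_le]
    constructor <;> nlinarith
  refine ⟨⟨pitMap u hnull, pit_mp u hnull⟩, ?_, r / 96, by positivity, 2 / N, ?_, ?_, ?_⟩
  · rw [Subtype.dist_eq, ContinuousMap.dist_lt_iff hε₀]
    intro x
    rw [Subtype.dist_eq, Real.dist_eq]
    have := pit_close f u hnull (2 * ε) hclose x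
    refine this.trans_lt ?_
    linarith
  · rw [div_lt_div_iff₀ hN0 (by linarith)]
    nlinarith
  · have : 2 * ((n : ℝ) * (2 / N)) = 4 * n / N := by ring
    rw [this, div_lt_div_iff₀ hN0 (by norm_num)]
    nlinarith
  · intro x
    exact key (fun x => q.eval x) ε r M hε0 hr0 hr2 hQ N hN hNr u u.continuous.measurable hu x

/-- For every `n ≥ 1`, the set `A_n` of all `f ∈ C_λ` for which there exist
`γ ∈ [−n, n]` and `x ∈ [0,1]` with `f(t) − γt ≤ f(x) − γx` for all
`t ∈ [0,1] ∩ (x − 1/n, x)` and `f(t) − γt ≥ f(x) − γx` for all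
`t ∈ [0,1] ∩ (x, x + 1/n)`, is nowhere dense in `C_λ` (uniform metric). -/
theorem stmt11 (n : ℕ) (hn : 1 ≤ n) :
    IsNowhereDense {f : CLam |
      ∃ γ ∈ Set.Icc (-(n : ℝ)) (n : ℝ), ∃ x : unitInterval,
        (∀ t : unitInterval, (x : ℝ) - 1 / (n : ℝ) < (t : ℝ) → (t : ℝ) < (x : ℝ) →
          (f.1 t : ℝ) - γ * (t : ℝ) ≤ (f.1 x : ℝ) - γ * (x : ℝ)) ∧
        (∀ t : unitInterval, (x : ℝ) < (t : ℝ) → (t : ℝ) < (x : ℝ) + 1 / (n : ℝ) →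
          (f.1 x : ℝ) - γ * (x : ℝ) ≤ (f.1 t : ℝ) - γ * (t : ℝ))} := by
  rw [IsNowhereDense, Set.eq_empty_iff_forall_notMem]
  intro f hf
  rw [mem_interior_iff_mem_nhds, Metric.mem_nhds_iff] at hf
  obtain ⟨ε, hε, hball⟩ := hf
  obtain ⟨g, hgf, c, hc, d, hd, hdc, hg⟩ := main_approx f ε hε n hn
  have hgc := hball (Metric.mem_ball.2 hgf)
  rw [Metric.mem_closure_iff] at hgc
  obtain ⟨h, ⟨γ, hγ, x, hl, hr⟩, hgh⟩ := hgc (c / 4) (by positivity)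
  have hn' : (0 : ℝ) ≤ n := Nat.cast_nonneg n
  have hdist : ∀ s : unitInterval, |(g.1 s : ℝ) - h.1 s| < c / 4 := by
    intro s
    have h1 : dist (g.1 s) (h.1 s) ≤ dist g.1 h.1 := ContinuousMap.dist_apply_le_dist s
    rw [Subtype.dist_eq (g.1 s), Real.dist_eq] at h1
    exact h1.trans_lt hgh
  have hx := abs_lt.1 (hdist x)
  rcases hg x with ⟨t, ht, htd, htc⟩ | ⟨t, ht, htd, htc⟩
  · have h1 := hl t (by linarith) ht
    have h2 := abs_lt.1 (hdist t)
    have h3 : -(n : ℝ) * (x - t) ≤ γ * (x - t) :=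
      mul_le_mul_of_nonneg_right hγ.1 (by linarith)
    have h4 : (n : ℝ) * (x - t) ≤ n * d := mul_le_mul_of_nonneg_left htd hn'
    nlinarith
  · have h1 := hr t ht (by linarith)
    have h2 := abs_lt.1 (hdist t)
    have h3 : -(n : ℝ) * (t - x) ≤ γ * (t - x) :=
      mul_le_mul_of_nonneg_right hγ.1 (by linarith)
    have h4 : (n : ℝ) * (t - x) ≤ n * d := mul_le_mul_of_nonneg_left htd hn'
    nlinarith
end
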